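/- Let μ ∈ M¹₊(Ω) with reduced measure μ*, and let E ⊂ Ω be a Borel set. Then the reduced measure of the restriction μ⌞E (defined by (μ⌞E)(A) = μ(E ∩ A) for Borel A ⊂ Ω) equals the restriction of μ* to E: (μ⌞E)* = μ*⌞E. -/

import Mathlib

open MeasureTheory Set Filter Topology
open scoped ENNReal NNReal

noncomputable section

/-- Euclidean space `ℝ^N`. -/
abbrev Euc (N : ℕ) : Type := EuclideanSpace ℝ (Fin N)

/-- `ρ(x) = dist(x, ∂Ω)`, realized as the distance from `x` to the complement of `Ω`. -/
def rho {N : ℕ} (Ω : Set (Euc N)) (x : Euc N) : ℝ := Metric.infDist x Ωᶜ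

/-- The Laplacian (in the space variable) of `f : ℝ^N → ℝ`. -/
def lap {N : ℕ} (f : Euc N → ℝ) (x : Euc N) : ℝ :=
  ∑ i : Fin N, fderiv ℝ (fun y => fderiv ℝ f y (EuclideanSpace.single i 1)) x
    (EuclideanSpace.single i 1)

/-- The parabolic cylinder `Q_T = Ω × (0,T)`. -/
def QT {N : ℕ} (Ω : Set (Euc N)) (T : ℝ) : Set (Euc N × ℝ) := Ω ×ˢ Ioo 0 T

/-- `∂_t ζ + Δ ζ` for a function `ζ(x,t)` (curried). -/
def heatAdj {N : ℕ} (ζ : Euc N → ℝ → ℝ) (p : Euc N × ℝ) : ℝ :=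
  deriv (ζ p.1) p.2 + lap (fun y => ζ y p.2) p.1

/-- `C^{2,1}` regularity: `ζ`, `∂_t ζ`, `∇_x ζ` and `D²_x ζ` exist and are continuous. -/
def C21 {N : ℕ} (ζ : Euc N → ℝ → ℝ) : Prop :=
  Continuous (fun p : Euc N × ℝ => ζ p.1 p.2) ∧
  (∀ (x : Euc N) (t : ℝ), DifferentiableAt ℝ (ζ x) t) ∧
  Continuous (fun p : Euc N × ℝ => deriv (ζ p.1) p.2) ∧
  (∀ (t : ℝ) (x : Euc N), DifferentiableAt ℝ (fun y => ζ y t) x) ∧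
  Continuous (fun p : Euc N × ℝ => fderiv ℝ (fun y => ζ y p.2) p.1) ∧
  (∀ (t : ℝ) (x : Euc N), DifferentiableAt ℝ (fun y => fderiv ℝ (fun z => ζ z t) y) x) ∧
  Continuous (fun p : Euc N × ℝ => fderiv ℝ (fun y => fderiv ℝ (fun z => ζ z p.2) y) p.1)

/-- Membership in `C^{2,1}_{ℓ,0}(Q̄_T)` : `C^{2,1}` regularity together with
vanishing on `∂Ω × [0,T] ∪ Ω̄ × {T}`. -/
def TestZero {N : ℕ} (Ω : Set (Euc N)) (T : ℝ) (ζ : Euc N → ℝ → ℝ) : Prop :=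
  C21 ζ ∧ (∀ x ∈ frontier Ω, ∀ t ∈ Icc (0:ℝ) T, ζ x t = 0) ∧
  (∀ x ∈ closure Ω, ζ x T = 0)

/-- `g : ℝ → ℝ` continuous, nondecreasing and vanishing on `(-∞,0]`. -/
def GoodG (g : ℝ → ℝ) : Prop := Continuous g ∧ Monotone g ∧ ∀ r : ℝ, r ≤ 0 → g r = 0

/-- `μ ∈ M¹₊(Ω)` : a positive Radon measure on `Ω` with `∫_Ω ρ dμ < ∞`. -/
def MemM1 {N : ℕ} (Ω : Set (Euc N)) (μ : Measure (Euc N)) : Prop :=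
  μ Ωᶜ = 0 ∧ (∀ K : Set (Euc N), K ⊆ Ω → IsCompact K → μ K < ⊤) ∧
  (∫⁻ x, ENNReal.ofReal (rho Ω x) ∂μ) < ⊤

/-- A positive Radon measure on the (open) set `U`. -/
def RadonOn {N : ℕ} (U : Set (Euc N)) (ν : Measure (Euc N)) : Prop :=
  ν Uᶜ = 0 ∧ ∀ K : Set (Euc N), K ⊆ U → IsCompact K → ν K < ⊤

/-- Weak solution of `(P_μ)` : `∂_t u - Δu + g(u) = 0` in `Q_T`, `u = 0` on
`∂Ω × (0,T)`, `u(·,0) = μ`. -/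
def WeakSol {N : ℕ} (Ω : Set (Euc N)) (T : ℝ) (g : ℝ → ℝ) (μ : Measure (Euc N))
    (u : Euc N × ℝ → ℝ) : Prop :=
  IntegrableOn u (QT Ω T) ∧
  IntegrableOn (fun p => g (u p) * rho Ω p.1) (QT Ω T) ∧
  ∀ ζ : Euc N → ℝ → ℝ, TestZero Ω T ζ →
    (∫ p in QT Ω T,
      (-(u p) * deriv (ζ p.1) p.2 - u p * lap (fun y => ζ y p.2) p.1 + ζ p.1 p.2 * g (u p)))
      = ∫ x, ζ x 0 ∂μ

/-- Weak subsolution of `(P_μ)`. -/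
def WeakSubSol {N : ℕ} (Ω : Set (Euc N)) (T : ℝ) (g : ℝ → ℝ) (μ : Measure (Euc N))
    (u : Euc N × ℝ → ℝ) : Prop :=
  IntegrableOn u (QT Ω T) ∧
  IntegrableOn (fun p => g (u p) * rho Ω p.1) (QT Ω T) ∧
  ∀ ζ : Euc N → ℝ → ℝ, TestZero Ω T ζ → (∀ x t, 0 ≤ ζ x t) →
    (∫ p in QT Ω T,
      (-(u p) * deriv (ζ p.1) p.2 - u p * lap (fun y => ζ y p.2) p.1 + ζ p.1 p.2 * g (u p)))
      ≤ ∫ x, ζ x 0 ∂μ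

/-- `μ` is a good measure relative to `g` : `(P_μ)` admits a weak solution. -/
def GoodMeasure {N : ℕ} (Ω : Set (Euc N)) (T : ℝ) (g : ℝ → ℝ) (μ : Measure (Euc N)) : Prop :=
  ∃ u, WeakSol Ω T g μ u

/-- Essential limit of `F(t)` as `t → 0⁺` equals `L`. -/
def EssLimInit (F : ℝ → ℝ) (L : ℝ) : Prop :=
  Tendsto F ((𝓝[>] (0:ℝ)) ⊓ (ae (volume : Measure ℝ))) (𝓝 L)

/-- Essential limit of `F(t)` as `t → 0⁺` is `+∞`. -/
def EssLimInitTop (F : ℝ → ℝ) : Prop :=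
  Tendsto F ((𝓝[>] (0:ℝ)) ⊓ (ae (volume : Measure ℝ))) atTop

/-- `ν` is the initial trace of `u` on `U ⊆ Ω` : for every `φ ∈ C_c(U)`,
`ess lim_{t→0} ∫_Ω u(·,t) φ dx = ∫ φ dν`. -/
def InitTraceOn {N : ℕ} (Ω U : Set (Euc N)) (u : Euc N × ℝ → ℝ) (ν : Measure (Euc N)) : Prop :=
  ∀ φ : Euc N → ℝ, Continuous φ → HasCompactSupport φ → tsupport φ ⊆ U →
    EssLimInit (fun t => ∫ x in Ω, u (x, t) * φ x) (∫ x, φ x ∂ν)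

/-- `μstar` is the reduced measure of `μ` : the largest good measure `≤ μ`. -/
def IsReducedMeasure {N : ℕ} (Ω : Set (Euc N)) (T : ℝ) (g : ℝ → ℝ)
    (μ μstar : Measure (Euc N)) : Prop :=
  MemM1 Ω μstar ∧ μstar ≤ μ ∧ GoodMeasure Ω T g μstar ∧
  ∀ ν : Measure (Euc N), MemM1 Ω ν → GoodMeasure Ω T g ν → ν ≤ μ → ν ≤ μstar

/-- The `N`-dimensional Hausdorff measure on `ℝ^N`. -/
def hausN {N : ℕ} : Measure (Euc N) := MeasureTheory.Measure.hausdorffMeasure (N : ℝ)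

section
open scoped ContDiff
abbrev PP (N : ℕ) : Type := Euc N × ℝ

def tv (N : ℕ) : PP N := (0, 1)
def ev {N : ℕ} (i : Fin N) : PP N := (EuclideanSpace.single i 1, 0)

structure HT {N : ℕ} (φ : PP N → ℝ) where
  dt : PP N → ℝ
  d1 : Fin N → PP N → ℝ
  d2 : Fin N → PP N → ℝ
  c0 : Continuous φ
  ct : Continuous dt
  c1 : ∀ i, Continuous (d1 i)
  c2 : ∀ i, Continuous (d2 i)
  ht : ∀ p, HasLineDerivAt ℝ φ (dt p) p (tv N)
  h1 : ∀ i p, HasLineDerivAt ℝ φ (d1 i p) p (ev i)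
  h2 : ∀ i p, HasLineDerivAt ℝ (d1 i) (d2 i p) p (ev i)

namespace HT
variable {N : ℕ} {φ ψ : PP N → ℝ}

def lapl (h : HT φ) (p : PP N) : ℝ := ∑ i, h.d2 i p
def heat (h : HT φ) (p : PP N) : ℝ := h.dt p + h.lapl p

lemma lapl_cont (h : HT φ) : Continuous h.lapl := by
  unfold lapl
  exact continuous_finsetSum _ (fun i _ => h.c2 i)
lemma heat_cont (h : HT φ) : Continuous h.heat := h.ct.add h.lapl_cont

lemma _root_.HasLineDerivAt.mul' {f g : PP N → ℝ} {a b : ℝ} {p v : PP N}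
    (hf : HasLineDerivAt ℝ f a p v) (hg : HasLineDerivAt ℝ g b p v) :
    HasLineDerivAt ℝ (fun q => f q * g q) (a * g p + f p * b) p v := by
  have := HasDerivAt.mul (hf : HasDerivAt _ _ _) (hg : HasDerivAt _ _ _)
  simp only [zero_smul, add_zero] at this
  exact this

lemma _root_.HasLineDerivAt.add' {f g : PP N → ℝ} {a b : ℝ} {p v : PP N}
    (hf : HasLineDerivAt ℝ f a p v) (hg : HasLineDerivAt ℝ g b p v) :
    HasLineDerivAt ℝ (fun q => f q + g q) (a + b) p v := by
  exact HasDerivAt.add (hf : HasDerivAt _ _ _) (hg : HasDerivAt _ _ _)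

lemma _root_.HasLineDerivAt.compR {f : PP N → ℝ} {a : ℝ} {p v : PP N} {j : ℝ → ℝ} {j' : ℝ}
    (hf : HasLineDerivAt ℝ f a p v) (hj : HasDerivAt j j' (f p)) :
    HasLineDerivAt ℝ (fun q => j (f q)) (j' * a) p v := by
  have : HasDerivAt j j' (f (p + (0:ℝ) • v)) := by simpa using hj
  exact HasDerivAt.comp (h₂ := j) (0:ℝ) this (hf : HasDerivAt _ _ _)

def mul (h : HT φ) (k : HT ψ) : HT (fun p => φ p * ψ p) where
  dt p := h.dt p * ψ p + φ p * k.dt p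
  d1 i p := h.d1 i p * ψ p + φ p * k.d1 i p
  d2 i p := (h.d2 i p * ψ p + h.d1 i p * k.d1 i p) + (h.d1 i p * k.d1 i p + φ p * k.d2 i p)
  c0 := h.c0.mul k.c0
  ct := (h.ct.mul k.c0).add (h.c0.mul k.ct)
  c1 i := ((h.c1 i).mul k.c0).add (h.c0.mul (k.c1 i))
  c2 i := (((h.c2 i).mul k.c0).add ((h.c1 i).mul (k.c1 i))).add
    (((h.c1 i).mul (k.c1 i)).add (h.c0.mul (k.c2 i)))
  ht p := (h.ht p).mul' (k.ht p)
  h1 i p := (h.h1 i p).mul' (k.h1 i p)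
  h2 i p := ((h.h2 i p).mul' (k.h1 i p)).add' ((h.h1 i p).mul' (k.h2 i p))

def compR (h : HT φ) (j j' j'' : ℝ → ℝ) (hj : ∀ s, HasDerivAt j (j' s) s)
    (hj' : ∀ s, HasDerivAt j' (j'' s) s) (hc : Continuous j'') : HT (fun p => j (φ p)) where
  dt p := j' (φ p) * h.dt p
  d1 i p := j' (φ p) * h.d1 i p
  d2 i p := (j'' (φ p) * h.d1 i p) * h.d1 i p + j' (φ p) * h.d2 i p
  c0 := (continuous_iff_continuousAt.2 fun s => (hj s).continuousAt).comp h.c0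
  ct := ((continuous_iff_continuousAt.2 fun s => (hj' s).continuousAt).comp h.c0).mul h.ct
  c1 i := ((continuous_iff_continuousAt.2 fun s => (hj' s).continuousAt).comp h.c0).mul (h.c1 i)
  c2 i := (((hc.comp h.c0).mul (h.c1 i)).mul (h.c1 i)).add
    (((continuous_iff_continuousAt.2 fun s => (hj' s).continuousAt).comp h.c0).mul (h.c2 i))
  ht p := (h.ht p).compR (hj _)
  h1 i p := (h.h1 i p).compR (hj _)
  h2 i p := ((h.h1 i p).compR (hj' _)).mul' (h.h2 i p)

def ofSmooth (hφ : ContDiff ℝ ∞ φ) : HT φ where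
  dt p := fderiv ℝ φ p (tv N)
  d1 i p := fderiv ℝ φ p (ev i)
  d2 i p := fderiv ℝ (fun q => fderiv ℝ φ q (ev i)) p (ev i)
  c0 := hφ.continuous
  ct := (hφ.continuous_fderiv (by simp)).clm_apply continuous_const
  c1 i := (hφ.continuous_fderiv (by simp)).clm_apply continuous_const
  c2 i := by
    have : ContDiff ℝ ∞ (fun q => fderiv ℝ φ q (ev i)) :=
      (hφ.fderiv_right (m := ∞) (by simp)).clm_apply contDiff_const
    exact (this.continuous_fderiv (by simp)).clm_apply continuous_const
  ht p := ((hφ.differentiable (by simp)) p).hasFDerivAt.hasLineDerivAt _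
  h1 i p := ((hφ.differentiable (by simp)) p).hasFDerivAt.hasLineDerivAt _
  h2 i p := by
    have : ContDiff ℝ ∞ (fun q => fderiv ℝ φ q (ev i)) :=
      (hφ.fderiv_right (m := ∞) (by simp)).clm_apply contDiff_const
    exact ((this.differentiable (by simp)) p).hasFDerivAt.hasLineDerivAt _

lemma line_t {f : PP N → ℝ} {a : ℝ} {x : Euc N} {t : ℝ} :
    HasLineDerivAt ℝ f a (x, t) (tv N) ↔ HasDerivAt (fun s => f (x, s)) a t := by
  unfold HasLineDerivAt tv
  have : (fun s : ℝ => f ((x, t) + s • ((0:Euc N), (1:ℝ)))) = fun s => (fun s => f (x, s)) (t + s) := by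
    funext s; simp
  rw [this]
  constructor
  · intro h
    have h2 : HasDerivAt (fun s => (fun s => f (x, s)) (t + s)) a (t - t) := by simpa using h
    have := HasDerivAt.comp_sub_const t t h2
    simpa using this
  · intro h
    have h2 : HasDerivAt (fun s => f (x, s)) a (t + 0) := by simpa using h
    exact HasDerivAt.comp_const_add t 0 h2

lemma line_x {f : PP N → ℝ} {L : Euc N →L[ℝ] ℝ} {x : Euc N} {t : ℝ} {i : Fin N}
    (h : HasFDerivAt (fun y => f (y, t)) L x) :
    HasLineDerivAt ℝ f (L (EuclideanSpace.single i 1)) (x, t) (ev i) := by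
  have := h.hasLineDerivAt (EuclideanSpace.single i 1)
  unfold HasLineDerivAt ev at *
  simpa using this

def ofC21 {ζ : Euc N → ℝ → ℝ} (h : C21 ζ) : HT (fun p : PP N => ζ p.1 p.2) where
  dt p := deriv (ζ p.1) p.2
  d1 i p := fderiv ℝ (fun y => ζ y p.2) p.1 (EuclideanSpace.single i 1)
  d2 i p := fderiv ℝ (fun y => fderiv ℝ (fun z => ζ z p.2) y (EuclideanSpace.single i 1)) p.1
    (EuclideanSpace.single i 1)
  c0 := h.1
  ct := h.2.2.1
  c1 i := h.2.2.2.2.1.clm_apply continuous_const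
  c2 i := by
    have e : (fun p : PP N => fderiv ℝ (fun y => fderiv ℝ (fun z => ζ z p.2) y
        (EuclideanSpace.single i 1)) p.1 (EuclideanSpace.single i 1)) =
        fun p : PP N => fderiv ℝ (fun y => fderiv ℝ (fun z => ζ z p.2) y) p.1
          (EuclideanSpace.single i 1) (EuclideanSpace.single i 1) := by
      funext p
      have := (h.2.2.2.2.2.1 p.2 p.1).hasFDerivAt.clm_apply
        (hasFDerivAt_const (EuclideanSpace.single i (1:ℝ)) p.1)
      rw [this.fderiv]; simp
    rw [e]
    exact (h.2.2.2.2.2.2.clm_apply continuous_const).clm_apply continuous_const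
  ht p := line_t.2 (h.2.1 p.1 p.2).hasDerivAt
  h1 i p := line_x (h.2.2.2.1 p.2 p.1).hasFDerivAt
  h2 i p := by
    have hd : DifferentiableAt ℝ (fun y => fderiv ℝ (fun z => ζ z p.2) y
        (EuclideanSpace.single i 1)) p.1 :=
      (h.2.2.2.2.2.1 p.2 p.1).clm_apply (differentiableAt_const _)
    exact line_x (f := fun q : PP N => fderiv ℝ (fun y => ζ y q.2) q.1 (EuclideanSpace.single i 1))
      hd.hasFDerivAt

lemma ofC21_heat {ζ : Euc N → ℝ → ℝ} (h : C21 ζ) (p : PP N) :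
    (ofC21 h).heat p = deriv (ζ p.1) p.2 + lap (fun y => ζ y p.2) p.1 := rfl

lemma heat_unique (h k : HT φ) : h.heat = k.heat := by
  have e1 : h.d1 = k.d1 := by
    funext i p; exact (h.h1 i p).unique (k.h1 i p)
  funext p
  unfold heat lapl
  rw [(h.ht p).unique (k.ht p)]
  congr 1
  refine Finset.sum_congr rfl fun i _ => ?_
  have := k.h2 i p
  rw [← e1] at this
  exact (h.h2 i p).unique this

def ofSpace {χ : Euc N → ℝ} (hχ : ContDiff ℝ ∞ χ) : HT (fun p : PP N => χ p.1) where
  dt p := 0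
  d1 i p := fderiv ℝ χ p.1 (EuclideanSpace.single i 1)
  d2 i p := fderiv ℝ (fun q => fderiv ℝ χ q (EuclideanSpace.single i 1)) p.1
    (EuclideanSpace.single i 1)
  c0 := hχ.continuous.comp continuous_fst
  ct := continuous_const
  c1 i := ((hχ.continuous_fderiv (by simp)).comp continuous_fst).clm_apply continuous_const
  c2 i := by
    have : ContDiff ℝ ∞ (fun q => fderiv ℝ χ q (EuclideanSpace.single i 1)) :=
      (hχ.fderiv_right (m := ∞) (by simp)).clm_apply contDiff_const
    exact ((this.continuous_fderiv (by simp)).comp continuous_fst).clm_apply continuous_const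
  ht p := line_t.2 (hasDerivAt_const p.2 (χ p.1))
  h1 i p := line_x ((hχ.differentiable (by simp)) p.1).hasFDerivAt
  h2 i p := by
    have : ContDiff ℝ ∞ (fun q => fderiv ℝ χ q (EuclideanSpace.single i 1)) :=
      (hχ.fderiv_right (m := ∞) (by simp)).clm_apply contDiff_const
    exact line_x (f := fun q : PP N => fderiv ℝ χ q.1 (EuclideanSpace.single i 1))
      ((this.differentiable (by simp)) p.1).hasFDerivAt

def ofTime {θ : ℝ → ℝ} (hθ : ContDiff ℝ ∞ θ) : HT (fun p : PP N => θ p.2) where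
  dt p := deriv θ p.2
  d1 i p := 0
  d2 i p := 0
  c0 := hθ.continuous.comp continuous_snd
  ct := (hθ.continuous_deriv (by simp)).comp continuous_snd
  c1 i := continuous_const
  c2 i := continuous_const
  ht p := line_t.2 ((hθ.differentiable (by simp)) p.2).hasDerivAt
  h1 i p := by
    have : HasFDerivAt (fun y : Euc N => (fun p : PP N => θ p.2) (y, p.2)) (0 : Euc N →L[ℝ] ℝ) p.1 :=
      hasFDerivAt_const (θ p.2) _
    simpa using line_x (f := fun p : PP N => θ p.2) (i := i) this
  h2 i p := by
    have : HasFDerivAt (fun y : Euc N => (fun p : PP N => (0:ℝ)) (y, p.2)) (0 : Euc N →L[ℝ] ℝ) p.1 :=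
      hasFDerivAt_const (0:ℝ) _
    simpa using line_x (f := fun p : PP N => (0:ℝ)) (i := i) this

lemma smooth_C21 (hφ : ContDiff ℝ ∞ φ) : C21 (fun x t => φ (x, t)) := by
  have hA : ∀ p : PP N, HasFDerivAt (fun y => φ (y, p.2))
      ((fderiv ℝ φ p).comp (ContinuousLinearMap.inl ℝ (Euc N) ℝ)) p.1 := fun p => by
    have h1 : HasFDerivAt φ (fderiv ℝ φ p) (p.1, p.2) :=
      ((hφ.differentiable (by simp)) p).hasFDerivAt
    exact HasFDerivAt.comp (f := fun y : Euc N => (y, p.2)) p.1 h1 (hasFDerivAt_prodMk_left p.1 p.2)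
  have hfd : ∀ t y, fderiv ℝ (fun z => φ (z, t)) y =
      (fderiv ℝ φ (y, t)).comp (ContinuousLinearMap.inl ℝ (Euc N) ℝ) := fun t y =>
    (hA (y, t)).fderiv
  set Φ : PP N → (Euc N →L[ℝ] ℝ) := fun p =>
    (fderiv ℝ φ p).comp (ContinuousLinearMap.inl ℝ (Euc N) ℝ) with hΦ
  have hΦs : ContDiff ℝ ∞ Φ := (hφ.fderiv_right (m := ∞) (by simp)).clm_comp contDiff_const
  have hB : ∀ p : PP N, HasFDerivAt (fun y => Φ (y, p.2))
      ((fderiv ℝ Φ p).comp (ContinuousLinearMap.inl ℝ (Euc N) ℝ)) p.1 := fun p => by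
    have h1 : HasFDerivAt Φ (fderiv ℝ Φ p) (p.1, p.2) :=
      ((hΦs.differentiable (by simp)) p).hasFDerivAt
    exact HasFDerivAt.comp (f := fun y : Euc N => (y, p.2)) p.1 h1 (hasFDerivAt_prodMk_left p.1 p.2)
  have ht : ∀ x t, HasDerivAt (fun s => φ (x, s)) (fderiv ℝ φ (x, t) (tv N)) t := fun x t =>
    line_t.1 ((ofSmooth hφ).ht (x, t))
  have e2 : ∀ t : ℝ, (fun y => fderiv ℝ (fun z => φ (z, t)) y) = fun y => Φ (y, t) := fun t => by
    funext y; exact hfd t y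
  refine ⟨hφ.continuous, fun x t => (ht x t).differentiableAt, ?_, fun t x =>
    (hA (x, t)).differentiableAt, ?_, ?_, ?_⟩
  · have : (fun p : Euc N × ℝ => deriv (fun t => φ (p.1, t)) p.2) =
        fun p => fderiv ℝ φ p (tv N) := by
      funext p; exact (ht p.1 p.2).deriv
    rw [this]; exact (ofSmooth hφ).ct
  · have : (fun p : Euc N × ℝ => fderiv ℝ (fun y => φ (y, p.2)) p.1) = Φ := by
      funext p; exact hfd p.2 p.1
    rw [this]; exact hΦs.continuous
  · intro t x
    rw [e2]; exact (hB (x, t)).differentiableAt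
  · have : (fun p : Euc N × ℝ => fderiv ℝ (fun y => fderiv ℝ (fun z => φ (z, p.2)) y) p.1)
        = fun p => (fderiv ℝ Φ p).comp (ContinuousLinearMap.inl ℝ (Euc N) ℝ) := by
      funext p; rw [e2]; exact (hB p).fderiv
    rw [this]
    exact (hΦs.continuous_fderiv (by simp)).clm_comp continuous_const

/-- supports -/
lemma line_zero {f : PP N → ℝ} {a : ℝ} {p v : PP N} (h : HasLineDerivAt ℝ f a p v)
    (hp : p ∉ tsupport f) : a = 0 := by
  have e : f =ᶠ[𝓝 p] fun _ => 0 := notMem_tsupport_iff_eventuallyEq.1 hp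
  have h2 : HasLineDerivAt ℝ (fun _ : PP N => (0:ℝ)) a p v := h.congr_of_eventuallyEq e.symm
  have h3 : HasLineDerivAt ℝ (fun _ : PP N => (0:ℝ)) 0 p v := hasDerivAt_const _ _
  exact h2.unique h3

lemma dt_zero (h : HT φ) {p : PP N} (hp : p ∉ tsupport φ) : h.dt p = 0 := line_zero (h.ht p) hp
lemma d1_zero (h : HT φ) {p : PP N} (hp : p ∉ tsupport φ) (i) : h.d1 i p = 0 :=
  line_zero (h.h1 i p) hp
lemma d1_tsupp (h : HT φ) (i) : tsupport (h.d1 i) ⊆ tsupport φ :=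
  closure_minimal (fun p hp => by by_contra hc; exact hp (h.d1_zero hc i)) (isClosed_tsupport _)
lemma d2_zero (h : HT φ) {p : PP N} (hp : p ∉ tsupport φ) (i) : h.d2 i p = 0 :=
  line_zero (h.h2 i p) (fun hc => hp (h.d1_tsupp i hc))
lemma lapl_zero (h : HT φ) {p : PP N} (hp : p ∉ tsupport φ) : h.lapl p = 0 :=
  Finset.sum_eq_zero fun i _ => h.d2_zero hp i
lemma heat_zero (h : HT φ) {p : PP N} (hp : p ∉ tsupport φ) : h.heat p = 0 := by
  simp [heat, h.dt_zero hp, h.lapl_zero hp]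

lemma cs_of {f : PP N → ℝ} (hc : HasCompactSupport φ) (hf : ∀ p ∉ tsupport φ, f p = 0) :
    HasCompactSupport f := HasCompactSupport.intro hc hf
lemma heat_cs (h : HT φ) (hc : HasCompactSupport φ) : HasCompactSupport h.heat :=
  cs_of hc fun _ hp => h.heat_zero hp

instance instHaarPP : (volume : Measure (PP N)).IsAddHaarMeasure :=
  inferInstanceAs (((volume : Measure (Euc N)).prod (volume : Measure ℝ)).IsAddHaarMeasure)

/-- integration by parts -/
lemma ibp1 {f g f' g' : PP N → ℝ} {v : PP N} (cf : Continuous f) (cg : Continuous g)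
    (cf' : Continuous f') (cg' : Continuous g') (hc : HasCompactSupport g)
    (hc' : HasCompactSupport g')
    (hf : ∀ p, HasLineDerivAt ℝ f (f' p) p v) (hg : ∀ p, HasLineDerivAt ℝ g (g' p) p v) :
    ∫ p, f p * g' p = - ∫ p, f' p * g p := by
  refine integral_bilinear_hasLineDerivAt_right_eq_neg_left_of_integrable
    (B := ContinuousLinearMap.mul ℝ ℝ) (v := v) ?_ ?_ ?_ (fun p _ => hf p) (fun p _ => hg p)
  · exact (cf'.mul cg).integrable_of_hasCompactSupport hc.mul_left
  · exact (cf.mul cg').integrable_of_hasCompactSupport hc'.mul_left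
  · exact (cf.mul cg).integrable_of_hasCompactSupport hc.mul_left

lemma ibp (h : HT φ) (k : HT ψ) (hc : HasCompactSupport φ) :
    ∫ p, ψ p * h.heat p = ∫ p, φ p * (k.lapl p - k.dt p) := by
  have I1 : Integrable (fun p => ψ p * h.dt p) :=
    (k.c0.mul h.ct).integrable_of_hasCompactSupport (cs_of hc fun p hp => by
      simp [h.dt_zero hp])
  have I2 : ∀ i, Integrable (fun p => ψ p * h.d2 i p) := fun i =>
    (k.c0.mul (h.c2 i)).integrable_of_hasCompactSupport (cs_of hc fun p hp => by
      simp [h.d2_zero hp])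
  have J1 : Integrable (fun p => φ p * k.dt p) :=
    (h.c0.mul k.ct).integrable_of_hasCompactSupport hc.mul_right
  have J2 : ∀ i, Integrable (fun p => φ p * k.d2 i p) := fun i =>
    (h.c0.mul (k.c2 i)).integrable_of_hasCompactSupport hc.mul_right
  have E1 : ∫ p, ψ p * h.dt p = - ∫ p, φ p * k.dt p := by
    rw [ibp1 k.c0 h.c0 k.ct h.ct hc (cs_of hc fun p hp => h.dt_zero hp) k.ht h.ht]
    simp only [mul_comm]
  have hc1 : ∀ i, HasCompactSupport (h.d1 i) := fun i => cs_of hc fun p hp => h.d1_zero hp i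
  have E2 : ∀ i, ∫ p, ψ p * h.d2 i p = ∫ p, φ p * k.d2 i p := fun i => by
    rw [ibp1 k.c0 (h.c1 i) (k.c1 i) (h.c2 i) (hc1 i) (cs_of hc fun p hp => h.d2_zero hp i)
      (k.h1 i) (h.h2 i), ibp1 (k.c1 i) h.c0 (k.c2 i) (h.c1 i) hc (hc1 i) (k.h2 i) (h.h1 i), neg_neg]
    simp only [mul_comm]
  have L : ∫ p, ψ p * h.heat p = ∫ p, ψ p * h.dt p + ∑ i, ψ p * h.d2 i p := by
    congr 1; funext p; simp [heat, lapl, mul_add, Finset.mul_sum]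
  have R : ∫ p, φ p * (k.lapl p - k.dt p) = ∫ p, (∑ i, φ p * k.d2 i p) - φ p * k.dt p := by
    congr 1; funext p; simp [lapl, mul_sub, Finset.mul_sum]
  rw [L, R, integral_add I1 (integrable_finsetSum _ fun i _ => I2 i),
    integral_sub (integrable_finsetSum _ fun i _ => J2 i) J1,
    integral_finsetSum _ (fun i _ => I2 i), integral_finsetSum _ (fun i _ => J2 i), E1]
  simp only [E2]
  ring

end HT
end

section
open scoped ContDiff
variable {N : ℕ}

def gk (x : Euc N) (t : ℝ) : ℝ := (4 * Real.pi * t) ^ (-(N:ℝ)/2) * Real.exp (-(1/(4*t)) * ‖x‖^2)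

lemma gk_nonneg (x : Euc N) {t : ℝ} (ht : 0 ≤ t) : 0 ≤ gk x t := by
  unfold gk; positivity

lemma gk_integral {t : ℝ} (ht : 0 < t) : ∫ x : Euc N, gk x t = 1 := by
  unfold gk
  rw [integral_const_mul, GaussianFourier.integral_rexp_neg_mul_sq_norm (by positivity)]
  have : Real.pi / (1 / (4*t)) = 4 * Real.pi * t := by field_simp
  rw [this, ← Real.rpow_add (by positivity)]
  simp
  rw [neg_div, neg_add_cancel, Real.rpow_zero]

lemma gk_integrable {t : ℝ} (ht : 0 < t) : Integrable (fun x : Euc N => gk x t) := by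
  by_contra h
  have := gk_integral (N := N) ht
  rw [integral_undef h] at this
  norm_num at this

lemma gk_cont {t : ℝ} : Continuous (fun x : Euc N => gk x t) := by
  unfold gk; fun_prop

lemma gk_contOn : ContinuousOn (fun p : PP N => gk p.1 p.2) {p | 0 < p.2} := by
  unfold gk
  intro p hp
  have hp : 0 < p.2 := hp
  apply ContinuousAt.continuousWithinAt
  apply ContinuousAt.mul
  · apply ContinuousAt.rpow_const
    · fun_prop
    · left; positivity
  · apply Real.continuous_exp.continuousAt.comp
    apply ContinuousAt.mul
    · apply ContinuousAt.neg
      apply ContinuousAt.div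
      · fun_prop
      · fun_prop
      · positivity
    · fun_prop

lemma gk_meas : Measurable (fun p : PP N => gk p.1 p.2) := by
  unfold gk; fun_prop

lemma gk_dt (x : Euc N) {t : ℝ} (ht : 0 < t) :
    HasDerivAt (fun s => gk x s) ((‖x‖^2/(4*t^2) - N/(2*t)) * gk x t) t := by
  unfold gk
  have h1 : HasDerivAt (fun s : ℝ => 4 * Real.pi * s) (4 * Real.pi * 1) t :=
    (hasDerivAt_id t).const_mul _
  have h2 := h1.rpow_const (p := -(N:ℝ)/2) (Or.inl (by positivity))
  have h3 : HasDerivAt (fun s : ℝ => -(1/(4*s)) * ‖x‖^2) (1/(4*t^2) * ‖x‖^2) t := by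
    have : HasDerivAt (fun s : ℝ => -(1/4) * s⁻¹ * ‖x‖^2) (-(1/4) * (-(t^2)⁻¹) * ‖x‖^2) t :=
      ((hasDerivAt_inv ht.ne').const_mul _).mul_const _
    convert this using 1
    · funext s; rw [one_div, mul_inv]; ring
    · rw [one_div, mul_inv]; ring
  have := h2.mul h3.exp
  refine this.congr_deriv ?_
  rw [Real.rpow_sub_one (by positivity)]
  field_simp
  ring

lemma norm_add_single (x : Euc N) (i : Fin N) (s : ℝ) :
    ‖x + s • (EuclideanSpace.single i (1:ℝ) : Euc N)‖^2 = ‖x‖^2 + 2 * s * x i + s^2 := by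
  rw [norm_add_sq_real, inner_smul_right, EuclideanSpace.inner_single_right, norm_smul]
  simp
  ring

lemma gk_d1 (x : Euc N) (t : ℝ) (i : Fin N) :
    HasLineDerivAt ℝ (fun x : Euc N => gk x t) (-(x i)/(2*t) * gk x t) x
      (EuclideanSpace.single i 1) := by
  unfold HasLineDerivAt gk
  simp only [norm_add_single]
  have h3 : HasDerivAt (fun s : ℝ => -(1/(4*t)) * (‖x‖^2 + 2 * s * x i + s^2))
      (-(1/(4*t)) * (2 * x i)) 0 := by
    apply HasDerivAt.const_mul
    have a := (((hasDerivAt_id (0:ℝ)).const_mul 2).mul_const (x i)).const_add (‖x‖^2)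
    have b := hasDerivAt_pow 2 (0:ℝ)
    refine (a.add b).congr_deriv ?_
    simp
  refine (h3.exp.const_mul _).congr_deriv ?_
  rcases eq_or_ne t 0 with rfl | h
  · simp
  simp
  field_simp
  ring

lemma gk_d2 (x : Euc N) {t : ℝ} (ht : 0 < t) (i : Fin N) :
    HasLineDerivAt ℝ (fun x : Euc N => -(x i)/(2*t) * gk x t)
      (((x i)^2/(4*t^2) - 1/(2*t)) * gk x t) x (EuclideanSpace.single i 1) := by
  have h1 := gk_d1 x t i
  unfold HasLineDerivAt at *
  have h2 : HasDerivAt (fun s : ℝ => -((x + s • (EuclideanSpace.single i (1:ℝ) : Euc N)) i) / (2*t))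
      (-1/(2*t)) 0 := by
    simp
    have a := ((hasDerivAt_id (0:ℝ)).add_const (x i)).neg.div_const (2*t)
    refine HasDerivAt.congr_of_eventuallyEq (f := fun s : ℝ => (-(s + x i))/(2*t)) a ?_
    filter_upwards with s
    ring
  have := h2.mul h1
  simp only [zero_smul, add_zero] at this
  refine HasDerivAt.congr_deriv this ?_
  field_simp
  ring

lemma gk_sum (x : Euc N) {t : ℝ} (ht : 0 < t) :
    ∑ i, ((x i)^2/(4*t^2) - 1/(2*t)) * gk x t = (‖x‖^2/(4*t^2) - N/(2*t)) * gk x t := by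
  rw [← Finset.sum_mul, Finset.sum_sub_distrib, ← Finset.sum_div, EuclideanSpace.norm_sq_eq]
  simp
  left
  field_simp

lemma ibpx {f g f' g' : Euc N → ℝ} {v : Euc N} (cf : Continuous f) (cg : Continuous g)
    (cf' : Continuous f') (cg' : Continuous g') (hc : HasCompactSupport g)
    (hc' : HasCompactSupport g')
    (hf : ∀ p, HasLineDerivAt ℝ f (f' p) p v) (hg : ∀ p, HasLineDerivAt ℝ g (g' p) p v) :
    ∫ p, f p * g' p = - ∫ p, f' p * g p := by
  refine integral_bilinear_hasLineDerivAt_right_eq_neg_left_of_integrable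
    (B := ContinuousLinearMap.mul ℝ ℝ) (v := v) ?_ ?_ ?_ (fun p _ => hf p) (fun p _ => hg p)
  · exact (cf'.mul cg).integrable_of_hasCompactSupport hc.mul_left
  · exact (cf.mul cg').integrable_of_hasCompactSupport hc'.mul_left
  · exact (cf.mul cg).integrable_of_hasCompactSupport hc.mul_left

lemma slice_cs {f : PP N → ℝ} (hc : HasCompactSupport f) (t : ℝ) :
    HasCompactSupport (fun x => f (x, t)) := by
  refine HasCompactSupport.intro (hc.isCompact.image continuous_fst) fun x hx => ?_
  by_contra h
  exact hx ⟨(x, t), subset_tsupport _ h, rfl⟩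

lemma slice_line {f : PP N → ℝ} {a : ℝ} {x : Euc N} {t : ℝ} {i : Fin N}
    (h : HasLineDerivAt ℝ f a (x, t) (ev i)) :
    HasLineDerivAt ℝ (fun y => f (y, t)) a x (EuclideanSpace.single i 1) := by
  unfold HasLineDerivAt ev at *
  simpa using h

lemma gk_lap {φ : PP N → ℝ} (h : HT φ) (hc : HasCompactSupport φ) {t : ℝ} (ht : 0 < t) :
    ∫ x, gk x t * h.lapl (x, t) = ∫ x, (‖x‖^2/(4*t^2) - N/(2*t)) * gk x t * φ (x, t) := by
  have cs : Continuous (fun x : Euc N => (x, t)) := by fun_prop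
  have hc1 : ∀ i, HasCompactSupport (fun x => h.d1 i (x, t)) := fun i =>
    slice_cs (HT.cs_of hc fun p hp => h.d1_zero hp i) t
  have hc2 : ∀ i, HasCompactSupport (fun x => h.d2 i (x, t)) := fun i =>
    slice_cs (HT.cs_of hc fun p hp => h.d2_zero hp i) t
  have cg1 : ∀ i, Continuous (fun x : Euc N => -(x i)/(2*t) * gk x t) := fun i =>
    Continuous.mul (by fun_prop) gk_cont
  have cg2 : ∀ i, Continuous (fun x : Euc N => ((x i)^2/(4*t^2) - 1/(2*t)) * gk x t) := fun i =>
    Continuous.mul (by fun_prop) gk_cont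
  have E : ∀ i, ∫ x, gk x t * h.d2 i (x, t) =
      ∫ x, ((x i)^2/(4*t^2) - 1/(2*t)) * gk x t * φ (x, t) := fun i => by
    have a1 := ibpx gk_cont ((h.c1 i).comp cs) (cg1 i) ((h.c2 i).comp cs) (hc1 i) (hc2 i)
      (fun x => gk_d1 x t i) (fun x => slice_line (h.h2 i (x, t)))
    have a2 := ibpx (cg1 i) (h.c0.comp cs) (cg2 i) ((h.c1 i).comp cs) (slice_cs hc t) (hc1 i)
      (fun x => gk_d2 x ht i) (fun x => slice_line (h.h1 i (x, t)))
    rw [a2, neg_neg] at a1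
    exact a1
  have L : ∫ x, gk x t * h.lapl (x, t) = ∫ x, ∑ i, gk x t * h.d2 i (x, t) := by
    congr 1; funext x; simp [HT.lapl, Finset.mul_sum]
  rw [L, integral_finsetSum]
  · simp only [E]
    rw [← integral_finsetSum]
    · congr 1; funext x; rw [← Finset.sum_mul, gk_sum x ht]
    · intro i _
      exact ((cg2 i).mul (h.c0.comp cs)).integrable_of_hasCompactSupport (slice_cs hc t).mul_left
  · intro i _
    exact (gk_cont.mul ((h.c2 i).comp cs)).integrable_of_hasCompactSupport (hc2 i).mul_left

lemma gk_deriv {φ : PP N → ℝ} (h : HT φ) (hc : HasCompactSupport φ) {t : ℝ} (ht : 0 < t) :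
    HasDerivAt (fun s => ∫ x, gk x s * φ (x, s)) (∫ x, gk x t * h.heat (x, t)) t := by
  set K := Prod.fst '' tsupport φ with hK
  have hKc : IsCompact K := hc.isCompact.image continuous_fst
  have hKz : ∀ x ∉ K, ∀ s, (x, s) ∉ tsupport φ := fun x hx s hs => hx ⟨(x, s), hs, rfl⟩
  have cs : ∀ t : ℝ, Continuous (fun x : Euc N => (x, t)) := fun t => by fun_prop
  set F' : ℝ → Euc N → ℝ := fun s x =>
    (‖x‖^2/(4*s^2) - N/(2*s)) * gk x s * φ (x, s) + gk x s * h.dt (x, s) with hF'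
  have contF' : ContinuousOn (fun p : PP N => F' p.2 p.1) {p | 0 < p.2} := by
    apply ContinuousOn.add
    · apply ContinuousOn.mul _ h.c0.continuousOn
      apply ContinuousOn.mul _ gk_contOn
      intro p hp
      have hp : 0 < p.2 := hp
      apply ContinuousAt.continuousWithinAt
      apply ContinuousAt.sub
      · exact ContinuousAt.div (by fun_prop) (by fun_prop) (by positivity)
      · exact ContinuousAt.div (by fun_prop) (by fun_prop) (by positivity)
    · exact gk_contOn.mul h.ct.continuousOn
  obtain ⟨C, hC⟩ := (hKc.prod (isCompact_Icc (a := t/2) (b := 2*t))).exists_bound_of_continuousOn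
    (contF'.mono (fun p hp => by have := hp.2.1; simp; linarith))
  have main := hasDerivAt_integral_of_dominated_loc_of_deriv_le (μ := (volume : Measure (Euc N)))
    (F := fun s x => gk x s * φ (x, s)) (F' := F') (x₀ := t) (s := Ioo (t/2) (2*t))
    (bound := K.indicator fun _ => C) (Ioo_mem_nhds (by linarith) (by linarith)) ?_ ?_ ?_ ?_ ?_ ?_
  · refine main.2.congr_deriv ?_
    have e1 : ∫ x, F' t x = ∫ x, (‖x‖^2/(4*t^2) - N/(2*t)) * gk x t * φ (x, t) +
      gk x t * h.dt (x, t) := rfl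
    have i3 : Integrable (fun x => gk x t * h.dt (x, t)) :=
      (gk_cont.mul (h.ct.comp (cs t))).integrable_of_hasCompactSupport
        (slice_cs (HT.cs_of hc fun p hp => h.dt_zero hp) t).mul_left
    rw [e1, integral_add, ← gk_lap h hc ht, ← integral_add]
    · congr 1; funext x; simp [HT.heat]; ring
    · exact (gk_cont.mul (h.lapl_cont.comp (cs t))).integrable_of_hasCompactSupport
        (slice_cs (HT.cs_of hc fun p hp => h.lapl_zero hp) t).mul_left
    · exact i3
    · exact (Continuous.mul (Continuous.mul (by fun_prop) gk_cont)
        (h.c0.comp (cs t))).integrable_of_hasCompactSupport (slice_cs hc t).mul_left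
    · exact i3
  · exact Eventually.of_forall fun s => (gk_cont.mul (h.c0.comp (cs s))).aestronglyMeasurable
  · exact (gk_cont.mul (h.c0.comp (cs t))).integrable_of_hasCompactSupport (slice_cs hc t).mul_left
  · exact Continuous.aestronglyMeasurable (((Continuous.mul (by fun_prop) gk_cont).mul
      (h.c0.comp (cs t))).add (gk_cont.mul (h.ct.comp (cs t))))
  · refine Eventually.of_forall fun x s hs => ?_
    by_cases hx : x ∈ K
    · rw [indicator_of_mem hx]; exact hC (x, s) ⟨hx, hs.1.le, hs.2.le⟩
    · rw [indicator_of_notMem hx]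
      simp [F', image_eq_zero_of_notMem_tsupport (hKz x hx s), h.dt_zero (hKz x hx s)]
  · exact (integrable_indicator_iff hKc.measurableSet).2 (integrableOn_const hKc.measure_lt_top.ne)
  · refine Eventually.of_forall fun x s hs => ?_
    have hs0 : 0 < s := by have := hs.1; linarith
    exact (gk_dt x hs0).mul (HT.line_t.1 (h.ht (x, s)))

lemma gk_scale (z : Euc N) {t : ℝ} (ht : 0 < t) :
    gk (Real.sqrt t • z) t = (Real.sqrt t ^ N)⁻¹ * gk z 1 := by
  unfold gk
  rw [Real.mul_rpow (by positivity) ht.le, norm_smul, mul_pow, Real.norm_of_nonneg (Real.sqrt_nonneg _),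
    Real.sq_sqrt ht.le]
  have : t ^ (-(N:ℝ)/2) = (Real.sqrt t ^ N)⁻¹ := by
    rw [Real.sqrt_eq_rpow, ← Real.rpow_natCast, ← Real.rpow_mul ht.le, ← Real.rpow_neg ht.le]
    congr 1; ring
  rw [this]
  have e : -(1 / (4 * t)) * (t * ‖z‖ ^ 2) = -(1/(4*1)) * ‖z‖^2 := by field_simp
  rw [e, mul_one]; ring

lemma gk_tendsto {φ : PP N → ℝ} (cφ : Continuous φ) (hc : HasCompactSupport φ) :
    Tendsto (fun s => ∫ x, gk x s * φ (x, s)) (𝓝[>] 0) (𝓝 (φ 0)) := by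
  obtain ⟨C, hC⟩ := hc.exists_bound_of_continuous cφ
  have e : ∀ s : ℝ, 0 < s → ∫ x, gk x s * φ (x, s) =
      ∫ z : Euc N, gk z 1 * φ (Real.sqrt s • z, s) := fun s hs => by
    have hs' : 0 < Real.sqrt s ^ N := by positivity
    have := Measure.integral_comp_smul (volume : Measure (Euc N)) (fun x => gk x s * φ (x, s)) (Real.sqrt s)
    simp only [gk_scale _ hs, finrank_euclideanSpace, Fintype.card_fin, smul_eq_mul] at this
    rw [abs_of_pos (by positivity)] at this
    simp only [mul_assoc] at this
    rw [integral_const_mul] at this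
    exact (mul_left_cancel₀ (inv_ne_zero hs'.ne') this).symm
  have lim : Tendsto (fun s : ℝ => ∫ z : Euc N, gk z 1 * φ (Real.sqrt s • z, s)) (𝓝[>] 0)
      (𝓝 (∫ z : Euc N, gk z 1 * φ 0)) := by
    refine tendsto_integral_filter_of_dominated_convergence (fun z => gk z 1 * C) ?_ ?_ ?_ ?_
    · refine Eventually.of_forall fun s => Continuous.aestronglyMeasurable ?_
      exact gk_cont.mul (cφ.comp (by fun_prop))
    · refine Eventually.of_forall fun s => Eventually.of_forall fun z => ?_
      rw [norm_mul, Real.norm_of_nonneg (gk_nonneg _ zero_le_one)]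
      exact mul_le_mul_of_nonneg_left (hC _) (gk_nonneg _ zero_le_one)
    · exact (gk_integrable one_pos).mul_const _
    · refine Eventually.of_forall fun z => ?_
      have : Continuous (fun s : ℝ => gk z 1 * φ (Real.sqrt s • z, s)) := by
        apply Continuous.mul continuous_const
        exact cφ.comp (by fun_prop)
      have h := this.tendsto 0
      simp only [Real.sqrt_zero, zero_smul] at h
      exact h.mono_left nhdsWithin_le_nhds
  rw [integral_mul_const, gk_integral one_pos, one_mul] at lim
  refine lim.congr' ?_
  filter_upwards [self_mem_nhdsWithin] with s hs
  exact (e s hs).symm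
end

section
open scoped ContDiff
variable {N : ℕ}

def KL (L T : ℝ) (p : PP N) : ℝ :=
  if 0 < p.2 ∧ p.2 < T then Real.exp (-(L * p.2)) * gk p.1 p.2 else 0

lemma KL_nonneg (L T : ℝ) (p : PP N) : 0 ≤ KL L T p := by
  unfold KL; split_ifs with h
  · exact mul_nonneg (Real.exp_nonneg _) (gk_nonneg _ h.1.le)
  · exact le_rfl

lemma KL_meas (L T : ℝ) : Measurable (KL L T : PP N → ℝ) := by
  unfold KL
  refine Measurable.ite ?_ ?_ measurable_const
  · exact (measurableSet_lt measurable_const measurable_snd).inter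
      (measurableSet_lt measurable_snd measurable_const)
  · exact Measurable.mul (by fun_prop) gk_meas

def thL (L T : ℝ) : ℝ := ∫ t in Ioo 0 T, Real.exp (-(L * t))

lemma thL_nonneg (L T : ℝ) : 0 ≤ thL L T := integral_nonneg fun _ => Real.exp_nonneg _

lemma thL_lt {L T : ℝ} (hT : 0 < T) : L * thL L T < 1 := by
  have : L * thL L T = 1 - Real.exp (-(L*T)) := by
    unfold thL
    rw [← integral_const_mul, ← integral_Ioc_eq_integral_Ioo, ← intervalIntegral.integral_of_le hT.le]
    have := intervalIntegral.integral_eq_sub_of_hasDerivAt (a := 0) (b := T)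
      (f := fun t => - Real.exp (-(L*t))) (f' := fun t => L * Real.exp (-(L*t))) ?_ ?_
    · rw [this]; simp; ring
    · intro t _
      have := (((hasDerivAt_id t).const_mul L).neg.exp).neg
      refine this.congr_deriv ?_
      simp; ring
    · exact (by fun_prop : Continuous fun t => L * Real.exp (-(L*t))).intervalIntegrable _ _
  rw [this]
  linarith [Real.exp_pos (-(L*T))]

lemma KL_lint (L T : ℝ) : ∫⁻ p : PP N, ENNReal.ofReal (KL L T p) = ENNReal.ofReal (thL L T) := by
  have hm : Measurable fun p : PP N => ENNReal.ofReal (KL L T p) := (KL_meas L T).ennreal_ofReal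
  rw [Measure.volume_eq_prod, lintegral_prod_symm _ hm.aemeasurable]
  have e : ∀ t : ℝ, ∫⁻ x : Euc N, ENNReal.ofReal (KL L T (x, t)) =
      (Ioo 0 T).indicator (fun t => ENNReal.ofReal (Real.exp (-(L*t)))) t := fun t => by
    by_cases h : t ∈ Ioo 0 T
    · rw [indicator_of_mem h]
      have h' : 0 < t ∧ t < T := h
      simp only [KL, h', and_self, if_true]
      rw [← ofReal_integral_eq_lintegral_ofReal]
      · rw [integral_const_mul, gk_integral h'.1, mul_one]
      · exact (gk_integrable h'.1).const_mul _
      · exact Eventually.of_forall fun x => mul_nonneg (Real.exp_nonneg _) (gk_nonneg _ h'.1.le)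
    · rw [indicator_of_notMem h]
      have h' : ¬ (0 < t ∧ t < T) := h
      simp [KL, h']
  simp only [e]
  rw [lintegral_indicator measurableSet_Ioo, thL, ofReal_integral_eq_lintegral_ofReal]
  · exact (by fun_prop : Continuous fun t => Real.exp (-(L*t))).integrableOn_Icc.mono_set
      Ioo_subset_Icc_self
  · exact Eventually.of_forall fun t => Real.exp_nonneg _

lemma KL_int (L T : ℝ) : Integrable (KL L T : PP N → ℝ) := by
  refine ⟨(KL_meas L T).aestronglyMeasurable, ?_⟩
  rw [hasFiniteIntegral_iff_ofReal (Eventually.of_forall (KL_nonneg L T)), KL_lint]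
  exact ENNReal.ofReal_lt_top

lemma KL_core {φ : PP N → ℝ} (h : HT φ) (hc : HasCompactSupport φ) (L T : ℝ)
    (hs : ∀ p ∈ tsupport φ, p.2 < T) :
    ∫ p, KL L T p * (h.heat p - L * φ p) = - φ 0 := by
  have hzero : ∀ p : PP N, T ≤ p.2 → p ∉ tsupport φ := fun p hp hm => absurd (hs p hm) (not_lt.2 hp)
  have cH : Continuous (fun p => h.heat p - L * φ p) := h.heat_cont.sub (continuous_const.mul h.c0)
  have hcs : HasCompactSupport (fun p => h.heat p - L * φ p) := HT.cs_of hc fun p hp => by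
    simp [h.heat_zero hp, image_eq_zero_of_notMem_tsupport hp]
  obtain ⟨C, hC⟩ := hcs.exists_bound_of_continuous cH
  have hI : Integrable (fun p : PP N => KL L T p * (h.heat p - L * φ p)) :=
    (KL_int L T).mul_bdd (c := C) cH.aestronglyMeasurable (Eventually.of_forall hC)
  set G : ℝ → ℝ := fun t => if t ≤ 0 then φ 0 else Real.exp (-(L*t)) * ∫ x, gk x t * φ (x, t) with hG
  set G' : ℝ → ℝ := fun t => Real.exp (-(L*t)) * (∫ x, gk x t * (h.heat (x, t) - L * φ (x, t))) with hG'
  have inner : ∀ t ∈ Ioi (0:ℝ), ∫ x, KL L T (x, t) * (h.heat (x, t) - L * φ (x, t)) = G' t := by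
    intro t ht
    have ht : 0 < t := ht
    by_cases hT : t < T
    · simp only [KL, ht, hT, and_self, if_true, mul_assoc, integral_const_mul, hG']
    · have z : ∀ x : Euc N, (x, t) ∉ tsupport φ := fun x => hzero _ (not_lt.1 hT)
      simp [G', KL, hT, h.heat_zero (z _), image_eq_zero_of_notMem_tsupport (z _)]
  have inner0 : ∀ t : ℝ, t ≤ 0 → ∫ x, KL L T (x, t) * (h.heat (x, t) - L * φ (x, t)) = 0 := by
    intro t ht
    simp [KL, not_lt.2 ht]
  have hI' := hI
  rw [Measure.volume_eq_prod] at hI'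
  have hI2 := hI'.integral_prod_right
  have E1 : ∫ p, KL L T p * (h.heat p - L * φ p) = ∫ t in Ioi 0, G' t := by
    rw [Measure.volume_eq_prod, integral_prod_symm _ hI', ← setIntegral_eq_integral_of_forall_compl_eq_zero
      (s := Ioi 0) (fun t ht => inner0 t (not_lt.1 ht))]
    exact setIntegral_congr_fun measurableSet_Ioi inner
  have E2 : IntegrableOn G' (Ioi 0) :=
    (hI2.integrableOn (s := Ioi 0)).congr_fun inner measurableSet_Ioi
  have D : ∀ t ∈ Ioi (0:ℝ), HasDerivAt G (G' t) t := by
    intro t ht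
    have ht : 0 < t := ht
    have e : G =ᶠ[𝓝 t] fun t => Real.exp (-(L*t)) * ∫ x, gk x t * φ (x, t) := by
      filter_upwards [Ioi_mem_nhds ht] with s hs
      simp [hG, not_le.2 (mem_Ioi.1 hs)]
    refine HasDerivAt.congr_of_eventuallyEq ?_ e
    have a : HasDerivAt (fun t => Real.exp (-(L*t))) (-L * Real.exp (-(L*t))) t := by
      refine ((hasDerivAt_id t).const_mul L).neg.exp.congr_deriv ?_
      simp; ring
    refine (a.mul (gk_deriv h hc ht)).congr_deriv ?_
    have cs : Continuous (fun x : Euc N => (x, t)) := by fun_prop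
    have i1 : Integrable (fun x => gk x t * h.heat (x, t)) :=
      (gk_cont.mul (h.heat_cont.comp cs)).integrable_of_hasCompactSupport
        (slice_cs (h.heat_cs hc) t).mul_left
    have i2 : Integrable (fun x => gk x t * φ (x, t)) :=
      (gk_cont.mul (h.c0.comp cs)).integrable_of_hasCompactSupport
        (slice_cs hc t).mul_left
    have : ∫ x, gk x t * (h.heat (x, t) - L * φ (x, t)) =
        ∫ x, gk x t * h.heat (x, t) - L * (gk x t * φ (x, t)) := by
      congr 1; funext x; ring
    rw [hG']; simp only
    rw [this, integral_sub i1 (i2.const_mul _), integral_const_mul]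
    ring
  have lim : Tendsto G atTop (𝓝 0) := by
    refine tendsto_const_nhds.congr' ?_
    filter_upwards [eventually_gt_atTop 0, eventually_ge_atTop T] with t h0 h1
    have z : ∀ x : Euc N, (x, t) ∉ tsupport φ := fun x => hzero _ h1
    simp [hG, not_le.2 h0, image_eq_zero_of_notMem_tsupport (z _)]
  have c0 : ContinuousWithinAt G (Ici 0) 0 := by
    rw [← continuousWithinAt_Ioi_iff_Ici]
    unfold ContinuousWithinAt
    have : G 0 = φ 0 := by simp [hG]
    rw [this]
    have a : Tendsto (fun t : ℝ => Real.exp (-(L*t))) (𝓝[>] 0) (𝓝 1) := by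
      have := (by fun_prop : Continuous fun t : ℝ => Real.exp (-(L*t))).tendsto 0
      simp at this
      exact this.mono_left nhdsWithin_le_nhds
    have b := a.mul (gk_tendsto h.c0 hc)
    rw [one_mul] at b
    refine b.congr' ?_
    filter_upwards [self_mem_nhdsWithin] with t ht
    simp [hG, not_le.2 (mem_Ioi.1 ht)]
  rw [E1, integral_Ioi_of_hasDerivAt_of_tendsto c0 D E2 lim]
  simp [hG]

def HT.shift {φ : PP N → ℝ} (h : HT φ) (q : PP N) : HT (fun p => φ (p + q)) where
  dt p := h.dt (p + q)
  d1 i p := h.d1 i (p + q)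
  d2 i p := h.d2 i (p + q)
  c0 := h.c0.comp (by fun_prop)
  ct := h.ct.comp (by fun_prop)
  c1 i := (h.c1 i).comp (by fun_prop)
  c2 i := (h.c2 i).comp (by fun_prop)
  ht p := by have := h.ht (p + q); unfold HasLineDerivAt at *; simpa only [add_right_comm] using this
  h1 i p := by have := h.h1 i (p + q); unfold HasLineDerivAt at *; simpa only [add_right_comm] using this
  h2 i p := by have := h.h2 i (p + q); unfold HasLineDerivAt at *; simpa only [add_right_comm] using this

lemma KL_shift {φ : PP N → ℝ} (h : HT φ) (hc : HasCompactSupport φ) (L T : ℝ)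
    (hs : ∀ p ∈ tsupport φ, p.2 < T) (q : PP N) (hq : 0 ≤ q.2) :
    ∫ p, KL L T (p - q) * (h.heat p - L * φ p) = - φ q := by
  have hc' : HasCompactSupport (fun p => φ (p + q)) := hc.comp_homeomorph (Homeomorph.addRight q)
  have := KL_core (h.shift q) hc' L T (fun p hp => by
    have h1 : p + q ∈ tsupport φ :=
      tsupport_comp_subset_preimage (f := fun p : PP N => p + q) φ (by fun_prop) hp
    have h2 := hs _ h1
    simp at h2; linarith)
  rw [zero_add] at this
  rw [← this, ← integral_sub_right_eq_self (fun p => KL L T p * ((h.shift q).heat p - L * φ (p + q))) q]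
  congr 1; funext p
  simp [HT.shift, HT.heat, HT.lapl]

/-- the potential of a measure -/
def pot (L T : ℝ) (m : Measure (PP N)) (p : PP N) : ℝ≥0∞ := ∫⁻ q, ENNReal.ofReal (KL L T (p - q)) ∂m

lemma pot_meas2 (L T : ℝ) : Measurable fun z : PP N × PP N => ENNReal.ofReal (KL L T (z.1 - z.2)) :=
  ((KL_meas L T).comp (measurable_fst.sub measurable_snd)).ennreal_ofReal

lemma pot_meas (L T : ℝ) (m : Measure (PP N)) [SFinite m] : Measurable (pot L T m) :=
  (pot_meas2 L T).lintegral_prod_right'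

lemma pot_lint (L T : ℝ) (m : Measure (PP N)) [SFinite m] :
    ∫⁻ p, pot L T m p = ENNReal.ofReal (thL L T) * m univ := by
  unfold pot
  rw [lintegral_lintegral_swap (pot_meas2 L T).aemeasurable]
  have : ∀ q : PP N, ∫⁻ p, ENNReal.ofReal (KL L T (p - q)) = ENNReal.ofReal (thL L T) := fun q => by
    rw [lintegral_sub_right_eq_self (fun p => ENNReal.ofReal (KL L T p)) q, KL_lint]
  simp [this]

lemma pot_zero (L T : ℝ) (m : Measure (PP N)) (hm : m {q | q.2 < 0} = 0) (p : PP N) (hp : p.2 ≤ 0) :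
    pot L T m p = 0 := by
  unfold pot
  have mm : Measurable fun q : PP N => ENNReal.ofReal (KL L T (p - q)) :=
    ((KL_meas L T).comp (by fun_prop : Measurable fun q : PP N => p - q)).ennreal_ofReal
  rw [lintegral_eq_zero_iff mm]
  have : ∀ᵐ q ∂m, ¬ q.2 < 0 := by rw [ae_iff]; simpa using hm
  filter_upwards [this] with q hq
  have : ¬ (0 < p.2 - q.2) := by linarith
  simp only [KL, Prod.snd_sub, this, false_and, if_false, ENNReal.ofReal_zero, Pi.zero_apply]

lemma pot_weak {φ : PP N → ℝ} (h : HT φ) (hc : HasCompactSupport φ) (L T : ℝ)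
    (hs : ∀ p ∈ tsupport φ, p.2 < T) (m : Measure (PP N)) [IsFiniteMeasure m]
    (hm : m {q | q.2 < 0} = 0) :
    ∫ p, (pot L T m p).toReal * (h.heat p - L * φ p) = - ∫ q, φ q ∂m := by
  have cH : Continuous (fun p => h.heat p - L * φ p) := h.heat_cont.sub (continuous_const.mul h.c0)
  have hcs : HasCompactSupport (fun p => h.heat p - L * φ p) := HT.cs_of hc fun p hp => by
    simp [h.heat_zero hp, image_eq_zero_of_notMem_tsupport hp]
  obtain ⟨C, hC⟩ := hcs.exists_bound_of_continuous cH
  have hm' : ∀ᵐ q ∂m, 0 ≤ q.2 := by rw [ae_iff]; simpa using hm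
  have mK : Measurable fun z : PP N × PP N => KL L T (z.1 - z.2) :=
    (KL_meas L T).comp (measurable_fst.sub measurable_snd)
  have iK : Integrable (fun z : PP N × PP N => KL L T (z.1 - z.2)) (volume.prod m) := by
    refine ⟨mK.aestronglyMeasurable, ?_⟩
    rw [hasFiniteIntegral_iff_ofReal (Eventually.of_forall fun _ => KL_nonneg L T _),
      lintegral_prod _ mK.ennreal_ofReal.aemeasurable]
    have := pot_lint L T m
    unfold pot at this
    rw [this]
    exact ENNReal.mul_lt_top ENNReal.ofReal_lt_top (measure_lt_top _ _)
  have iF : Integrable (fun z : PP N × PP N => KL L T (z.1 - z.2) * (h.heat z.1 - L * φ z.1))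
      (volume.prod m) :=
    iK.mul_bdd (c := C) (cH.comp continuous_fst).aestronglyMeasurable
      (Eventually.of_forall fun z => hC z.1)
  have e : ∀ p : PP N, (pot L T m p).toReal = ∫ q, KL L T (p - q) ∂m := fun p => by
    rw [integral_eq_lintegral_of_nonneg_ae (Eventually.of_forall fun _ => KL_nonneg L T _)
      ((KL_meas L T).comp (by fun_prop)).aestronglyMeasurable]
    rfl
  have := integral_integral_swap (f := fun p q : PP N => KL L T (p - q) * (h.heat p - L * φ p)) iF
  simp only [integral_mul_const] at this
  simp only [e]
  rw [this, ← integral_neg]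
  refine integral_congr_ae ?_
  filter_upwards [hm'] with q hq
  exact KL_shift h hc L T hs q hq
end

section
open scoped ContDiff
variable {N : ℕ}

structure Sol (T : ℝ) (κ : Measure (Euc N)) (u f : PP N → ℝ) : Prop where
  meas : Measurable u
  nonneg : ∀ p, 0 ≤ u p
  int : Integrable u
  zero : ∀ p : PP N, ¬ (0 < p.2 ∧ p.2 < T) → u p = 0
  fint : Integrable f
  weak : ∀ (φ : PP N → ℝ) (h : HT φ), HasCompactSupport φ → (∀ p ∈ tsupport φ, p.2 < T) →
    -(∫ p, u p * h.heat p) + (∫ p, φ p * f p) = ∫ x, φ (x, 0) ∂κ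

instance sfin_wd (F : PP N → ℝ≥0∞) : SFinite ((volume : Measure (PP N)).withDensity F) := by
  infer_instance

lemma sfin_sum (m m' : Measure (PP N)) (h : SFinite m) (h' : SFinite m') : SFinite (m + m') :=
  inferInstance

lemma lift_meas : Measurable (fun x : Euc N => ((x, 0) : PP N)) := by fun_prop

def lft (κ : Measure (Euc N)) : Measure (PP N) := κ.map (fun x => (x, 0))

instance (κ : Measure (Euc N)) [IsFiniteMeasure κ] : IsFiniteMeasure (lft κ) := by
  unfold lft; infer_instance

lemma lft_univ (κ : Measure (Euc N)) : lft κ univ = κ univ := by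
  unfold lft; rw [Measure.map_apply lift_meas MeasurableSet.univ]; simp

lemma lft_neg (κ : Measure (Euc N)) : lft κ {q | q.2 < 0} = 0 := by
  unfold lft
  rw [Measure.map_apply lift_meas (measurableSet_lt measurable_snd measurable_const)]
  simp

lemma lft_int (κ : Measure (Euc N)) {φ : PP N → ℝ} (c : Continuous φ) :
    ∫ q, φ q ∂(lft κ) = ∫ x, φ (x, 0) ∂κ := by
  unfold lft
  rw [integral_map lift_meas.aemeasurable c.aestronglyMeasurable]

lemma HT.int_mul {φ : PP N → ℝ} (c : Continuous φ) (hc : HasCompactSupport φ) {u : PP N → ℝ}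
    (hu : Integrable u) : Integrable (fun p => u p * φ p) := by
  obtain ⟨C, hC⟩ := hc.exists_bound_of_continuous c
  exact hu.mul_bdd (c := C) c.aestronglyMeasurable (Eventually.of_forall hC)

lemma sol_of_fix {L T : ℝ} (κ : Measure (Euc N)) [IsFiniteMeasure κ]
    (U F : PP N → ℝ≥0∞) (f : PP N → ℝ) (hU : Measurable U) (hUi : ∫⁻ p, U p ≠ ⊤)
    (hF : Measurable F) (hFi : ∫⁻ p, F p ≠ ⊤) (hF0 : ∀ p : PP N, p.2 ≤ 0 → F p = 0)
    (hfix : ∀ p, U p = {p : PP N | p.2 < T}.indicator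
      (pot L T (lft κ + volume.withDensity F)) p)
    (hfi : Integrable f) (hfF : ∀ᵐ p, (F p).toReal = L * (U p).toReal - f p) :
    Sol T κ (fun p => (U p).toReal) f := by
  have : IsFiniteMeasure (volume.withDensity F) := isFiniteMeasure_withDensity hFi
  have hm : (lft κ + volume.withDensity F) {q | q.2 < 0} = 0 := by
    rw [Measure.add_apply, lft_neg, zero_add,
      withDensity_apply _ (measurableSet_lt measurable_snd measurable_const)]
    rw [setLIntegral_congr_fun (g := fun _ => 0)
      (measurableSet_lt measurable_snd measurable_const) (fun p hp => hF0 p (le_of_lt hp))]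
    simp
  have iu : Integrable fun p => (U p).toReal := integrable_toReal_of_lintegral_ne_top hU.aemeasurable hUi
  refine ⟨hU.ennreal_toReal, fun _ => ENNReal.toReal_nonneg, iu, ?_, hfi, ?_⟩
  · intro p hp
    rw [hfix]
    by_cases h : p ∈ {p : PP N | p.2 < T}
    · rw [indicator_of_mem h, pot_zero L T _ hm p (by
        by_contra h0; exact hp ⟨not_le.1 h0, h⟩)]
      simp
    · rw [indicator_of_notMem h]; simp
  · intro φ h hc hs
    have w := pot_weak h hc L T hs (lft κ + volume.withDensity F) hm
    have hz : ∀ p, (pot L T (lft κ + volume.withDensity F) p).toReal * (h.heat p - L * φ p) =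
        (U p).toReal * (h.heat p - L * φ p) := fun p => by
      by_cases hp : p ∈ tsupport φ
      · have : p ∈ {p : PP N | p.2 < T} := hs p hp
        rw [hfix, indicator_of_mem this]
      · simp [h.heat_zero hp, image_eq_zero_of_notMem_tsupport hp]
    simp only [hz] at w
    obtain ⟨C, hC⟩ := hc.exists_bound_of_continuous h.c0
    have iφ : ∀ (m : Measure (PP N)) [IsFiniteMeasure m], Integrable φ m := fun m _ =>
      Integrable.of_bound h.c0.aestronglyMeasurable C (Eventually.of_forall hC)
    rw [integral_add_measure (iφ _) (iφ _), lft_int κ h.c0,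
      integral_withDensity_eq_integral_toReal_smul hF (ae_lt_top hF hFi)] at w
    simp only [smul_eq_mul] at w
    have i1 := HT.int_mul h.heat_cont (h.heat_cs hc) iu
    have i2 := HT.int_mul h.c0 hc iu
    have i3 := HT.int_mul h.c0 hc hfi
    have e1 : ∫ p, (U p).toReal * (h.heat p - L * φ p) =
        ∫ p, (U p).toReal * h.heat p - L * ((U p).toReal * φ p) := by
      congr 1; funext p; ring
    have e2 : ∫ p, (F p).toReal * φ p = ∫ p, L * ((U p).toReal * φ p) - f p * φ p := by
      refine integral_congr_ae ?_
      filter_upwards [hfF] with p hp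
      rw [hp]; ring
    rw [e1, e2, integral_sub i1 (i2.const_mul _), integral_sub (i2.const_mul _) i3] at w
    have e3 : ∫ p, φ p * f p = ∫ p, f p * φ p := by simp only [mul_comm]
    rw [e3]
    linarith

lemma pot_add (L T : ℝ) (m m' : Measure (PP N)) (p : PP N) :
    pot L T (m + m') p = pot L T m p + pot L T m' p := lintegral_add_measure _ _ _

lemma pot_wd (L T : ℝ) {F : PP N → ℝ≥0∞} (hF : Measurable F) (p : PP N) :
    pot L T (volume.withDensity F) p = ∫⁻ q, F q * ENNReal.ofReal (KL L T (p - q)) := by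
  unfold pot
  have mm : Measurable fun q : PP N => ENNReal.ofReal (KL L T (p - q)) :=
    ((KL_meas L T).comp (by fun_prop : Measurable fun q : PP N => p - q)).ennreal_ofReal
  rw [lintegral_withDensity_eq_lintegral_mul _ hF mm]
  rfl

def VV (T : ℝ) (κ : Measure (Euc N)) (p : PP N) : ℝ :=
  ({p : PP N | p.2 < T}.indicator (pot 0 T (lft κ)) p).toReal

lemma VV_sol (T : ℝ) (κ : Measure (Euc N)) [IsFiniteMeasure κ] :
    Sol T κ (VV T κ) (fun _ => 0) := by
  refine sol_of_fix (L := 0) κ _ (fun _ => 0) _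
    ((pot_meas 0 T _).indicator (measurableSet_lt measurable_snd measurable_const)) ?_
    measurable_const (by simp) (by simp) ?_ (integrable_zero _ _ _) (by simp)
  · refine ne_top_of_le_ne_top ?_ (lintegral_mono (indicator_le_self _ _))
    rw [pot_lint]
    exact ENNReal.mul_ne_top ENNReal.ofReal_ne_top (measure_ne_top _ _)
  · intro p
    simp

lemma solve {L T : ℝ} (hL : 0 ≤ L) (hT : 0 < T) (κ : Measure (Euc N)) [IsFiniteMeasure κ]
    (b : PP N → ℝ → ℝ) (bm : Measurable (Function.uncurry b)) (b0 : ∀ p s, 0 ≤ b p s)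
    (bz : ∀ p, b p 0 = 0)
    (bc : ∀ p, Continuous (b p)) (bmono : ∀ p s s', s ≤ s' → L * s - b p s ≤ L * s' - b p s') :
    ∃ u, Sol T κ u (fun p => b p (u p)) := by
  set S : Set (PP N) := {p | p.2 < T} with hS
  have mS : MeasurableSet S := measurableSet_lt measurable_snd measurable_const
  set H : (PP N → ℝ≥0∞) → PP N → ℝ≥0∞ := fun U p =>
    ENNReal.ofReal (L * (U p).toReal - b p (U p).toReal) with hH
  have bm' : ∀ U : PP N → ℝ≥0∞, Measurable U → Measurable fun p => b p (U p).toReal := fun U hU =>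
    bm.comp (measurable_id.prodMk hU.ennreal_toReal)
  have Hm : ∀ U, Measurable U → Measurable (H U) := fun U hU =>
    ((hU.ennreal_toReal.const_mul L).sub (bm' U hU)).ennreal_ofReal
  have Hle : ∀ U p, H U p ≤ ENNReal.ofReal L * U p := fun U p => by
    calc H U p ≤ ENNReal.ofReal (L * (U p).toReal) :=
          ENNReal.ofReal_le_ofReal (by linarith [b0 p (U p).toReal])
      _ = ENNReal.ofReal L * ENNReal.ofReal (U p).toReal := ENNReal.ofReal_mul hL
      _ ≤ _ := by gcongr; exact ENNReal.ofReal_toReal_le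
  have H0 : ∀ U p, U p = 0 → H U p = 0 := fun U p h => by simp [hH, h, bz]
  set Φ : (PP N → ℝ≥0∞) → PP N → ℝ≥0∞ := fun U =>
    S.indicator (pot L T (lft κ + volume.withDensity (H U))) with hΦ
  have sf : ∀ V, SFinite (lft κ + volume.withDensity (H V)) := fun V =>
    sfin_sum _ _ inferInstance (sfin_wd _)
  set U : ℕ → PP N → ℝ≥0∞ := fun k => Nat.rec (fun _ => 0) (fun _ V => Φ V) k with hUdef
  have U0 : U 0 = fun _ => 0 := rfl
  have US : ∀ k, U (k+1) = Φ (U k) := fun k => rfl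
  have Um : ∀ k, Measurable (U k) := fun k => by
    cases k with
    | zero => exact measurable_const
    | succ k => rw [US]; exact (pot_meas L T _).indicator mS
  set θ := thL L T with hθ
  have hθ0 : 0 ≤ θ := thL_nonneg L T
  have hθ1 : L * θ < 1 := thL_lt hT
  set κr := (κ univ).toReal with hκr
  have hκ : κ univ = ENNReal.ofReal κr := (ENNReal.ofReal_toReal (measure_ne_top _ _)).symm
  set M : ℝ := θ * κr / (1 - L * θ) with hM
  have hM0 : 0 ≤ M := div_nonneg (mul_nonneg hθ0 ENNReal.toReal_nonneg) (by linarith)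
  have Ui : ∀ k, ∫⁻ p, U k p ≤ ENNReal.ofReal M := by
    intro k
    induction k with
    | zero => simp [U0]
    | succ k ih =>
      rw [US]
      calc ∫⁻ p, Φ (U k) p ≤ ∫⁻ p, pot L T (lft κ + volume.withDensity (H (U k))) p :=
            lintegral_mono (indicator_le_self _ _)
        _ = ENNReal.ofReal θ * (κ univ + ∫⁻ p, H (U k) p) := by
            rw [pot_lint, Measure.add_apply, lft_univ, withDensity_apply _ MeasurableSet.univ]
            simp [hθ]
        _ ≤ ENNReal.ofReal θ * (κ univ + ENNReal.ofReal L * ENNReal.ofReal M) := by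
            gcongr
            calc ∫⁻ p, H (U k) p ≤ ∫⁻ p, ENNReal.ofReal L * U k p := lintegral_mono (Hle _)
              _ = ENNReal.ofReal L * ∫⁻ p, U k p := lintegral_const_mul _ (Um k)
              _ ≤ _ := by gcongr
        _ = ENNReal.ofReal (θ * (κr + L * M)) := by
            rw [hκ, ← ENNReal.ofReal_mul hL, ← ENNReal.ofReal_add ENNReal.toReal_nonneg
              (mul_nonneg hL hM0), ← ENNReal.ofReal_mul hθ0]
        _ = ENNReal.ofReal M := by
            congr 1
            have : (1 - L * θ) ≠ 0 := by linarith
            have hM' : M * (1 - L * θ) = θ * κr := div_mul_cancel₀ _ this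
            linarith
  have Ufin : ∀ k, ∀ᵐ p, U k p < ⊤ := fun k =>
    ae_lt_top (Um k) (ne_top_of_le_ne_top ENNReal.ofReal_ne_top (Ui k))
  have Hmono : ∀ U V : PP N → ℝ≥0∞, (∀ p, U p ≤ V p) → ∀ p, V p < ⊤ → H U p ≤ H V p := by
    intro U V h p hp
    exact ENNReal.ofReal_le_ofReal (bmono _ _ _ (ENNReal.toReal_mono hp.ne (h p)))
  have Umono : ∀ k p, U k p ≤ U (k+1) p := by
    intro k
    induction k with
    | zero => intro p; simp [U0]
    | succ k ih =>
      intro p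
      rw [US, US (k+1)]
      refine indicator_le_indicator' fun _ => ?_
      refine lintegral_mono' (add_le_add le_rfl (withDensity_mono ?_)) le_rfl
      filter_upwards [Ufin (k+1)] with q hq
      exact Hmono _ _ ih q hq
  have Umon : ∀ p, Monotone fun k => U k p := fun p => monotone_nat_of_le_succ fun k => Umono k p
  set W : PP N → ℝ≥0∞ := fun p => ⨆ k, U k p with hW
  have Wm : Measurable W := Measurable.iSup Um
  have Wlim : ∀ p, Tendsto (fun k => U k p) atTop (𝓝 (W p)) := fun p => tendsto_atTop_iSup (Umon p)
  have Wi : ∫⁻ p, W p ≤ ENNReal.ofReal M := by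
    rw [hW, lintegral_iSup Um (fun i j hij p => Umon p hij)]
    exact iSup_le Ui
  have Wit : ∫⁻ p, W p ≠ ⊤ := ne_top_of_le_ne_top ENNReal.ofReal_ne_top Wi
  have Wfin : ∀ᵐ p, W p < ⊤ := ae_lt_top Wm Wit
  have ULW : ∀ k p, U k p ≤ W p := fun k p => le_iSup (fun k => U k p) k
  have HWm := Hm W Wm
  have HWi : ∫⁻ p, H W p ≠ ⊤ := by
    refine ne_top_of_le_ne_top ?_ (lintegral_mono (Hle W))
    rw [lintegral_const_mul _ Wm]
    exact ENNReal.mul_ne_top ENNReal.ofReal_ne_top Wit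
  have fix : ∀ p, W p = Φ W p := by
    intro p
    have l1 : Tendsto (fun k => U (k+1) p) atTop (𝓝 (W p)) := (tendsto_add_atTop_iff_nat 1).2 (Wlim p)
    refine tendsto_nhds_unique l1 ?_
    simp only [US]
    by_cases hp : p ∈ S
    · simp only [hΦ, indicator_of_mem hp, pot_add, pot_wd L T (Hm _ (Um _)), pot_wd L T HWm]
      refine Tendsto.add tendsto_const_nhds ?_
      have mm : Measurable fun q : PP N => ENNReal.ofReal (KL L T (p - q)) :=
        ((KL_meas L T).comp (by fun_prop : Measurable fun q : PP N => p - q)).ennreal_ofReal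
      refine lintegral_tendsto_of_tendsto_of_monotone (fun k => ((Hm _ (Um k)).mul mm).aemeasurable) ?_ ?_
      · filter_upwards [Wfin] with q hq
        intro i j hij
        simp only
        gcongr
        exact ENNReal.ofReal_le_ofReal (bmono _ _ _ (ENNReal.toReal_mono
          ((ULW j q).trans_lt hq).ne (Umon q hij)))
      · filter_upwards [Wfin] with q hq
        refine ENNReal.Tendsto.mul_const ?_ (Or.inr ENNReal.ofReal_ne_top)
        refine ENNReal.tendsto_ofReal ?_
        have t := (ENNReal.tendsto_toReal hq.ne).comp (Wlim q)
        exact (t.const_mul L).sub (((bc q).tendsto _).comp t)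
    · simp only [hΦ, indicator_of_notMem hp]
      exact tendsto_const_nhds
  have Uz : ∀ k (p : PP N), p.2 ≤ 0 → U k p = 0 := by
    intro k
    induction k with
    | zero => intro p _; rfl
    | succ k ih =>
      intro p hp
      rw [US]
      have hm : (lft κ + volume.withDensity (H (U k))) {q | q.2 < 0} = 0 := by
        rw [Measure.add_apply, lft_neg, zero_add,
          withDensity_apply _ (measurableSet_lt measurable_snd measurable_const)]
        rw [setLIntegral_congr_fun (g := fun _ => 0)
          (measurableSet_lt measurable_snd measurable_const) (fun p hp => H0 _ _ (ih p (le_of_lt hp)))]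
        simp
      have := pot_zero L T _ hm p hp
      simp only [hΦ]
      by_cases h : p ∈ S
      · rw [indicator_of_mem h, this]
      · rw [indicator_of_notMem h]
  have Wz : ∀ p : PP N, p.2 ≤ 0 → W p = 0 := fun p hp => by simp [hW, Uz _ p hp]
  have hb : ∀ p, b p (W p).toReal ≤ L * (W p).toReal := fun p => by
    have := bmono p 0 (W p).toReal ENNReal.toReal_nonneg
    rw [bz] at this; linarith
  refine ⟨fun p => (W p).toReal, sol_of_fix (L := L) κ W (H W) _ Wm Wit HWm HWi
    (fun p hp => H0 _ _ (Wz p hp)) fix ?_ ?_⟩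
  · refine Integrable.mono' ((integrable_toReal_of_lintegral_ne_top Wm.aemeasurable Wit).const_mul L)
      (bm' W Wm).aestronglyMeasurable (Eventually.of_forall fun p => ?_)
    rw [Real.norm_of_nonneg (b0 _ _)]; exact hb p
  · refine Eventually.of_forall fun p => ?_
    exact ENNReal.toReal_ofReal (by linarith [hb p])
end

section
open scoped ContDiff
variable {N : ℕ}

open scoped Convolution in
def cv (ρ d : PP N → ℝ) : PP N → ℝ := (ρ ⋆[ContinuousLinearMap.lsmul ℝ ℝ, volume] d)

lemma cv_apply (ρ d : PP N → ℝ) (p : PP N) : cv ρ d p = ∫ q, ρ (p - q) * d q :=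
  convolution_lsmul_swap

lemma cv_smooth {ρ d : PP N → ℝ} (hρ : ContDiff ℝ ∞ ρ) (hc : HasCompactSupport ρ)
    (hd : Integrable d) : ContDiff ℝ ∞ (cv ρ d) :=
  hc.contDiff_convolution_left (n := (⊤ : ℕ∞)) _ hρ hd.locallyIntegrable

lemma cv_fd {ρ d : PP N → ℝ} (hρ : ContDiff ℝ ∞ ρ) (hc : HasCompactSupport ρ)
    (hd : Integrable d) (p v : PP N) :
    fderiv ℝ (cv ρ d) p v = cv (fun q => fderiv ℝ ρ q v) d p := by
  have h := hc.hasFDerivAt_convolution_left (ContinuousLinearMap.lsmul ℝ ℝ) (μ := volume)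
    (hρ.of_le (by exact_mod_cast le_top)) hd.locallyIntegrable p
  have h' : HasFDerivAt (cv ρ d) _ p := h
  rw [h'.fderiv, cv_apply, convolution_eq_swap]
  rw [ContinuousLinearMap.integral_apply]
  · simp
  · have e := (hc.fderiv (𝕜 := ℝ)).convolutionExists_left
      ((ContinuousLinearMap.lsmul ℝ ℝ).precompL (PP N)) (hρ.continuous_fderiv (by simp))
      hd.locallyIntegrable p
    exact e.integrable_swap

lemma dv_smooth {ρ : PP N → ℝ} (hρ : ContDiff ℝ ∞ ρ) (v : PP N) :
    ContDiff ℝ ∞ (fun q => fderiv ℝ ρ q v) :=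
  (hρ.fderiv_right (m := ∞) (by simp)).clm_apply contDiff_const

lemma dv_cs {ρ : PP N → ℝ} (hc : HasCompactSupport ρ) (v : PP N) :
    HasCompactSupport (fun q => fderiv ℝ ρ q v) := by
  refine hc.mono' fun p hp => ?_
  by_contra h
  exact hp (by simp [fderiv_of_notMem_tsupport ℝ h])

lemma fd_refl {ρ : PP N → ℝ} (hρ : Differentiable ℝ ρ) (p q v : PP N) :
    fderiv ℝ (fun q => ρ (p - q)) q v = - fderiv ℝ ρ (p - q) v := by
  have h1 : HasFDerivAt (fun q : PP N => p - q) (-ContinuousLinearMap.id ℝ (PP N)) q :=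
    (hasFDerivAt_id q).const_sub p
  have := (hρ (p - q)).hasFDerivAt.comp q h1
  rw [show (fun q => ρ (p - q)) = ρ ∘ (fun q => p - q) from rfl, this.fderiv]
  simp

lemma cv_heat {ρ d : PP N → ℝ} (hρ : ContDiff ℝ ∞ ρ) (hc : HasCompactSupport ρ)
    (hd : Integrable d) (p : PP N)
    (hψ : ContDiff ℝ ∞ (fun q => ρ (p - q))) :
    (HT.ofSmooth (cv_smooth hρ hc hd)).dt p - (HT.ofSmooth (cv_smooth hρ hc hd)).lapl p =
      - ∫ q, d q * (HT.ofSmooth hψ).heat q := by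
  have ii : ∀ {σ : PP N → ℝ}, Continuous σ → HasCompactSupport σ →
      Integrable fun q => σ (p - q) * d q := by
    intro σ c s
    obtain ⟨C, hC⟩ := s.exists_bound_of_continuous c
    exact hd.bdd_mul (c := C) (c.comp (by fun_prop)).aestronglyMeasurable
      (Eventually.of_forall fun q => hC _)
  have e1 : (HT.ofSmooth (cv_smooth hρ hc hd)).dt p = ∫ q, fderiv ℝ ρ (p - q) (tv N) * d q := by
    show fderiv ℝ (cv ρ d) p (tv N) = _
    rw [cv_fd hρ hc hd, cv_apply]
  have e2 : ∀ i, (HT.ofSmooth (cv_smooth hρ hc hd)).d2 i p =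
      ∫ q, fderiv ℝ (fun q => fderiv ℝ ρ q (ev i)) (p - q) (ev i) * d q := by
    intro i
    show fderiv ℝ (fun q => fderiv ℝ (cv ρ d) q (ev i)) p (ev i) = _
    rw [show (fun q => fderiv ℝ (cv ρ d) q (ev i)) = cv (fun q => fderiv ℝ ρ q (ev i)) d from
      funext fun q => cv_fd hρ hc hd q _]
    rw [cv_fd (dv_smooth hρ _) (dv_cs hc _) hd, cv_apply]
  have e3 : ∀ q, (HT.ofSmooth hψ).heat q = - fderiv ℝ ρ (p - q) (tv N) +
      ∑ i, fderiv ℝ (fun q => fderiv ℝ ρ q (ev i)) (p - q) (ev i) := by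
    intro q
    show fderiv ℝ (fun q => ρ (p - q)) q (tv N) + ∑ i, fderiv ℝ (fun q => fderiv ℝ
      (fun q => ρ (p - q)) q (ev i)) q (ev i) = _
    congr 1
    · exact fd_refl (hρ.differentiable (by simp)) p q _
    · refine Finset.sum_congr rfl fun i _ => ?_
      rw [show (fun q => fderiv ℝ (fun q => ρ (p - q)) q (ev i)) =
        fun q => (fun r => - fderiv ℝ ρ r (ev i)) (p - q) from
          funext fun q => fd_refl (hρ.differentiable (by simp)) p q _]
      rw [fd_refl ((dv_smooth hρ _).neg.differentiable (by simp)), fderiv_fun_neg]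
      simp
  have e4 : (HT.ofSmooth (cv_smooth hρ hc hd)).lapl p =
      ∑ i, ∫ q, fderiv ℝ (fun q => fderiv ℝ ρ q (ev i)) (p - q) (ev i) * d q :=
    Finset.sum_congr rfl fun i _ => e2 i
  have i1 : Integrable fun q => fderiv ℝ ρ (p - q) (tv N) * d q :=
    ii (dv_smooth hρ _).continuous (dv_cs hc _)
  have i2 : ∀ i, Integrable fun q => fderiv ℝ (fun q => fderiv ℝ ρ q (ev i)) (p - q) (ev i) * d q :=
    fun i => ii (dv_smooth (dv_smooth hρ _) _).continuous (dv_cs (dv_cs hc _) _)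
  rw [e1, e4, ← integral_finsetSum _ (fun i _ => i2 i), ← integral_sub i1
    (integrable_finsetSum _ fun i _ => i2 i), ← integral_neg]
  congr 1; funext q
  rw [e3, ← Finset.sum_mul]
  ring

/-- L¹ convergence of mollifications, abstract form. -/
lemma l1_conv {d : PP N → ℝ} {D : ℕ → PP N → ℝ} (hd : Integrable d) (hD : ∀ n, Integrable (D n))
    (hle : ∀ n, ∫ p, |D n p| ≤ ∫ p, |d p|)
    (hlim : ∀ᵐ p, Tendsto (fun n => D n p) atTop (𝓝 (d p))) :
    Tendsto (fun n => ∫ p, |D n p - d p|) atTop (𝓝 0) := by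
  have t : Tendsto (fun n => ∫ p, (|d p| + |D n p| - |D n p - d p|)) atTop
      (𝓝 (∫ p, 2 * |d p|)) := by
    refine tendsto_integral_of_dominated_convergence (fun p => 2 * |d p|) (fun n =>
      ((hd.abs.add (hD n).abs).sub ((hD n).sub hd).abs).aestronglyMeasurable)
      (hd.abs.const_mul 2) (fun n => Eventually.of_forall fun p => ?_) ?_
    · rw [Real.norm_eq_abs, abs_le]
      have h1 := abs_sub (D n p) (d p)
      have h2 := abs_sub_abs_le_abs_sub (D n p) (d p)
      have h3 := abs_nonneg (d p)
      constructor <;> linarith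
    · filter_upwards [hlim] with p hp
      have := (tendsto_const_nhds (x := |d p|)).add hp.abs |>.sub (hp.sub_const (d p)).abs
      convert this using 2
      simp; ring
  rw [integral_const_mul] at t
  have t2 := (tendsto_const_nhds (x := 2 * ∫ p, |d p|)).sub t
  rw [sub_self] at t2
  refine squeeze_zero (fun n => integral_nonneg fun _ => abs_nonneg _) (fun n => ?_) t2
  have e1 : ∫ p, (|d p| + |D n p| - |D n p - d p|) =
      (∫ p, |d p|) + (∫ p, |D n p|) - (∫ p, |D n p - d p|) := by
    have a1 := integral_sub (hd.abs.add (hD n).abs) ((hD n).sub hd).abs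
    have a2 := integral_add hd.abs (hD n).abs
    simp only [Pi.add_apply, Pi.sub_apply] at a1 a2
    rw [← a2, ← a1]
  have := hle n
  linarith

/-- the standard bump sequence -/
def bmp (N : ℕ) (n : ℕ) : ContDiffBump (0 : PP N) where
  rIn := 1 / (2 * ((n:ℝ) + 1))
  rOut := 1 / ((n:ℝ) + 1)
  rIn_pos := by positivity
  rIn_lt_rOut := by
    apply one_div_lt_one_div_of_lt <;> nlinarith [(Nat.cast_nonneg n : (0:ℝ) ≤ n)]

def rh (N : ℕ) (n : ℕ) : PP N → ℝ := (bmp N n).normed volume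

lemma rh_smooth (n : ℕ) : ContDiff ℝ ∞ (rh N n) := (bmp N n).contDiff_normed
lemma rh_cs (n : ℕ) : HasCompactSupport (rh N n) := (bmp N n).hasCompactSupport_normed
lemma rh_nonneg (n : ℕ) (p) : 0 ≤ rh N n p := (bmp N n).nonneg_normed p
lemma rh_int (n : ℕ) : ∫ p, rh N n p = 1 := (bmp N n).integral_normed
lemma rh_supp (n : ℕ) : tsupport (rh N n) = Metric.closedBall 0 (1 / ((n:ℝ)+1)) :=
  (bmp N n).tsupport_normed_eq

lemma rh_integrable (n : ℕ) : Integrable (rh N n) :=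
  (rh_smooth n).continuous.integrable_of_hasCompactSupport (rh_cs n)

lemma cv_integrable (n : ℕ) {d : PP N → ℝ} (hd : Integrable d) : Integrable (cv (rh N n) d) :=
  (rh_integrable n).integrable_convolution _ hd

lemma cv_abs_le (n : ℕ) {d : PP N → ℝ} (hd : Integrable d) :
    ∫ p, |cv (rh N n) d p| ≤ ∫ p, |d p| := by
  have h2 : ∫ p, cv (rh N n) (fun q => |d q|) p = ∫ p, |d p| := by
    have := integral_convolution (μ := (volume : Measure (PP N))) (ν := (volume : Measure (PP N)))
      (ContinuousLinearMap.lsmul ℝ ℝ) (rh_integrable (N := N) n) hd.abs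
    rw [rh_int] at this
    simp only [ContinuousLinearMap.lsmul_apply, one_smul] at this
    exact this
  rw [← h2]
  refine integral_mono (cv_integrable n hd).abs (cv_integrable n hd.abs) fun p => ?_
  simp only [cv_apply]
  refine (abs_integral_le_integral_abs).trans (le_of_eq ?_)
  congr 1; funext q
  rw [abs_mul, abs_of_nonneg (rh_nonneg n _)]

lemma cv_ae {d : PP N → ℝ} (hd : Integrable d) :
    ∀ᵐ p, Tendsto (fun n => cv (rh N n) d p) atTop (𝓝 (d p)) := by
  refine ContDiffBump.ae_convolution_tendsto_right_of_locallyIntegrable (φ := bmp N) (K := 2)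
    ?_ ?_ hd.locallyIntegrable
  · exact tendsto_one_div_add_atTop_nhds_zero_nat
  · refine Eventually.of_forall fun n => le_of_eq ?_
    show 1 / ((n:ℝ)+1) = 2 * (1 / (2 * ((n:ℝ)+1)))
    have : (n:ℝ) + 1 ≠ 0 := by positivity
    field_simp

lemma cv_l1 {d : PP N → ℝ} (hd : Integrable d) :
    Tendsto (fun n => ∫ p, |cv (rh N n) d p - d p|) atTop (𝓝 0) :=
  l1_conv hd (fun n => cv_integrable n hd) (fun n => cv_abs_le n hd) (cv_ae hd)

/-- regularised positive part -/
def jj (δ s : ℝ) : ℝ := (s + Real.sqrt (s ^ 2 + δ ^ 2) - δ) / 2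
def jj1 (δ s : ℝ) : ℝ := (1 + s / Real.sqrt (s ^ 2 + δ ^ 2)) / 2
def jj2 (δ s : ℝ) : ℝ := δ ^ 2 / (2 * (Real.sqrt (s ^ 2 + δ ^ 2)) ^ 3)

lemma sq_pos' {δ : ℝ} (hδ : 0 < δ) (s : ℝ) : 0 < Real.sqrt (s ^ 2 + δ ^ 2) :=
  Real.sqrt_pos.2 (by positivity)

lemma jsq_deriv {δ : ℝ} (hδ : 0 < δ) (s : ℝ) :
    HasDerivAt (fun s => Real.sqrt (s ^ 2 + δ ^ 2)) (s / Real.sqrt (s ^ 2 + δ ^ 2)) s := by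
  have h := ((hasDerivAt_pow 2 s).add_const (δ ^ 2)).sqrt (by positivity)
  convert h using 1
  have := sq_pos' hδ s
  field_simp
  norm_num
  ring

lemma jj_deriv {δ : ℝ} (hδ : 0 < δ) (s : ℝ) : HasDerivAt (jj δ) (jj1 δ s) s :=
  ((((hasDerivAt_id s).add (jsq_deriv hδ s))).sub_const δ).div_const 2

lemma jj1_deriv {δ : ℝ} (hδ : 0 < δ) (s : ℝ) : HasDerivAt (jj1 δ) (jj2 δ s) s := by
  have h := (((hasDerivAt_id s).div (jsq_deriv hδ s) (sq_pos' hδ s).ne').const_add 1).div_const 2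
  refine h.congr_deriv ?_
  have h1 := sq_pos' hδ s
  have h2 : Real.sqrt (s ^ 2 + δ ^ 2) ^ 2 = s ^ 2 + δ ^ 2 := Real.sq_sqrt (by positivity)
  unfold jj2
  simp only [id]
  field_simp
  rw [h2]; ring

lemma jj2_nonneg {δ : ℝ} (hδ : 0 < δ) (s : ℝ) : 0 ≤ jj2 δ s := by
  unfold jj2; have := sq_pos' hδ s; positivity

lemma jj2_cont {δ : ℝ} (hδ : 0 < δ) : Continuous (jj2 δ) := by
  unfold jj2
  refine Continuous.div continuous_const (by fun_prop) fun s => ?_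
  have := sq_pos' hδ s
  positivity

lemma abs_le_sq {δ : ℝ} (s : ℝ) : |s| ≤ Real.sqrt (s ^ 2 + δ ^ 2) :=
  Real.abs_le_sqrt (by nlinarith)

lemma jj1_mem {δ : ℝ} (hδ : 0 < δ) (s : ℝ) : 0 ≤ jj1 δ s ∧ jj1 δ s ≤ 1 := by
  have h1 := sq_pos' hδ s
  have h2 := abs_le.1 (abs_le_sq (δ := δ) s)
  have h3 : s / Real.sqrt (s ^ 2 + δ ^ 2) ≤ 1 := (div_le_one h1).2 h2.2
  have h4 : -1 ≤ s / Real.sqrt (s ^ 2 + δ ^ 2) := (le_div_iff₀ h1).2 (by linarith [h2.1])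
  unfold jj1
  constructor <;> linarith

lemma jj_lip {δ : ℝ} (hδ : 0 < δ) (s r : ℝ) : |jj δ s - jj δ r| ≤ |s - r| := by
  have := Convex.norm_image_sub_le_of_norm_hasDerivWithin_le (f := jj δ) (f' := jj1 δ) (C := 1)
    (s := univ) (x := r) (y := s) (fun x _ => (jj_deriv hδ x).hasDerivWithinAt) (fun x _ => by
      rw [Real.norm_of_nonneg (jj1_mem hδ x).1]; exact (jj1_mem hδ x).2) convex_univ trivial trivial
  simpa using this

lemma jj_zero {δ : ℝ} (hδ : 0 < δ) : jj δ 0 = 0 := by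
  unfold jj; simp [Real.sqrt_sq hδ.le]

lemma jj_abs {δ : ℝ} (hδ : 0 < δ) (s : ℝ) : |jj δ s| ≤ |s| := by
  simpa [jj_zero hδ] using jj_lip hδ s 0

def aa (s : ℝ) : ℝ := if 0 < s then 1 else if s = 0 then 1/2 else 0

lemma jj_tendsto (s : ℝ) : Tendsto (fun n : ℕ => jj (1 / ((n:ℝ)+1)) s) atTop (𝓝 (max s 0)) := by
  have t := tendsto_one_div_add_atTop_nhds_zero_nat (𝕜 := ℝ)
  have c : Continuous fun δ : ℝ => jj δ s := by unfold jj; fun_prop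
  have := (c.tendsto 0).comp t
  suffices e : max s 0 = jj 0 s by rw [e]; exact this
  unfold jj
  rw [show s ^ 2 + (0:ℝ)^2 = s ^ 2 by ring, Real.sqrt_sq_eq_abs]
  rcases le_total 0 s with h | h
  · rw [max_eq_left h, abs_of_nonneg h]; ring
  · rw [max_eq_right h, abs_of_nonpos h]; ring

lemma jj1_tendsto (s : ℝ) : Tendsto (fun n : ℕ => jj1 (1 / ((n:ℝ)+1)) s) atTop (𝓝 (aa s)) := by
  by_cases h0 : s = 0
  · subst h0
    simp [jj1, aa]
  have t := tendsto_one_div_add_atTop_nhds_zero_nat (𝕜 := ℝ)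
  have hp : 0 < s ^ 2 := by positivity
  have c : ContinuousAt (fun δ : ℝ => jj1 δ s) 0 := by
    unfold jj1
    refine ContinuousAt.div_const (ContinuousAt.add continuousAt_const
      (ContinuousAt.div continuousAt_const (by fun_prop) ?_)) 2
    rw [show s ^ 2 + (0:ℝ)^2 = s ^ 2 by ring]
    exact (Real.sqrt_pos.2 hp).ne'
  have := c.tendsto.comp t
  suffices e : aa s = jj1 0 s by rw [e]; exact this
  unfold jj1 aa
  rw [show s ^ 2 + (0:ℝ)^2 = s ^ 2 by ring, Real.sqrt_sq_eq_abs]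
  rcases lt_or_gt_of_ne h0 with h | h
  · rw [abs_of_neg h, if_neg h.not_gt, if_neg h0, div_neg, div_self h0]; norm_num
  · rw [abs_of_pos h, if_pos h, div_self h0]; norm_num

lemma kato_eps {d F : PP N → ℝ} (hd : Integrable d) (hF : Integrable F) {U : Set (PP N)}
    (WI : ∀ (φ : PP N → ℝ) (h : ContDiff ℝ ∞ φ), HasCompactSupport φ → (∀ p, 0 ≤ φ p) →
      tsupport φ ⊆ U → -(∫ p, d p * (HT.ofSmooth h).heat p) ≤ ∫ p, φ p * F p)
    {φ : PP N → ℝ} (h : HT φ) (hc : HasCompactSupport φ) (h0 : ∀ p, 0 ≤ φ p)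
    {δ : ℝ} (hδ : 0 < δ) (n : ℕ)
    (hn : Metric.cthickening (1 / ((n:ℝ)+1)) (tsupport φ) ⊆ U) :
    -(∫ p, jj δ (cv (rh N n) d p) * h.heat p) ≤
      ∫ p, φ p * (jj1 δ (cv (rh N n) d p) * cv (rh N n) F p) := by
  set D := cv (rh N n) d with hD
  have sD : ContDiff ℝ ∞ D := cv_smooth (rh_smooth n) (rh_cs n) hd
  set k := HT.ofSmooth sD with hk
  set J := k.compR (jj δ) (jj1 δ) (jj2 δ) (jj_deriv hδ) (jj1_deriv hδ) (jj2_cont hδ) with hJ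
  rw [HT.ibp h J hc, ← integral_neg]
  have cF : Continuous (cv (rh N n) F) := (cv_smooth (rh_smooth n) (rh_cs n) hF).continuous
  have cj1 : Continuous (jj1 δ) := continuous_iff_continuousAt.2 fun s => (jj1_deriv hδ s).continuousAt
  refine integral_mono
    (((h.c0.mul (J.lapl_cont.sub J.ct)).integrable_of_hasCompactSupport hc.mul_right).neg)
    ((h.c0.mul ((cj1.comp sD.continuous).mul cF)).integrable_of_hasCompactSupport hc.mul_right)
    fun p => ?_
  by_cases hp : p ∈ tsupport φ
  swap
  · simp [image_eq_zero_of_notMem_tsupport hp]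
  have hψ : ContDiff ℝ ∞ (fun q => rh N n (p - q)) :=
    (rh_smooth n).comp (contDiff_const.sub contDiff_id)
  have key := cv_heat (rh_smooth n) (rh_cs n) hd p hψ
  have sub : tsupport (fun q => rh N n (p - q)) ⊆ Metric.closedBall p (1 / ((n:ℝ)+1)) := by
    refine closure_minimal (fun q hq => ?_) Metric.isClosed_closedBall
    have : p - q ∈ tsupport (rh N n) := subset_tsupport _ hq
    rw [rh_supp] at this
    rw [Metric.mem_closedBall, dist_comm, dist_eq_norm]
    simpa using this
  have w := WI _ hψ (HasCompactSupport.of_support_subset_isCompact (isCompact_closedBall p (1 / ((n:ℝ)+1)))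
    ((subset_tsupport _).trans sub)) (fun q => rh_nonneg n _)
    (sub.trans ((Metric.closedBall_subset_cthickening hp _).trans hn))
  rw [← key, ← cv_apply] at w
  have e : J.dt p - J.lapl p ≤ jj1 δ (D p) * (k.dt p - k.lapl p) := by
    have : J.lapl p = (∑ i, (jj2 δ (D p) * k.d1 i p) * k.d1 i p) + jj1 δ (D p) * k.lapl p := by
      show ∑ i, ((jj2 δ (D p) * k.d1 i p) * k.d1 i p + jj1 δ (D p) * k.d2 i p) = _
      rw [Finset.sum_add_distrib, ← Finset.mul_sum]; rfl
    rw [this]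
    have : 0 ≤ ∑ i, (jj2 δ (D p) * k.d1 i p) * k.d1 i p := Finset.sum_nonneg fun i _ => by
      rw [mul_assoc]; exact mul_nonneg (jj2_nonneg hδ _) (mul_self_nonneg _)
    have e2 : J.dt p = jj1 δ (D p) * k.dt p := rfl
    rw [e2]; linarith
  have e' : J.dt p - J.lapl p ≤ jj1 δ (D p) * cv (rh N n) F p :=
    e.trans (mul_le_mul_of_nonneg_left w (jj1_mem hδ _).1)
  have := mul_le_mul_of_nonneg_left e' (h0 p)
  linarith

lemma int_bound {c f : PP N → ℝ} {C : ℝ} (hf : Integrable f) (hc : AEStronglyMeasurable c)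
    (hC : ∀ p, |c p| ≤ C) : |∫ p, c p * f p| ≤ C * ∫ p, |f p| := by
  rw [← integral_const_mul]
  refine (abs_integral_le_integral_abs).trans (integral_mono_of_nonneg
    (Eventually.of_forall fun _ => abs_nonneg _) (hf.abs.const_mul C) (Eventually.of_forall fun p => ?_))
  simp only [abs_mul]
  exact mul_le_mul_of_nonneg_right (hC p) (abs_nonneg _)

lemma kato_delta {d F : PP N → ℝ} (hd : Integrable d) (hF : Integrable F) {U : Set (PP N)}
    (hU : IsOpen U)
    (WI : ∀ (φ : PP N → ℝ) (h : ContDiff ℝ ∞ φ), HasCompactSupport φ → (∀ p, 0 ≤ φ p) →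
      tsupport φ ⊆ U → -(∫ p, d p * (HT.ofSmooth h).heat p) ≤ ∫ p, φ p * F p)
    {φ : PP N → ℝ} (h : HT φ) (hc : HasCompactSupport φ) (h0 : ∀ p, 0 ≤ φ p)
    (hs : tsupport φ ⊆ U) {δ : ℝ} (hδ : 0 < δ) :
    -(∫ p, jj δ (d p) * h.heat p) ≤ ∫ p, φ p * (jj1 δ (d p) * F p) := by
  have cj : Continuous (jj δ) := continuous_iff_continuousAt.2 fun s => (jj_deriv hδ s).continuousAt
  have cj1 : Continuous (jj1 δ) := continuous_iff_continuousAt.2 fun s => (jj1_deriv hδ s).continuousAt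
  obtain ⟨ε, he, hε⟩ := hc.isCompact.exists_cthickening_subset_open hU hs
  obtain ⟨C, hC⟩ := (h.heat_cs hc).exists_bound_of_continuous h.heat_cont
  obtain ⟨C', hC'⟩ := hc.exists_bound_of_continuous h.c0
  have ev : ∀ᶠ n : ℕ in atTop, -(∫ p, jj δ (cv (rh N n) d p) * h.heat p) ≤
      ∫ p, φ p * (jj1 δ (cv (rh N n) d p) * cv (rh N n) F p) := by
    have := (tendsto_one_div_add_atTop_nhds_zero_nat (𝕜 := ℝ)).eventually (gt_mem_nhds he)
    filter_upwards [this] with n hn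
    exact kato_eps hd hF WI h hc h0 hδ n ((Metric.cthickening_mono hn.le _).trans hε)
  have ij : ∀ {e : PP N → ℝ}, Integrable e → Integrable fun p => jj δ (e p) := fun {e} he =>
    he.mono (cj.comp_aestronglyMeasurable he.aestronglyMeasurable) (Eventually.of_forall fun p => jj_abs hδ _)
  have t1 : Tendsto (fun n => ∫ p, jj δ (cv (rh N n) d p) * h.heat p) atTop
      (𝓝 (∫ p, jj δ (d p) * h.heat p)) := by
    rw [tendsto_iff_norm_sub_tendsto_zero]
    have tt := (cv_l1 hd).const_mul C
    rw [mul_zero] at tt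
    refine squeeze_zero (fun _ => norm_nonneg _) (fun n => ?_) tt
    rw [← integral_sub (HT.int_mul h.heat_cont (h.heat_cs hc) (ij (cv_integrable n hd)))
      (HT.int_mul h.heat_cont (h.heat_cs hc) (ij hd))]
    have : (fun p => jj δ (cv (rh N n) d p) * h.heat p - jj δ (d p) * h.heat p) =
      fun p => h.heat p * (jj δ (cv (rh N n) d p) - jj δ (d p)) := by funext p; ring
    rw [this, Real.norm_eq_abs]
    have C0 : 0 ≤ C := (norm_nonneg _).trans (hC 0)
    refine (int_bound ((ij (cv_integrable n hd)).sub (ij hd)) h.heat_cont.aestronglyMeasurable hC).trans ?_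
    refine mul_le_mul_of_nonneg_left (integral_mono ((ij (cv_integrable n hd)).sub (ij hd)).abs
      ((cv_integrable n hd).sub hd).abs fun p => jj_lip hδ _ _) C0
  have mD : ∀ n, AEStronglyMeasurable (fun p => φ p * jj1 δ (cv (rh N n) d p)) volume := fun n =>
    h.c0.aestronglyMeasurable.mul (cj1.comp_aestronglyMeasurable (cv_integrable n hd).aestronglyMeasurable)
  have bD : ∀ s p, |φ p * jj1 δ s| ≤ C' := fun s p => by
    rw [abs_mul, abs_of_nonneg (jj1_mem hδ s).1]
    have h1 : |φ p| ≤ C' := hC' p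
    nlinarith [abs_nonneg (φ p), (jj1_mem hδ s).1, (jj1_mem hδ s).2]
  have iD : ∀ n {G : PP N → ℝ}, Integrable G → Integrable fun p => (φ p * jj1 δ (cv (rh N n) d p)) * G p :=
    fun n G hG => hG.bdd_mul (c := C') (mD n) (Eventually.of_forall fun p => bD _ _)
  have t2 : Tendsto (fun n => ∫ p, (φ p * jj1 δ (cv (rh N n) d p)) * F p) atTop
      (𝓝 (∫ p, (φ p * jj1 δ (d p)) * F p)) := by
    refine tendsto_integral_of_dominated_convergence (fun p => C' * |F p|)
      (fun n => (iD n hF).aestronglyMeasurable) (hF.abs.const_mul C')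
      (fun n => Eventually.of_forall fun p => ?_) ?_
    · rw [Real.norm_eq_abs, abs_mul]
      exact mul_le_mul_of_nonneg_right (bD _ _) (abs_nonneg _)
    · filter_upwards [cv_ae hd] with p hp
      exact (((cj1.tendsto _).comp hp).const_mul (φ p)).mul_const (F p)
  have t3 : Tendsto (fun n => ∫ p, (φ p * jj1 δ (cv (rh N n) d p)) * (cv (rh N n) F p - F p)) atTop
      (𝓝 0) := by
    have tt := (cv_l1 hF).const_mul C'
    rw [mul_zero] at tt
    exact squeeze_zero_norm (fun n => int_bound ((cv_integrable n hF).sub hF) (mD n) (fun p => bD _ _)) tt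
  have t4 := t3.add t2
  rw [zero_add] at t4
  have e : ∀ n, (∫ p, (φ p * jj1 δ (cv (rh N n) d p)) * (cv (rh N n) F p - F p)) +
      (∫ p, (φ p * jj1 δ (cv (rh N n) d p)) * F p) =
      ∫ p, φ p * (jj1 δ (cv (rh N n) d p) * cv (rh N n) F p) := fun n => by
    have a := integral_add (iD n ((cv_integrable n hF).sub hF)) (iD n hF)
    simp only [Pi.sub_apply] at a
    rw [← a]
    congr 1; funext p
    ring
  simp only [e] at t4
  have fin := le_of_tendsto_of_tendsto t1.neg t4 ev
  simpa only [mul_assoc] using fin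

lemma kato {d F : PP N → ℝ} (hd : Integrable d) (hF : Integrable F) {U : Set (PP N)}
    (hU : IsOpen U)
    (WI : ∀ (φ : PP N → ℝ) (h : ContDiff ℝ ∞ φ), HasCompactSupport φ → (∀ p, 0 ≤ φ p) →
      tsupport φ ⊆ U → -(∫ p, d p * (HT.ofSmooth h).heat p) ≤ ∫ p, φ p * F p)
    {φ : PP N → ℝ} (h : HT φ) (hc : HasCompactSupport φ) (h0 : ∀ p, 0 ≤ φ p)
    (hs : tsupport φ ⊆ U) :
    -(∫ p, max (d p) 0 * h.heat p) ≤ ∫ p, φ p * (aa (d p) * F p) := by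
  obtain ⟨C, hC⟩ := (h.heat_cs hc).exists_bound_of_continuous h.heat_cont
  obtain ⟨C', hC'⟩ := hc.exists_bound_of_continuous h.c0
  have dp : ∀ n : ℕ, (0:ℝ) < 1 / ((n:ℝ)+1) := fun n => by positivity
  have t1 : Tendsto (fun n : ℕ => ∫ p, jj (1 / ((n:ℝ)+1)) (d p) * h.heat p) atTop
      (𝓝 (∫ p, max (d p) 0 * h.heat p)) := by
    refine tendsto_integral_of_dominated_convergence (fun p => |d p| * C) (fun n => ?_)
      (hd.abs.mul_const C) (fun n => Eventually.of_forall fun p => ?_)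
      (Eventually.of_forall fun p => (jj_tendsto _).mul_const _)
    · have cj : Continuous (jj (1 / ((n:ℝ)+1))) :=
        continuous_iff_continuousAt.2 fun s => (jj_deriv (dp n) s).continuousAt
      exact (cj.comp_aestronglyMeasurable hd.aestronglyMeasurable).mul h.heat_cont.aestronglyMeasurable
    · rw [Real.norm_eq_abs, abs_mul]
      exact mul_le_mul (jj_abs (dp n) _) (hC p) (abs_nonneg _) (abs_nonneg _)
  have t2 : Tendsto (fun n : ℕ => ∫ p, φ p * (jj1 (1 / ((n:ℝ)+1)) (d p) * F p)) atTop
      (𝓝 (∫ p, φ p * (aa (d p) * F p))) := by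
    refine tendsto_integral_of_dominated_convergence (fun p => C' * |F p|) (fun n => ?_)
      (hF.abs.const_mul C') (fun n => Eventually.of_forall fun p => ?_)
      (Eventually.of_forall fun p => ((jj1_tendsto _).mul_const _).const_mul _)
    · have cj : Continuous (jj1 (1 / ((n:ℝ)+1))) :=
        continuous_iff_continuousAt.2 fun s => (jj1_deriv (dp n) s).continuousAt
      exact h.c0.aestronglyMeasurable.mul
        ((cj.comp_aestronglyMeasurable hd.aestronglyMeasurable).mul hF.aestronglyMeasurable)
    · rw [Real.norm_eq_abs, abs_mul, abs_mul, abs_of_nonneg (jj1_mem (dp n) _).1]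
      refine mul_le_mul (hC' p) ?_ (mul_nonneg (jj1_mem (dp n) _).1 (abs_nonneg _))
        ((norm_nonneg _).trans (hC' p))
      exact mul_le_of_le_one_left (abs_nonneg _) (jj1_mem (dp n) _).2
  exact le_of_tendsto_of_tendsto' t1.neg t2 fun n => kato_delta hd hF hU WI h hc h0 hs (dp n)
end

section
open scoped ContDiff
variable {N : ℕ}

lemma prod_heat {χ : Euc N → ℝ} {θ : ℝ → ℝ} (hχ : ContDiff ℝ ∞ χ) (hθ : ContDiff ℝ ∞ θ) (p : PP N) :
    ((HT.ofSpace hχ).mul (HT.ofTime hθ)).heat p = χ p.1 * deriv θ p.2 + lap χ p.1 * θ p.2 := by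
  show (0 * θ p.2 + χ p.1 * deriv θ p.2) + ∑ i, ((fderiv ℝ (fun q => fderiv ℝ χ q
    (EuclideanSpace.single i 1)) p.1 (EuclideanSpace.single i 1) * θ p.2 +
    fderiv ℝ χ p.1 (EuclideanSpace.single i 1) * 0) +
    (fderiv ℝ χ p.1 (EuclideanSpace.single i 1) * 0 + χ p.1 * 0)) = _
  simp only [mul_zero, add_zero, zero_mul, zero_add]
  rw [← Finset.sum_mul]; rfl

lemma prod_tsupp {χ : Euc N → ℝ} {θ : ℝ → ℝ} {K : Set ℝ} (hK : IsClosed K) (hθ : ∀ t, t ∉ K → θ t = 0) :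
    tsupport (fun p : PP N => χ p.1 * θ p.2) ⊆ tsupport χ ×ˢ K := by
  refine closure_minimal (fun p hp => ?_) ((isClosed_tsupport χ).prod hK)
  have h1 : χ p.1 ≠ 0 := left_ne_zero_of_mul hp
  have h2 : θ p.2 ≠ 0 := right_ne_zero_of_mul hp
  refine ⟨subset_tsupport _ h1, ?_⟩
  by_contra h
  exact h2 (hθ _ h)

lemma prod_cs {χ : Euc N → ℝ} {θ : ℝ → ℝ} {K : Set ℝ} (hK : IsCompact K) (hθ : ∀ t, t ∉ K → θ t = 0)
    (hχ : HasCompactSupport χ) : HasCompactSupport (fun p : PP N => χ p.1 * θ p.2) :=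
  (hχ.isCompact.prod hK).of_isClosed_subset (isClosed_tsupport _) (prod_tsupp hK.isClosed hθ)

lemma lap_cont {χ : Euc N → ℝ} (hχ : ContDiff ℝ ∞ χ) : Continuous (lap χ) := by
  have := (HT.ofSpace hχ).lapl_cont.comp (by fun_prop : Continuous fun x : Euc N => ((x, 0) : PP N))
  exact this

lemma lap_zero_of_eventuallyEq {χ : Euc N → ℝ} {x : Euc N} {c : ℝ} (h : χ =ᶠ[𝓝 x] fun _ => c) :
    lap χ x = 0 := by
  unfold lap
  refine Finset.sum_eq_zero fun i _ => ?_
  have h1 : (fun y => fderiv ℝ χ y (EuclideanSpace.single i 1)) =ᶠ[𝓝 x] fun _ => (0:ℝ) := by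
    filter_upwards [h.eventuallyEq_nhds] with y hy
    rw [hy.fderiv_eq]; simp
  rw [h1.fderiv_eq]; simp

lemma lap_cs {χ : Euc N → ℝ} (hc : HasCompactSupport χ) : HasCompactSupport (lap χ) :=
  HasCompactSupport.intro hc fun x hx => by
    refine lap_zero_of_eventuallyEq (c := 0) ?_
    exact notMem_tsupport_iff_eventuallyEq.1 hx

lemma lap_scale {χ : Euc N → ℝ} (hχ : ContDiff ℝ ∞ χ) (c : ℝ) (x : Euc N) :
    lap (fun y => χ (c • y)) x = c ^ 2 * lap χ (c • x) := by
  unfold lap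
  rw [Finset.mul_sum]
  refine Finset.sum_congr rfl fun i _ => ?_
  set v : Euc N := EuclideanSpace.single i 1
  have h1 : (fun y => fderiv ℝ (fun y => χ (c • y)) y v) = fun y => c • (fun z => fderiv ℝ χ z v) (c • y) := by
    funext y
    rw [fderiv_comp_smul]; simp
  rw [h1]
  have sm : ContDiff ℝ ∞ (fun z => fderiv ℝ χ z v) :=
    (hχ.fderiv_right (m := ∞) (by simp)).clm_apply contDiff_const
  have dd : DifferentiableAt ℝ (fun y => (fun z => fderiv ℝ χ z v) (c • y)) x :=
    ((sm.comp (contDiff_const_smul c)).differentiable (by simp)) x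
  rw [fderiv_fun_const_smul dd, fderiv_comp_smul (f := fun z => fderiv ℝ χ z v)]
  simp; ring

lemma cutoffs (N : ℕ) : ∃ (χ : ℕ → Euc N → ℝ) (C : ℝ), (∀ n, ContDiff ℝ ∞ (χ n)) ∧
    (∀ n, HasCompactSupport (χ n)) ∧ (∀ n x, 0 ≤ χ n x) ∧ (∀ n x, χ n x ≤ 1) ∧
    (∀ x, ∀ᶠ n in atTop, χ n x = 1) ∧ (∀ n x, |lap (χ n) x| ≤ C) ∧
    (∀ x, ∀ᶠ n in atTop, lap (χ n) x = 0) := by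
  let b : ContDiffBump (0 : Euc N) := ⟨1, 2, by norm_num, by norm_num⟩
  have bs : ContDiff ℝ ∞ b := b.contDiff
  have one : ∀ x : Euc N, ∀ᶠ n : ℕ in atTop, (fun y => b ((1 / ((n:ℝ)+1)) • y)) =ᶠ[𝓝 x] fun _ => (1:ℝ) := by
    intro x
    have h := tendsto_one_div_add_atTop_nhds_zero_nat (𝕜 := ℝ)
    have h2 : Tendsto (fun n : ℕ => ‖(1 / ((n:ℝ)+1)) • x‖) atTop (𝓝 0) := by
      have := (h.smul_const x).norm; simpa using this
    filter_upwards [h2.eventually (gt_mem_nhds one_pos)] with n hn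
    have : Continuous fun y : Euc N => ‖(1 / ((n:ℝ)+1)) • y‖ := by fun_prop
    filter_upwards [this.continuousAt.eventually (gt_mem_nhds hn)] with y hy
    refine b.one_of_mem_closedBall ?_
    simpa using hy.le
  obtain ⟨C, hC⟩ := (lap_cs b.hasCompactSupport).exists_bound_of_continuous (lap_cont bs)
  refine ⟨fun n x => b ((1 / ((n:ℝ)+1)) • x), C, fun n => bs.comp (contDiff_const_smul _),
    fun n => b.hasCompactSupport.comp_smul (by positivity), fun n x => b.nonneg, fun n x => b.le_one, ?_, ?_, ?_⟩
  · intro x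
    filter_upwards [one x] with n hn using hn.eq_of_nhds
  · intro n x
    rw [lap_scale bs, abs_mul]
    have h1 : |(1 / ((n:ℝ)+1)) ^ 2| ≤ 1 := by
      rw [abs_of_nonneg (by positivity)]
      refine pow_le_one₀ (by positivity) ?_
      rw [div_le_one (by positivity)]
      linarith [(Nat.cast_nonneg n : (0:ℝ) ≤ n)]
    have h2 : |lap b ((1 / ((n:ℝ)+1)) • x)| ≤ C := hC _
    nlinarith [abs_nonneg (lap b ((1 / ((n:ℝ)+1)) • x))]
  · intro x
    filter_upwards [one x] with n hn using lap_zero_of_eventuallyEq hn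

def lc (t : ℝ) : ℝ := Real.smoothTransition (t + 2)
lemma lc_smooth : ContDiff ℝ ∞ lc := Real.smoothTransition.contDiff.comp (contDiff_id.add contDiff_const)
lemma lc_one {t : ℝ} (h : -1 ≤ t) : lc t = 1 := Real.smoothTransition.one_of_one_le (by linarith)
lemma lc_zero {t : ℝ} (h : t ≤ -2) : lc t = 0 := Real.smoothTransition.zero_of_nonpos (by linarith)
lemma lc_nonneg (t : ℝ) : 0 ≤ lc t := Real.smoothTransition.nonneg _
lemma lc_le (t : ℝ) : lc t ≤ 1 := Real.smoothTransition.le_one _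

def ec (T' t : ℝ) : ℝ := expNegInvGlue (T' - t) * Real.exp (-t) * lc t

lemma ec_smooth (T' : ℝ) : ContDiff ℝ ∞ (ec T') :=
  ((expNegInvGlue.contDiff.comp (contDiff_const.sub contDiff_id)).mul
    (Real.contDiff_exp.comp contDiff_neg)).mul lc_smooth

lemma ec_nonneg (T' t : ℝ) : 0 ≤ ec T' t :=
  mul_nonneg (mul_nonneg (expNegInvGlue.nonneg _) (Real.exp_nonneg _)) (lc_nonneg _)

lemma ec_zero (T' t : ℝ) (h : t ∉ Icc (-2) T') : ec T' t = 0 := by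
  unfold ec
  rcases lt_or_ge t (-2) with h1 | h1
  · rw [lc_zero h1.le, mul_zero]
  · rw [expNegInvGlue.zero_of_nonpos]
    · simp
    · by_contra h2; exact h ⟨h1, by linarith⟩

lemma ec_deriv (T' : ℝ) {t : ℝ} (ht : 0 < t) :
    deriv (ec T') t ≤ - (expNegInvGlue (T' - t) * Real.exp (-t)) := by
  have hl : HasDerivAt lc 0 t := by
    have : lc =ᶠ[𝓝 t] fun _ => 1 := by
      filter_upwards [lt_mem_nhds ht] with s hs using lc_one (by linarith)
    exact (hasDerivAt_const t (1:ℝ)).congr_of_eventuallyEq this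
  have he : HasDerivAt (fun s => Real.exp (-s)) (-Real.exp (-t)) t := by
    simpa using (hasDerivAt_neg t).exp
  have sm : ContDiff ℝ ∞ (fun s => expNegInvGlue (T' - s)) :=
    expNegInvGlue.contDiff.comp (contDiff_const.sub contDiff_id)
  have hg := ((sm.differentiable (by simp)) t).hasDerivAt
  have anti : Antitone (fun s => expNegInvGlue (T' - s)) := fun s r h =>
    expNegInvGlue.monotone (by linarith)
  have h0 : deriv (fun s => expNegInvGlue (T' - s)) t ≤ 0 := anti.deriv_nonpos
  have := ((hg.mul he).mul hl).deriv
  have e : deriv (ec T') t = _ := this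
  rw [e, lc_one (by linarith)]
  simp only [Pi.mul_apply]
  nlinarith [Real.exp_pos (-t)]

lemma comparison {T : ℝ} {d F : PP N → ℝ} (hd : Integrable d) (hF : Integrable F)
    (hz : ∀ p : PP N, ¬ (0 < p.2 ∧ p.2 < T) → d p = 0)
    (WI : ∀ (φ : PP N → ℝ) (h : ContDiff ℝ ∞ φ), HasCompactSupport φ → (∀ p, 0 ≤ φ p) →
      tsupport φ ⊆ {p : PP N | p.2 < T} → -(∫ p, d p * (HT.ofSmooth h).heat p) ≤ ∫ p, φ p * F p)
    (hs : ∀ p, aa (d p) * F p ≤ 0) : ∀ᵐ p, d p ≤ 0 := by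
  obtain ⟨χ, C, χs, χc, χ0, χ1, χt, χb, χl⟩ := cutoffs N
  have hU : IsOpen {p : PP N | p.2 < T} := isOpen_lt continuous_snd continuous_const
  have im : Integrable fun p => max (d p) 0 := hd.pos_part
  have step : ∀ k : ℕ, ∀ᵐ p : PP N, p.2 < T - 1 / ((k:ℝ)+1) → d p ≤ 0 := by
    intro k
    set T' := T - 1 / ((k:ℝ)+1) with hT'
    have hTT : T' < T := by rw [hT']; have : (0:ℝ) < 1 / ((k:ℝ)+1) := by positivity
                            linarith
    have ecs : HasCompactSupport (ec T') := HasCompactSupport.intro isCompact_Icc (ec_zero T')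
    obtain ⟨A, hA⟩ := ecs.exists_bound_of_continuous (ec_smooth T').continuous
    obtain ⟨B, hB⟩ := ecs.deriv.exists_bound_of_continuous ((ec_smooth T').continuous_deriv (by simp))
    have ineq : ∀ n, 0 ≤ ∫ p : PP N, max (d p) 0 * (χ n p.1 * deriv (ec T') p.2 + lap (χ n) p.1 * ec T' p.2) := by
      intro n
      have k1 := kato hd hF hU WI ((HT.ofSpace (χs n)).mul (HT.ofTime (ec_smooth T')))
        (prod_cs isCompact_Icc (ec_zero T') (χc n)) (fun p => mul_nonneg (χ0 n _) (ec_nonneg _ _))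
        (fun p hp => by
          have := (prod_tsupp isClosed_Icc (ec_zero T') hp).2.2
          exact lt_of_le_of_lt this hTT)
      simp only [prod_heat] at k1
      have k2 : ∫ p : PP N, (χ n p.1 * ec T' p.2) * (aa (d p) * F p) ≤ 0 :=
        integral_nonpos fun p => mul_nonpos_of_nonneg_of_nonpos
          (mul_nonneg (χ0 n _) (ec_nonneg _ _)) (hs p)
      linarith
    have lim : Tendsto (fun n => ∫ p : PP N, max (d p) 0 * (χ n p.1 * deriv (ec T') p.2 + lap (χ n) p.1 * ec T' p.2))
        atTop (𝓝 (∫ p : PP N, max (d p) 0 * deriv (ec T') p.2)) := by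
      refine tendsto_integral_of_dominated_convergence (fun p => max (d p) 0 * (B + C * A)) (fun n => ?_)
        (im.mul_const _) (fun n => Eventually.of_forall fun p => ?_) (Eventually.of_forall fun p => ?_)
      · refine im.aestronglyMeasurable.mul (Continuous.aestronglyMeasurable ?_)
        exact (((χs n).continuous.comp continuous_fst).mul
          (((ec_smooth T').continuous_deriv (by simp)).comp continuous_snd)).add
          (((lap_cont (χs n)).comp continuous_fst).mul ((ec_smooth T').continuous.comp continuous_snd))
      · rw [norm_mul, Real.norm_of_nonneg (le_max_right _ _)]
        refine mul_le_mul_of_nonneg_left ?_ (le_max_right _ _)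
        refine (norm_add_le _ _).trans (add_le_add ?_ ?_)
        · rw [norm_mul, Real.norm_of_nonneg (χ0 n _)]
          exact (mul_le_of_le_one_left (norm_nonneg _) (χ1 n _)).trans (hB _)
        · rw [norm_mul]
          exact mul_le_mul (χb n _) (hA _) (norm_nonneg _) ((abs_nonneg _).trans (χb n p.1))
      · refine tendsto_const_nhds.congr' ?_
        filter_upwards [χt p.1, χl p.1] with n h1 h2
        rw [h1, h2]; ring
    have fin : 0 ≤ ∫ p : PP N, max (d p) 0 * deriv (ec T') p.2 := ge_of_tendsto' lim ineq
    have ii : Integrable fun p : PP N => max (d p) 0 * deriv (ec T') p.2 :=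
      im.mul_bdd (c := B) (((ec_smooth T').continuous_deriv (by simp)).comp continuous_snd).aestronglyMeasurable
        (Eventually.of_forall fun p => hB _)
    have sgn : ∀ p : PP N, max (d p) 0 * deriv (ec T') p.2 ≤ 0 := by
      intro p
      by_cases h : 0 < p.2 ∧ p.2 < T
      · refine mul_nonpos_of_nonneg_of_nonpos (le_max_right _ _) ((ec_deriv T' h.1).trans ?_)
        have := mul_nonneg (expNegInvGlue.nonneg (T' - p.2)) (Real.exp_nonneg (-p.2))
        linarith
      · rw [hz p h]; simp
    have z0 : ∫ p : PP N, -(max (d p) 0 * deriv (ec T') p.2) = 0 := by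
      rw [integral_neg]
      have := integral_nonpos (μ := (volume : Measure (PP N))) sgn
      linarith
    have z1 := (integral_eq_zero_iff_of_nonneg (fun p => neg_nonneg.2 (sgn p)) ii.neg).1 z0
    filter_upwards [z1] with p hp hpT
    by_contra hcon
    push Not at hcon
    have h : 0 < p.2 ∧ p.2 < T := by
      by_contra h; rw [hz p h] at hcon; exact lt_irrefl _ hcon
    have hp' : -(max (d p) 0 * deriv (ec T') p.2) = 0 := hp
    have h1 := ec_deriv T' h.1
    have h2 : 0 < expNegInvGlue (T' - p.2) * Real.exp (-p.2) :=
      mul_pos (expNegInvGlue.pos_of_pos (by linarith)) (Real.exp_pos _)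
    rw [max_eq_left hcon.le] at hp'
    nlinarith
  rw [← ae_all_iff] at step
  filter_upwards [step] with p hp
  by_cases h : p.2 < T
  · have := (tendsto_one_div_add_atTop_nhds_zero_nat (𝕜 := ℝ)).eventually (gt_mem_nhds (sub_pos.2 h))
    obtain ⟨k, hk⟩ := this.exists
    exact hp k (by linarith)
  · rw [hz p (fun h' => h h'.2)]

lemma Sol.wi {T : ℝ} {κ : Measure (Euc N)} {u f v k : PP N → ℝ} (hu : Sol T κ u f) (hv : Sol T κ v k) :
    ∀ (φ : PP N → ℝ) (h : ContDiff ℝ ∞ φ), HasCompactSupport φ → (∀ p, 0 ≤ φ p) →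
      tsupport φ ⊆ {p : PP N | p.2 < T} →
      -(∫ p, (u p - v p) * (HT.ofSmooth h).heat p) ≤ ∫ p, φ p * (k p - f p) := by
  intro φ h hc h0 hs
  have h1 := hu.weak φ (HT.ofSmooth h) hc hs
  have h2 := hv.weak φ (HT.ofSmooth h) hc hs
  have hh := HT.ofSmooth h
  have c := (HT.ofSmooth h).heat_cont
  have cc := (HT.ofSmooth h).heat_cs hc
  have e1 : ∫ p, (u p - v p) * (HT.ofSmooth h).heat p =
      (∫ p, u p * (HT.ofSmooth h).heat p) - ∫ p, v p * (HT.ofSmooth h).heat p := by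
    rw [← integral_sub (HT.int_mul c cc hu.int) (HT.int_mul c cc hv.int)]
    simp only [sub_mul]
  have e2 : ∫ p, φ p * (k p - f p) = (∫ p, φ p * k p) - ∫ p, φ p * f p := by
    have a1 := HT.int_mul h.continuous hc hv.fint
    have a2 := HT.int_mul h.continuous hc hu.fint
    have a3 := integral_sub a1 a2
    simp only [mul_comm _ (φ _)] at a3
    rw [← a3]
    simp only [mul_sub]
  rw [e1, e2]; linarith

lemma Sol.le {T : ℝ} {κ : Measure (Euc N)} {u f v k : PP N → ℝ} (hu : Sol T κ u f) (hv : Sol T κ v k)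
    (hs : ∀ p, aa (u p - v p) * (k p - f p) ≤ 0) : ∀ᵐ p, u p ≤ v p := by
  have := comparison (T := T) (hu.int.sub hv.int) (hv.fint.sub hu.fint) (fun p hp => by
    simp [hu.zero p hp, hv.zero p hp]) (hu.wi hv) hs
  filter_upwards [this] with p hp
  have : u p - v p ≤ 0 := hp
  linarith
end

section
open scoped ContDiff
variable {N : ℕ}

def gn (g : ℝ → ℝ) (n : ℕ) (s : ℝ) : ℝ := ⨅ r : ℝ, (g r + n * |s - r|)


lemma g_nonneg {g : ℝ → ℝ} (hg : GoodG g) (s : ℝ) : 0 ≤ g s := by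
  have h1 := hg.2.2 (min s 0) (min_le_right _ _)
  rw [← h1]; exact hg.2.1 (min_le_left _ _)

lemma gn_term {g : ℝ → ℝ} (hg : GoodG g) (n : ℕ) (s r : ℝ) : 0 ≤ g r + n * |s - r| :=
  add_nonneg (g_nonneg hg r) (mul_nonneg (Nat.cast_nonneg n) (abs_nonneg _))

lemma gn_bdd {g : ℝ → ℝ} (hg : GoodG g) (n : ℕ) (s : ℝ) : BddBelow (range fun r : ℝ => g r + n * |s - r|) :=
  ⟨0, by rintro _ ⟨r, rfl⟩; exact gn_term hg n s r⟩

lemma gn_le' {g : ℝ → ℝ} (hg : GoodG g) (n : ℕ) (s r : ℝ) : gn g n s ≤ g r + n * |s - r| := ciInf_le (gn_bdd hg n s) r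

lemma gn_nonneg {g : ℝ → ℝ} (hg : GoodG g) (n : ℕ) (s : ℝ) : 0 ≤ gn g n s := le_ciInf fun r => gn_term hg n s r

lemma gn_le {g : ℝ → ℝ} (hg : GoodG g) (n : ℕ) (s : ℝ) : gn g n s ≤ g s := by simpa using gn_le' hg n s s

lemma gn_zero {g : ℝ → ℝ} (hg : GoodG g) (n : ℕ) {s : ℝ} (h : s ≤ 0) : gn g n s = 0 :=
  le_antisymm ((gn_le hg n s).trans_eq (hg.2.2 s h)) (gn_nonneg hg n s)

lemma gn_mono {g : ℝ → ℝ} (hg : GoodG g) (n : ℕ) : Monotone (gn g n) := by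
  intro s s' h
  refine le_ciInf fun r => ?_
  have := gn_le' hg n s (r - (s' - s))
  have h2 : g (r - (s' - s)) ≤ g r := hg.2.1 (by linarith)
  rw [show s - (r - (s' - s)) = s' - r by ring] at this
  linarith

lemma gn_lip {g : ℝ → ℝ} (hg : GoodG g) (n : ℕ) {s s' : ℝ} (h : s ≤ s') : n * s - gn g n s ≤ n * s' - gn g n s' := by
  have : gn g n s' - n * (s' - s) ≤ gn g n s := by
    refine le_ciInf fun r => ?_
    have h1 := gn_le' hg n s' r
    have h2 : |s' - r| ≤ |s - r| + (s' - s) := by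
      have := abs_add_le (s - r) (s' - s)
      rw [abs_of_nonneg (sub_nonneg.2 h)] at this
      rwa [show s - r + (s' - s) = s' - r by ring] at this
    have := mul_le_mul_of_nonneg_left h2 (Nat.cast_nonneg (α := ℝ) n)
    linarith
  linarith

lemma gn_succ {g : ℝ → ℝ} (hg : GoodG g) (n : ℕ) (s : ℝ) : gn g n s ≤ gn g (n+1) s := by
  refine le_ciInf fun r => (gn_le' hg n s r).trans ?_
  push_cast
  nlinarith [abs_nonneg (s - r)]

lemma gn_cont {g : ℝ → ℝ} (hg : GoodG g) (n : ℕ) : Continuous (gn g n) := by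
  have : LipschitzWith n (gn g n) := by
    refine LipschitzWith.of_le_add_mul _ fun x y => ?_
    rcases le_total x y with h | h
    · have := gn_mono hg n h
      have h2 : 0 ≤ ((n:ℝ≥0):ℝ) * dist x y := by positivity
      linarith
    · have := gn_lip hg n h
      rw [Real.dist_eq, abs_of_nonneg (sub_nonneg.2 h)]
      push_cast
      linarith
  exact this.continuous

lemma gn_tendsto {g : ℝ → ℝ} (hg : GoodG g) (s : ℝ) : Tendsto (fun n => gn g n s) atTop (𝓝 (g s)) := by
  rw [Metric.tendsto_atTop]
  intro ε hε
  obtain ⟨δ, hδ, h⟩ := Metric.continuousAt_iff.1 hg.1.continuousAt ε hε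
  obtain ⟨n0, hn0⟩ := exists_nat_gt (g s / (δ/2))
  refine ⟨n0, fun n hn => ?_⟩
  have hs : g s - ε < g (s - δ/2) := by
    have := h (x := s - δ/2) (by rw [Real.dist_eq]; rw [show s - δ/2 - s = -(δ/2) by ring, abs_neg, abs_of_pos (by linarith)]; linarith)
    rw [Real.dist_eq, abs_lt] at this
    linarith [this.1]
  have low : min (g s) (g (s - δ/2)) ≤ gn g n s := by
    refine le_ciInf fun r => ?_
    rcases le_total (s - δ/2) r with h1 | h1
    · refine (min_le_right _ _).trans ?_
      have := hg.2.1 h1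
      have : 0 ≤ n * |s - r| := by positivity
      linarith
    · refine (min_le_left _ _).trans ?_
      rw [div_lt_iff₀ (by linarith)] at hn0
      have h2 : δ/2 ≤ |s - r| := le_trans (by linarith) (le_abs_self _)
      have h3 : (n0:ℝ) ≤ n := by exact_mod_cast hn
      have h4 : n0 * (δ/2) ≤ n * |s - r| := by gcongr
      linarith [g_nonneg hg r]
  rw [Real.dist_eq, abs_lt]
  have := gn_le hg n s
  refine ⟨?_, by linarith⟩
  rcases le_total (g s) (g (s - δ/2)) with h1 | h1
  · rw [min_eq_left h1] at low; linarith
  · rw [min_eq_right h1] at low; linarith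


open Classical in
def bn (Ω : Set (Euc N)) (g : ℝ → ℝ) (n : ℕ) (p : PP N) (s : ℝ) : ℝ :=
  if p.1 ∈ Ω then gn g n s else n * max s 0

lemma bn_nonneg {g : ℝ → ℝ} (hg : GoodG g) (Ω : Set (Euc N)) (n : ℕ) (p : PP N) (s : ℝ) : 0 ≤ bn Ω g n p s := by
  unfold bn; split_ifs
  · exact gn_nonneg hg n s
  · positivity

lemma bn_zero {g : ℝ → ℝ} (hg : GoodG g) (Ω : Set (Euc N)) (n : ℕ) (p : PP N) : bn Ω g n p 0 = 0 := by
  unfold bn; split_ifs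
  · exact gn_zero hg n le_rfl
  · simp

lemma bn_mono {g : ℝ → ℝ} (hg : GoodG g) (Ω : Set (Euc N)) (n : ℕ) (p : PP N) : Monotone (bn Ω g n p) := by
  intro s s' h
  unfold bn; split_ifs
  · exact gn_mono hg n h
  · gcongr

lemma bn_succ {g : ℝ → ℝ} (hg : GoodG g) (Ω : Set (Euc N)) (n : ℕ) (p : PP N) (s : ℝ) :
    bn Ω g n p s ≤ bn Ω g (n+1) p s := by
  unfold bn; split_ifs
  · exact gn_succ hg n s
  · push_cast; nlinarith [le_max_right s 0]

lemma bn_cont {g : ℝ → ℝ} (hg : GoodG g) (Ω : Set (Euc N)) (n : ℕ) (p : PP N) : Continuous (bn Ω g n p) := by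
  unfold bn; split_ifs
  · exact gn_cont hg n
  · fun_prop

lemma bn_lip {g : ℝ → ℝ} (hg : GoodG g) (Ω : Set (Euc N)) (n : ℕ) (p : PP N) (s s' : ℝ) (h : s ≤ s') :
    n * s - bn Ω g n p s ≤ n * s' - bn Ω g n p s' := by
  unfold bn; split_ifs
  · exact gn_lip hg n h
  · have : max s' 0 ≤ max s 0 + (s' - s) := by
      rcases max_cases s 0 with ⟨h1, _⟩ | ⟨h1, _⟩ <;> rcases max_cases s' 0 with ⟨h2, _⟩ | ⟨h2, _⟩ <;> linarith
    have := mul_le_mul_of_nonneg_left this (Nat.cast_nonneg (α := ℝ) n)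
    linarith

lemma bn_meas {g : ℝ → ℝ} (hg : GoodG g) {Ω : Set (Euc N)} (hΩ : IsOpen Ω) (n : ℕ) :
    Measurable (Function.uncurry (bn Ω g n)) := by
  have : Function.uncurry (bn Ω g n) = fun z : PP N × ℝ => bn Ω g n z.1 z.2 := rfl
  rw [this]
  unfold bn
  refine Measurable.ite ?_ ((gn_cont hg n).measurable.comp measurable_snd) ?_
  · exact (measurable_fst.comp measurable_fst) hΩ.measurableSet
  · exact ((measurable_snd.max measurable_const).const_mul _)

lemma aa_nonneg (s : ℝ) : 0 ≤ aa s := by unfold aa; split_ifs <;> norm_num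
lemma aa_le (s : ℝ) : aa s ≤ 1 := by unfold aa; split_ifs <;> norm_num
lemma aa_neg {s : ℝ} (h : s < 0) : aa s = 0 := by
  unfold aa; rw [if_neg h.not_gt, if_neg h.ne]
lemma aa_pos {s : ℝ} (h : 0 < s) : aa s = 1 := by
  unfold aa; rw [if_pos h]

lemma approx {g : ℝ → ℝ} (hg : GoodG g) {Ω : Set (Euc N)} (hΩ : IsOpen Ω) {T : ℝ} (hT : 0 < T)
    (κ : Measure (Euc N)) [IsFiniteMeasure κ] :
    ∃ u : ℕ → PP N → ℝ, (∀ n, Sol T κ (u n) (fun p => bn Ω g n p (u n p))) ∧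
      (∀ n, ∀ᵐ p, u (n+1) p ≤ u n p) ∧ (∀ n, ∀ᵐ p, u n p ≤ VV T κ p) := by
  have ex : ∀ n : ℕ, ∃ u, Sol T κ u (fun p => bn Ω g n p (u p)) := fun n =>
    solve (L := n) (Nat.cast_nonneg n) hT κ (bn Ω g n) (bn_meas hg hΩ n) (bn_nonneg hg Ω n)
      (bn_zero hg Ω n) (bn_cont hg Ω n) (bn_lip hg Ω n)
  choose u hu using ex
  refine ⟨u, hu, fun n => ?_, fun n => ?_⟩
  · refine (hu (n+1)).le (hu n) fun p => ?_
    rcases lt_or_ge (u (n+1) p - u n p) 0 with h | h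
    · rw [aa_neg h, zero_mul]
    · refine mul_nonpos_of_nonneg_of_nonpos (aa_nonneg _) ?_
      have h1 := bn_mono hg Ω n p (sub_nonneg.1 h)
      have h2 := bn_succ hg Ω n p (u (n+1) p)
      linarith
  · refine (hu n).le (VV_sol T κ) fun p => ?_
    refine mul_nonpos_of_nonneg_of_nonpos (aa_nonneg _) ?_
    have := bn_nonneg hg Ω n p (u n p)
    linarith
end

section
open scoped ContDiff
variable {N : ℕ}

lemma rho_cont (Ω : Set (Euc N)) : Continuous (rho Ω) := Metric.continuous_infDist_pt _

lemma rho_nonneg (Ω : Set (Euc N)) (x : Euc N) : 0 ≤ rho Ω x := Metric.infDist_nonneg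

lemma rho_pos_iff {Ω : Set (Euc N)} (ho : IsOpen Ω) (hne : Ωᶜ.Nonempty) (x : Euc N) :
    0 < rho Ω x ↔ x ∈ Ω := by
  have h := ho.isClosed_compl.notMem_iff_infDist_pos hne (x := x)
  rw [rho, ← h]; simp

lemma rho_gap {Ω : Set (Euc N)} (ho : IsOpen Ω) (hne : Ωᶜ.Nonempty) {K : Set (Euc N)}
    (hK : IsCompact K) (hKΩ : K ⊆ Ω) : ∃ c > 0, ∀ x ∈ K, c < rho Ω x := by
  rcases K.eq_empty_or_nonempty with rfl | hn
  · exact ⟨1, one_pos, by simp⟩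
  · obtain ⟨x, hx, hm⟩ := hK.exists_isMinOn hn (rho_cont Ω).continuousOn
    have h0 := (rho_pos_iff ho hne x).2 (hKΩ hx)
    refine ⟨rho Ω x / 2, by linarith, fun y hy => ?_⟩
    have : rho Ω x ≤ rho Ω y := hm hy
    linarith

lemma meas_QT {Ω : Set (Euc N)} (ho : IsOpen Ω) (T : ℝ) : MeasurableSet (QT Ω T) :=
  ho.measurableSet.prod measurableSet_Ioo

lemma gu_int {Ω : Set (Euc N)} (ho : IsOpen Ω) (hne : Ωᶜ.Nonempty) {T : ℝ} {g : ℝ → ℝ} (hg : GoodG g)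
    {lam : Measure (Euc N)} {u : PP N → ℝ} (hw : WeakSol Ω T g lam u) {c : ℝ} (hc0 : 0 < c) :
    Integrable ({p : PP N | c < rho Ω p.1 ∧ 0 < p.2 ∧ p.2 < T}.indicator (fun p => g (u p))) := by
  set S : Set (PP N) := {p : PP N | c < rho Ω p.1 ∧ 0 < p.2 ∧ p.2 < T} with hS
  have mS : MeasurableSet S := by
    have h1 : IsOpen {p : PP N | c < rho Ω p.1} :=
      isOpen_lt continuous_const ((rho_cont Ω).comp continuous_fst)
    have h2 : IsOpen {p : PP N | 0 < p.2} := isOpen_lt continuous_const continuous_snd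
    have h3 : IsOpen {p : PP N | p.2 < T} := isOpen_lt continuous_snd continuous_const
    exact (h1.inter (h2.inter h3)).measurableSet
  have sub : S ⊆ QT Ω T := fun p hp =>
    ⟨(rho_pos_iff ho hne _).1 (hc0.trans hp.1), hp.2⟩
  rw [integrable_indicator_iff mS]
  have i1 : IntegrableOn (fun p => g (u p) * rho Ω p.1) S := hw.2.1.mono_set sub
  have i2 := i1.const_mul c⁻¹
  refine Integrable.mono' i2 (hg.1.comp_aestronglyMeasurable (hw.1.mono_set sub).aestronglyMeasurable) ?_
  refine (ae_restrict_iff' mS).2 (Eventually.of_forall fun p hp => ?_)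
  rw [Real.norm_of_nonneg (g_nonneg hg _)]
  have h1 : c < rho Ω p.1 := hp.1
  rw [← div_eq_inv_mul, le_div_iff₀ hc0]
  exact mul_le_mul_of_nonneg_left h1.le (g_nonneg hg _)

/-- the weak formulation of `WeakSol` for smooth test functions with compact support in a set
where the distance to the complement is bounded below -/
lemma weak_loc {Ω : Set (Euc N)} (ho : IsOpen Ω) (hne : Ωᶜ.Nonempty) {T : ℝ} {g : ℝ → ℝ} (hg : GoodG g)
    {lam : Measure (Euc N)} {u : PP N → ℝ} (hw : WeakSol Ω T g lam u) {c : ℝ} (hc0 : 0 < c)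
    {φ : PP N → ℝ} (h : ContDiff ℝ ∞ φ) (hc : HasCompactSupport φ)
    (hs : tsupport φ ⊆ {p : PP N | c < rho Ω p.1 ∧ p.2 < T}) :
    -(∫ p, (QT Ω T).indicator u p * (HT.ofSmooth h).heat p) +
      (∫ p, φ p * ({p : PP N | c < rho Ω p.1 ∧ 0 < p.2 ∧ p.2 < T}.indicator (fun p => g (u p)) p)) =
      ∫ x, φ (x, 0) ∂lam := by
  set S : Set (PP N) := {p : PP N | c < rho Ω p.1 ∧ 0 < p.2 ∧ p.2 < T} with hS
  have c21 : C21 (fun x t => φ (x, t)) := HT.smooth_C21 h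
  have inΩ : ∀ p ∈ tsupport φ, p.1 ∈ Ω := fun p hp => (rho_pos_iff ho hne _).1 (hc0.trans (hs hp).1)
  have tz : TestZero Ω T (fun x t => φ (x, t)) := by
    refine ⟨c21, fun x hx t _ => ?_, fun x _ => ?_⟩
    · refine image_eq_zero_of_notMem_tsupport fun hp => ?_
      have h1 : x ∈ Ω := inΩ _ hp
      have h2 := hx.2
      rw [ho.interior_eq] at h2
      exact h2 h1
    · refine image_eq_zero_of_notMem_tsupport fun hp => ?_
      exact lt_irrefl _ (hs hp).2
  have w := hw.2.2 _ tz
  have hh : ∀ p : PP N, (HT.ofSmooth h).heat p = deriv (fun t => φ (p.1, t)) p.2 +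
      lap (fun y => φ (y, p.2)) p.1 := fun p => congrFun (HT.heat_unique (HT.ofSmooth h) (HT.ofC21 c21)) p
  rw [← w]
  have e1 : ∀ p, (QT Ω T).indicator (fun p : PP N => -(u p) * deriv (fun t => φ (p.1, t)) p.2 -
      u p * lap (fun y => φ (y, p.2)) p.1 + φ (p.1, p.2) * g (u p)) p =
      -((QT Ω T).indicator u p * (HT.ofSmooth h).heat p) + φ p * S.indicator (fun p => g (u p)) p := by
    intro p
    rw [hh]
    by_cases hp : p ∈ tsupport φ
    · by_cases hq : p ∈ QT Ω T
      · have : p ∈ S := ⟨(hs hp).1, hq.2⟩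
        rw [indicator_of_mem hq, indicator_of_mem hq, indicator_of_mem this]; ring
      · have : p ∉ S := fun h' => hq ⟨inΩ _ hp, h'.2⟩
        rw [indicator_of_notMem hq, indicator_of_notMem hq, indicator_of_notMem this]; ring
    · have a1 := (HT.ofSmooth h).heat_zero hp
      rw [hh] at a1
      have a2 : φ (p.1, p.2) = 0 := image_eq_zero_of_notMem_tsupport hp
      have a3 : φ p = 0 := a2
      rw [a1, a3]
      by_cases hq : p ∈ QT Ω T
      · rw [indicator_of_mem hq, a2]
        have : -u p * deriv (fun t => φ (p.1, t)) p.2 - u p * lap (fun y => φ (y, p.2)) p.1 =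
          - u p * (deriv (fun t => φ (p.1, t)) p.2 + lap (fun y => φ (y, p.2)) p.1) := by ring
        rw [this, a1]; ring
      · rw [indicator_of_notMem hq]; ring
  rw [← integral_indicator (meas_QT ho T)]
  have e2 := integral_congr_ae (μ := (volume : Measure (PP N))) (Eventually.of_forall e1)
  refine Eq.trans ?_ e2.symm
  have iu : Integrable ((QT Ω T).indicator u) := (integrable_indicator_iff (meas_QT ho T)).2 hw.1
  have i1 := HT.int_mul (HT.ofSmooth h).heat_cont ((HT.ofSmooth h).heat_cs hc) iu
  have i2 := HT.int_mul h.continuous hc (gu_int ho hne hg hw hc0)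
  simp only [mul_comm _ (φ _)] at i2
  have a := integral_add i1.neg i2
  simp only [Pi.neg_apply, integral_neg] at a
  exact a.symm

lemma slice_cs' {φ : PP N → ℝ} (hc : HasCompactSupport φ) : 
    HasCompactSupport (fun x : Euc N => φ (x, 0)) := by
  refine HasCompactSupport.of_support_subset_isCompact (hc.isCompact.image continuous_fst) fun x hx => ?_
  exact ⟨(x, 0), subset_tsupport _ hx, rfl⟩

lemma slice_supp {φ : PP N → ℝ} {W : Set (Euc N)} (hs : tsupport φ ⊆ {p : PP N | p.1 ∈ W}) :
    tsupport (fun x : Euc N => φ (x, 0)) ⊆ W := by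
  intro x hx
  have := tsupport_comp_subset_preimage φ (f := fun x : Euc N => ((x, 0) : PP N)) (by fun_prop) hx
  exact hs this

lemma meas_le {Ω : Set (Euc N)} {lam κ : Measure (Euc N)} (hl : MemM1 Ω lam) (hle : κ ≤ lam)
    {f : Euc N → ℝ} (c : Continuous f) (hc : HasCompactSupport f) (hs : tsupport f ⊆ Ω)
    (h0 : ∀ x, 0 ≤ f x) : ∫ x, f x ∂κ ≤ ∫ x, f x ∂lam := by
  refine integral_mono_measure hle (Eventually.of_forall h0) ?_
  have : IsFiniteMeasure (lam.restrict (tsupport f)) := ⟨by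
    rw [Measure.restrict_apply_univ]; exact hl.2.1 _ hs hc⟩
  obtain ⟨C, hC⟩ := hc.exists_bound_of_continuous c
  have i : IntegrableOn f (tsupport f) lam :=
    Integrable.of_bound c.aestronglyMeasurable C (Eventually.of_forall hC)
  exact (integrableOn_iff_integrable_of_support_subset (subset_tsupport f)).1 i
end

section
open scoped ContDiff
variable {N : ℕ}

/-- time cutoff near zero -/
def at0 (τ t : ℝ) : ℝ := Real.smoothTransition (2 - t / τ) * lc t

lemma at0_smooth (τ : ℝ) : ContDiff ℝ ∞ (at0 τ) := by
  unfold at0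
  exact (Real.smoothTransition.contDiff.comp (by fun_prop)).mul lc_smooth

lemma at0_nonneg (τ t : ℝ) : 0 ≤ at0 τ t := mul_nonneg (Real.smoothTransition.nonneg _) (lc_nonneg _)
lemma at0_le (τ t : ℝ) : at0 τ t ≤ 1 :=
  mul_le_one₀ (Real.smoothTransition.le_one _) (lc_nonneg _) (lc_le _)

lemma at0_one {τ t : ℝ} (hτ : 0 < τ) (h0 : 0 ≤ t) (h : t ≤ τ) : at0 τ t = 1 := by
  unfold at0
  rw [lc_one (by linarith), Real.smoothTransition.one_of_one_le, one_mul]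
  have : t / τ ≤ 1 := (div_le_one hτ).2 h
  linarith

lemma at0_zero {τ : ℝ} (hτ : 0 < τ) (t : ℝ) (h : t ∉ Icc (-2) (2 * τ)) : at0 τ t = 0 := by
  unfold at0
  by_cases h2 : t ≤ -2
  · rw [lc_zero h2, mul_zero]
  · rw [Real.smoothTransition.zero_of_nonpos, zero_mul]
    have : ¬ t ≤ 2 * τ := fun h3 => h ⟨by linarith, h3⟩
    have : 2 ≤ t / τ := by rw [le_div_iff₀ hτ]; linarith
    linarith

lemma at0_zero' {τ t : ℝ} (hτ : 0 < τ) (h : 2 * τ ≤ t) : at0 τ t = 0 := by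
  unfold at0
  rw [Real.smoothTransition.zero_of_nonpos, zero_mul]
  have : 2 ≤ t / τ := by rw [le_div_iff₀ hτ]; linarith
  linarith

lemma at0_deriv {τ t : ℝ} (hτ : 0 < τ) (ht : 0 < t) : deriv (at0 τ) t ≤ 0 := by
  have e : at0 τ =ᶠ[𝓝 t] fun t => Real.smoothTransition (2 - t / τ) := by
    filter_upwards [lt_mem_nhds ht] with s hs
    unfold at0
    rw [lc_one (by linarith), mul_one]
  rw [e.deriv_eq]
  have : Antitone fun t => Real.smoothTransition (2 - t / τ) := fun a b h =>
    Real.smoothTransition.monotone (by gcongr)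
  exact this.deriv_nonpos

section
variable {Ω : Set (Euc N)} {T : ℝ} {g : ℝ → ℝ} {lam κ : Measure (Euc N)} {u v : PP N → ℝ} {c : ℝ} {n : ℕ}

/-- local domain -/
def SS (Ω : Set (Euc N)) (T c : ℝ) : Set (PP N) := {p : PP N | c < rho Ω p.1 ∧ 0 < p.2 ∧ p.2 < T}

lemma SS_meas : MeasurableSet (SS Ω T c) := by
  have h1 : IsOpen {p : PP N | c < rho Ω p.1} :=
    isOpen_lt continuous_const ((rho_cont Ω).comp continuous_fst)
  have h2 : IsOpen {p : PP N | 0 < p.2} := isOpen_lt continuous_const continuous_snd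
  have h3 : IsOpen {p : PP N | p.2 < T} := isOpen_lt continuous_snd continuous_const
  exact (h1.inter (h2.inter h3)).measurableSet

lemma gnv_int (ho : IsOpen Ω) (hne : Ωᶜ.Nonempty) (hc0 : 0 < c)
    (hv : Sol T κ v (fun p => bn Ω g n p (v p))) :
    Integrable ((SS Ω T c).indicator (fun p => gn g n (v p))) := by
  have := hv.fint.indicator (SS_meas (Ω := Ω) (T := T) (c := c))
  refine this.congr (Eventually.of_forall fun p => ?_)
  by_cases hp : p ∈ SS Ω T c
  · simp only [indicator_of_mem hp]
    have : p.1 ∈ Ω := (rho_pos_iff ho hne _).1 (hc0.trans hp.1)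
    simp [bn, this]
  · simp only [indicator_of_notMem hp]

lemma local_wi (ho : IsOpen Ω) (hne : Ωᶜ.Nonempty) (hg : GoodG g)
    (hl : MemM1 Ω lam) (hle : κ ≤ lam) (hw : WeakSol Ω T g lam u) (hc0 : 0 < c)
    (hv : Sol T κ v (fun p => bn Ω g n p (v p))) :
    ∀ (φ : PP N → ℝ) (h : ContDiff ℝ ∞ φ), HasCompactSupport φ → (∀ p, 0 ≤ φ p) →
      tsupport φ ⊆ {p : PP N | c < rho Ω p.1 ∧ p.2 < T} →
      -(∫ p, (v p - (QT Ω T).indicator u p) * (HT.ofSmooth h).heat p) ≤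
      ∫ p, φ p * ((SS Ω T c).indicator (fun p => g (u p)) p - (SS Ω T c).indicator (fun p => gn g n (v p)) p) := by
  intro φ h hc h0 hs
  have w1 := weak_loc ho hne hg hw hc0 h hc hs
  have w2 := hv.weak φ (HT.ofSmooth h) hc (fun p hp => (hs hp).2)
  have sΩ : tsupport φ ⊆ {p : PP N | p.1 ∈ Ω} := fun p hp => (rho_pos_iff ho hne _).1 (hc0.trans (hs hp).1)
  have w3 := meas_le hl hle (f := fun x => φ (x, 0)) (by have := h.continuous; fun_prop) (slice_cs' hc)
    (slice_supp sΩ) (fun x => h0 _)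
  have cH := (HT.ofSmooth h).heat_cont
  have cc := (HT.ofSmooth h).heat_cs hc
  have iu : Integrable ((QT Ω T).indicator u) := (integrable_indicator_iff (meas_QT ho T)).2 hw.1
  have e1 : ∫ p, (v p - (QT Ω T).indicator u p) * (HT.ofSmooth h).heat p =
      (∫ p, v p * (HT.ofSmooth h).heat p) - ∫ p, (QT Ω T).indicator u p * (HT.ofSmooth h).heat p := by
    rw [← integral_sub (HT.int_mul cH cc hv.int) (HT.int_mul cH cc iu)]
    simp only [sub_mul]
  have igu : Integrable ((SS Ω T c).indicator (fun p => g (u p))) := gu_int ho hne hg hw hc0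
  have i1 := HT.int_mul h.continuous hc igu
  have i2 := HT.int_mul h.continuous hc (gnv_int ho hne hc0 hv)
  simp only [mul_comm _ (φ _)] at i1 i2
  have e2 : ∫ p, φ p * ((SS Ω T c).indicator (fun p => g (u p)) p - (SS Ω T c).indicator (fun p => gn g n (v p)) p)
      = (∫ p, φ p * (SS Ω T c).indicator (fun p => g (u p)) p) -
        ∫ p, φ p * (SS Ω T c).indicator (fun p => gn g n (v p)) p := by
    have := integral_sub i1 i2
    rw [← this]
    simp only [mul_sub]
  have e3 : ∫ p, φ p * bn Ω g n p (v p) = ∫ p, φ p * (SS Ω T c).indicator (fun p => gn g n (v p)) p := by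
    refine integral_congr_ae (Eventually.of_forall fun p => ?_)
    by_cases hp : p ∈ tsupport φ
    · have hΩ : p.1 ∈ Ω := sΩ hp
      by_cases hq : p ∈ SS Ω T c
      · simp [indicator_of_mem hq, bn, hΩ]
      · have : v p = 0 := hv.zero p fun h => hq ⟨(hs hp).1, h⟩
        simp [indicator_of_notMem hq, this, bn_zero hg]
    · simp [image_eq_zero_of_notMem_tsupport hp]
  rw [e1, e2, ← e3]
  change _ + (∫ p, φ p * (SS Ω T c).indicator (fun p => g (u p)) p) = _ at w1
  linarith

lemma small_time {H : PP N → ℝ} (hH : Integrable H) (hT : 0 < T) {ε : ℝ} (hε : 0 < ε) :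
    ∃ τ > 0, 2 * τ < T ∧ ∫ p, {p : PP N | 0 < p.2 ∧ p.2 < 2 * τ}.indicator H p < ε := by
  have mS : ∀ s : ℝ, MeasurableSet {p : PP N | 0 < p.2 ∧ p.2 < s} := fun s =>
    ((isOpen_lt continuous_const continuous_snd).inter
      (isOpen_lt continuous_snd continuous_const)).measurableSet
  have t0 : Tendsto (fun m : ℕ => 2 * (1 / ((m:ℝ)+1))) atTop (𝓝 0) := by
    simpa using (tendsto_one_div_add_atTop_nhds_zero_nat (𝕜 := ℝ)).const_mul 2
  have t1 : Tendsto (fun m : ℕ => ∫ p, {p : PP N | 0 < p.2 ∧ p.2 < 2 * (1 / ((m:ℝ)+1))}.indicator H p)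
      atTop (𝓝 (∫ p : PP N, (0:ℝ))) := by
    refine tendsto_integral_of_dominated_convergence (fun p => ‖H p‖)
      (fun m => (hH.indicator (mS _)).aestronglyMeasurable) hH.norm
      (fun m => Eventually.of_forall fun p => norm_indicator_le_norm_self _ _)
      (Eventually.of_forall fun p => ?_)
    refine tendsto_const_nhds.congr' ?_
    rcases lt_or_ge 0 p.2 with hp | hp
    · filter_upwards [t0.eventually (gt_mem_nhds hp)] with m hm
      rw [indicator_of_notMem]
      exact fun h => lt_asymm hm h.2
    · filter_upwards with m
      rw [indicator_of_notMem]
      exact fun h => absurd h.1 (not_lt.2 hp)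
  rw [integral_zero] at t1
  obtain ⟨m, h1, h2⟩ := ((t0.eventually (gt_mem_nhds hT)).and (t1.eventually (gt_mem_nhds hε))).exists
  exact ⟨1 / ((m:ℝ)+1), by positivity, h1, h2⟩

lemma local_est (ho : IsOpen Ω) (hne : Ωᶜ.Nonempty) (hg : GoodG g) (hT : 0 < T) [IsFiniteMeasure κ]
    (hl : MemM1 Ω lam) (hle : κ ≤ lam) (hw : WeakSol Ω T g lam u)
    {η : Euc N → ℝ} (hη : ContDiff ℝ ∞ η) (hηc : HasCompactSupport η) (hηs : tsupport η ⊆ Ω)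
    (η0 : ∀ x, 0 ≤ η x) (η1 : ∀ x, η x ≤ 1) {ε : ℝ} (hε : 0 < ε) :
    ∃ τ > 0, τ < T ∧ ∀ (n : ℕ) (v : PP N → ℝ), Sol T κ v (fun p => bn Ω g n p (v p)) →
      (∀ᵐ p, v p ≤ VV T κ p) →
      ∫ p, η p.1 * ({p : PP N | p.1 ∈ Ω ∧ 0 < p.2 ∧ p.2 < τ}.indicator (fun p => gn g n (v p)) p) ≤ ε := by
  obtain ⟨c, hc0, hc⟩ := rho_gap ho hne hηc.isCompact hηs
  obtain ⟨C, hC⟩ := (lap_cs hηc).exists_bound_of_continuous (lap_cont hη)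
  have iu : Integrable ((QT Ω T).indicator u) := (integrable_indicator_iff (meas_QT ho T)).2 hw.1
  have iV := (VV_sol T κ).int
  have igu : Integrable ((SS Ω T c).indicator (fun p => g (u p))) := gu_int ho hne hg hw hc0
  set H : PP N → ℝ := fun p => (SS Ω T c).indicator (fun p => g (u p)) p +
    C * (VV T κ p + |(QT Ω T).indicator u p|) with hH
  have iH : Integrable H := igu.add ((iV.add iu.abs).const_mul C)
  have C0 : 0 ≤ C := (norm_nonneg _).trans (hC 0)
  obtain ⟨τ, τ0, hτ, hR⟩ := small_time iH hT hε
  refine ⟨τ, τ0, by linarith, fun n v hv hvV => ?_⟩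
  set d : PP N → ℝ := fun p => v p - (QT Ω T).indicator u p with hd
  set F : PP N → ℝ := fun p => (SS Ω T c).indicator (fun p => g (u p)) p -
    (SS Ω T c).indicator (fun p => gn g n (v p)) p with hF
  have id : Integrable d := hv.int.sub iu
  have ignv := gnv_int ho hne hc0 hv
  have iF : Integrable F := igu.sub ignv
  have hU : IsOpen {p : PP N | c < rho Ω p.1 ∧ p.2 < T} :=
    (isOpen_lt continuous_const ((rho_cont Ω).comp continuous_fst)).inter
      (isOpen_lt continuous_snd continuous_const)
  have hφc := prod_cs isCompact_Icc (at0_zero τ0) hηc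
  have hφs : tsupport (fun p : PP N => η p.1 * at0 τ p.2) ⊆ {p : PP N | c < rho Ω p.1 ∧ p.2 < T} := by
    intro p hp
    have := prod_tsupp isClosed_Icc (at0_zero τ0) hp
    exact ⟨hc _ this.1, lt_of_le_of_lt this.2.2 hτ⟩
  have φc : Continuous (fun p : PP N => η p.1 * at0 τ p.2) := by
    have := hη.continuous
    have := (at0_smooth τ).continuous
    fun_prop
  have k1 := kato id iF hU (local_wi ho hne hg hl hle hw hc0 hv)
    ((HT.ofSpace hη).mul (HT.ofTime (at0_smooth τ))) hφc
    (fun p => mul_nonneg (η0 _) (at0_nonneg _ _)) hφs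
  have hφ0 : ∀ p : PP N, 0 ≤ η p.1 * at0 τ p.2 := fun p => mul_nonneg (η0 _) (at0_nonneg _ _)
  have hφ1 : ∀ p : PP N, η p.1 * at0 τ p.2 ≤ 1 := fun p => mul_le_one₀ (η1 _) (at0_nonneg _ _) (at0_le _ _)
  set φ : PP N → ℝ := fun p => η p.1 * at0 τ p.2 with hφ
  set h := (HT.ofSpace hη).mul (HT.ofTime (at0_smooth τ)) with hh
  have i1 : Integrable (fun p => max (d p) 0 * h.heat p) := HT.int_mul h.heat_cont (h.heat_cs hφc) id.pos_part
  have i2 : Integrable (fun p => φ p * F p) := by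
    have := HT.int_mul φc hφc iF
    simpa only [mul_comm _ (φ _)] using this
  have i3 : Integrable (fun p => φ p * (SS Ω T c).indicator (fun p => g (u p)) p) := by
    have := HT.int_mul φc hφc igu
    simpa only [mul_comm _ (φ _)] using this
  have i4 : Integrable (fun p => φ p * (SS Ω T c).indicator (fun p => gn g n (v p)) p) := by
    have := HT.int_mul φc hφc ignv
    simpa only [mul_comm _ (φ _)] using this
  have k2 : ∫ p, φ p * (aa (d p) * F p) ≤ ∫ p, φ p * F p := by
    by_cases ii : Integrable (fun p => φ p * (aa (d p) * F p))
    · refine integral_mono ii i2 fun p => ?_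
      refine mul_le_mul_of_nonneg_left ?_ (hφ0 p)
      rcases le_or_gt 0 (F p) with hp | hp
      · nlinarith [aa_le (d p)]
      · have : 0 < d p := by
          by_cases hS : p ∈ SS Ω T c
          · have hQ : p ∈ QT Ω T := ⟨(rho_pos_iff ho hne _).1 (hc0.trans hS.1), hS.2⟩
            simp only [hF, indicator_of_mem hS] at hp
            simp only [hd, indicator_of_mem hQ]
            by_contra hcon
            have a1 : gn g n (v p) ≤ gn g n (u p) := gn_mono hg n (by linarith)
            have a2 := gn_le hg n (u p)
            linarith
          · simp [hF, indicator_of_notMem hS] at hp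
        rw [aa_pos this, one_mul]
    · exfalso
      apply ii
      have am : Measurable aa := by
        unfold aa
        refine Measurable.ite measurableSet_Ioi measurable_const ?_
        exact Measurable.ite (measurableSet_singleton 0) measurable_const measurable_const
      have := i2.bdd_mul (c := 1) (f := fun p => aa (d p)) (am.comp_aemeasurable id.aemeasurable).aestronglyMeasurable
        (Eventually.of_forall fun p => by rw [Real.norm_of_nonneg (aa_nonneg _)]; exact aa_le _)
      refine this.congr (Eventually.of_forall fun p => ?_)
      simp only; ring
  have k3 : ∫ p, φ p * F p = (∫ p, φ p * (SS Ω T c).indicator (fun p => g (u p)) p) -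
      ∫ p, φ p * (SS Ω T c).indicator (fun p => gn g n (v p)) p := by
    rw [← integral_sub i3 i4]
    simp only [hF, mul_sub]
  have k4 : (∫ p, max (d p) 0 * h.heat p) + (∫ p, φ p * (SS Ω T c).indicator (fun p => g (u p)) p) ≤
      ∫ p, {p : PP N | 0 < p.2 ∧ p.2 < 2 * τ}.indicator H p := by
    rw [← integral_add i1 i3]
    have mS : MeasurableSet {p : PP N | 0 < p.2 ∧ p.2 < 2 * τ} :=
      ((isOpen_lt continuous_const continuous_snd).inter
      (isOpen_lt continuous_snd continuous_const)).measurableSet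
    refine integral_mono_ae (i1.add i3) (iH.indicator mS) ?_
    filter_upwards [hvV] with p hp
    rw [prod_heat]
    by_cases ht : 0 < p.2 ∧ p.2 < 2 * τ
    · rw [indicator_of_mem (show p ∈ {p : PP N | 0 < p.2 ∧ p.2 < 2 * τ} from ht)]
      have b1 : max (d p) 0 ≤ VV T κ p + |(QT Ω T).indicator u p| := by
        have := neg_abs_le ((QT Ω T).indicator u p)
        have v0 := hv.nonneg p
        refine max_le ?_ ?_
        · simp only [hd]; linarith
        · have := abs_nonneg ((QT Ω T).indicator u p); linarith
      have b0 : 0 ≤ max (d p) 0 := le_max_right _ _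
      have b2 : η p.1 * deriv (at0 τ) p.2 ≤ 0 :=
        mul_nonpos_of_nonneg_of_nonpos (η0 _) (at0_deriv τ0 ht.1)
      have b3 : lap η p.1 * at0 τ p.2 ≤ C := by
        have h1 := (le_abs_self _).trans (hC p.1)
        have h2 := at0_nonneg τ p.2
        have h3 := at0_le τ p.2
        nlinarith
      have b4 : φ p * (SS Ω T c).indicator (fun p => g (u p)) p ≤ (SS Ω T c).indicator (fun p => g (u p)) p := by
        have : 0 ≤ (SS Ω T c).indicator (fun p => g (u p)) p := indicator_nonneg (fun p _ => g_nonneg hg _) p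
        nlinarith [hφ1 p]
      simp only [hH]
      nlinarith [mul_le_mul_of_nonneg_left b1 C0, mul_le_mul_of_nonneg_left (add_le_add b2 b3) b0]
    · rw [indicator_of_notMem (show p ∉ {p : PP N | 0 < p.2 ∧ p.2 < 2 * τ} from ht)]
      rcases le_or_gt p.2 0 with h0 | h0
      · have z1 : v p = 0 := hv.zero p fun h => by linarith [h.1]
        have z2 : p ∉ QT Ω T := fun h => by have := h.2.1; linarith
        have z3 : p ∉ SS Ω T c := fun h => by have := h.2.1; linarith
        simp [hd, z1, indicator_of_notMem z2, indicator_of_notMem z3]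
      · have z0 : 2 * τ ≤ p.2 := not_lt.1 fun h => ht ⟨h0, h⟩
        have z1 : at0 τ p.2 = 0 := at0_zero' τ0 z0
        have z2 : deriv (at0 τ) p.2 ≤ 0 := at0_deriv τ0 h0
        have b0 : 0 ≤ max (d p) 0 := le_max_right _ _
        simp only [hφ, z1, mul_zero, zero_mul, add_zero]
        exact mul_nonpos_of_nonneg_of_nonpos b0 (mul_nonpos_of_nonneg_of_nonpos (η0 _) z2)
  have k5 : ∫ p, η p.1 * ({p : PP N | p.1 ∈ Ω ∧ 0 < p.2 ∧ p.2 < τ}.indicator (fun p => gn g n (v p)) p) ≤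
      ∫ p, φ p * (SS Ω T c).indicator (fun p => gn g n (v p)) p := by
    refine integral_mono_of_nonneg (Eventually.of_forall fun p => ?_) i4 (Eventually.of_forall fun p => ?_)
    · exact mul_nonneg (η0 _) (indicator_nonneg (fun p _ => gn_nonneg hg _ _) _)
    · simp only
      by_cases hp : p ∈ {p : PP N | p.1 ∈ Ω ∧ 0 < p.2 ∧ p.2 < τ}
      · rw [indicator_of_mem hp]
        by_cases hz : η p.1 = 0
        · simp [hφ, hz]
        · have : p ∈ SS Ω T c := ⟨hc _ (subset_tsupport _ hz), hp.2.1, by linarith [hp.2.2]⟩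
          rw [indicator_of_mem this]
          simp only [hφ, at0_one τ0 hp.2.1.le hp.2.2.le, mul_one, le_refl]
      · rw [indicator_of_notMem hp, mul_zero]
        exact mul_nonneg (hφ0 p) (indicator_nonneg (fun p _ => gn_nonneg hg _ _) _)
  linarith
end
end

section
open scoped ContDiff
variable {N : ℕ}

lemma gk_far {δ : ℝ} (hδ : 0 < δ) {z : Euc N} (hz : δ ≤ ‖z‖) {t : ℝ} (ht : 0 < t) :
    gk z t ≤ 1 + (N.factorial : ℝ) / (Real.pi * δ^2)^N := by
  unfold gk
  have pi0 := Real.pi_pos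
  have hp : 0 ≤ (N.factorial : ℝ) / (Real.pi * δ^2)^N := by positivity
  have he : Real.exp (-(1/(4*t)) * ‖z‖^2) ≤ 1 := by
    rw [Real.exp_le_one_iff]
    have : 0 ≤ (1/(4*t)) * ‖z‖^2 := by positivity
    linarith
  rcases le_or_gt 1 (4 * Real.pi * t) with h | h
  · have : (4 * Real.pi * t) ^ (-(N:ℝ)/2) ≤ 1 := by
      apply Real.rpow_le_one_of_one_le_of_nonpos h
      have : (0:ℝ) ≤ N := Nat.cast_nonneg _
      linarith
    have := mul_le_one₀ this (Real.exp_nonneg _) he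
    linarith
  · have b1 : (4 * Real.pi * t) ^ (-(N:ℝ)/2) ≤ ((4 * Real.pi * t) ^ N)⁻¹ := by
      have : ((4 * Real.pi * t) ^ N)⁻¹ = (4 * Real.pi * t) ^ (-(N:ℝ)) := by
        rw [Real.rpow_neg (by positivity), Real.rpow_natCast]
      rw [this]
      apply Real.rpow_le_rpow_of_exponent_ge (by positivity) h.le
      have : (0:ℝ) ≤ N := Nat.cast_nonneg _
      linarith
    have b2 : Real.exp (-(1/(4*t)) * ‖z‖^2) ≤ N.factorial * (4 * t / δ^2)^N := by
      have e1 : (δ^2/(4*t))^N / N.factorial ≤ Real.exp (δ^2/(4*t)) :=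
        Real.pow_div_factorial_le_exp (δ^2/(4*t)) (by positivity) N
      have e2 : Real.exp (-(1/(4*t)) * ‖z‖^2) ≤ Real.exp (-(δ^2/(4*t))) := by
        apply Real.exp_le_exp.2
        have : δ^2 ≤ ‖z‖^2 := by gcongr
        have : δ^2/(4*t) ≤ ‖z‖^2/(4*t) := by gcongr
        have e : -(1/(4*t)) * ‖z‖^2 = -(‖z‖^2/(4*t)) := by ring
        rw [e]; linarith
      refine e2.trans ?_
      rw [Real.exp_neg, inv_le_comm₀ (Real.exp_pos _) (by positivity)]
      refine le_trans (le_of_eq ?_) e1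
      rw [mul_inv, ← inv_pow, inv_div, mul_comm, ← div_eq_mul_inv]
    have b3 := mul_le_mul b1 b2 (Real.exp_nonneg _) (by positivity)
    refine b3.trans ?_
    have : ((4 * Real.pi * t) ^ N)⁻¹ * (N.factorial * (4 * t / δ^2)^N) = (N.factorial : ℝ) / (Real.pi * δ^2)^N := by
      rw [div_pow, mul_pow, mul_pow, mul_pow, mul_pow]
      field_simp
    rw [this]; linarith

lemma gk_late {τ : ℝ} (hτ : 0 < τ) (z : Euc N) {t : ℝ} (ht : τ ≤ t) :
    gk z t ≤ (4 * Real.pi * τ) ^ (-(N:ℝ)/2) := by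
  unfold gk
  have pi0 := Real.pi_pos
  have t0 : 0 < t := by linarith
  have he : Real.exp (-(1/(4*t)) * ‖z‖^2) ≤ 1 := by
    rw [Real.exp_le_one_iff]
    have : 0 ≤ (1/(4*t)) * ‖z‖^2 := by positivity
    linarith
  have h1 : (4 * Real.pi * t) ^ (-(N:ℝ)/2) ≤ (4 * Real.pi * τ) ^ (-(N:ℝ)/2) := by
    apply Real.rpow_le_rpow_of_nonpos (by positivity)
    · gcongr
    · have : (0:ℝ) ≤ N := Nat.cast_nonneg _
      linarith
  have h2 : 0 ≤ (4 * Real.pi * t) ^ (-(N:ℝ)/2) := by positivity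
  nlinarith

lemma VV_bound {T : ℝ} {κ : Measure (Euc N)} [IsFiniteMeasure κ] {C : Set (Euc N)} (hC : κ Cᶜ = 0)
    {B : ℝ} (hB : 0 ≤ B) {p : PP N} (h : 0 < p.2 → ∀ y ∈ C, gk (p.1 - y) p.2 ≤ B) :
    VV T κ p ≤ B * (κ univ).toReal := by
  unfold VV
  have h2 : {p : PP N | p.2 < T}.indicator (pot 0 T (lft κ)) p ≤ ENNReal.ofReal B * κ univ := by
    refine (indicator_le_self _ _ _).trans ?_
    unfold pot lft
    have mm : Measurable fun q : PP N => ENNReal.ofReal (KL 0 T (p - q)) :=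
      ((KL_meas 0 T).comp (measurable_const.sub measurable_id)).ennreal_ofReal
    rw [lintegral_map mm lift_meas, ← lintegral_const]
    have : ∀ᵐ y ∂κ, y ∈ C := by
      rw [ae_iff]; exact hC
    refine lintegral_mono_ae ?_
    filter_upwards [this] with y hy
    refine ENNReal.ofReal_le_ofReal ?_
    unfold KL
    split_ifs with hh
    · simp only [Prod.snd_sub, sub_zero] at hh
      simpa using h hh.1 y hy
    · exact hB
  have := ENNReal.toReal_mono (ENNReal.mul_ne_top ENNReal.ofReal_ne_top (measure_ne_top κ univ)) h2
  rwa [ENNReal.toReal_mul, ENNReal.toReal_ofReal hB] at this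

lemma l1conv {X : Type*} [MeasurableSpace X] {m : Measure X} {f : ℕ → X → ℝ} {F : X → ℝ}
    (fi : ∀ n, Integrable (f n) m) (f0 : ∀ n, ∀ᵐ x ∂m, 0 ≤ f n x) (Fm : AEStronglyMeasurable F m)
    (ft : ∀ᵐ x ∂m, Tendsto (fun n => f n x) atTop (𝓝 (F x)))
    (H : ∀ ε > 0, ∃ (A : Set X) (D : X → ℝ), MeasurableSet A ∧ Integrable D m ∧
      (∀ n, ∫ x in A, f n x ∂m ≤ ε) ∧ ∀ n, ∀ᵐ x ∂m, x ∉ A → f n x ≤ D x) :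
    Integrable F m ∧ Tendsto (fun n => ∫ x, |f n x - F x| ∂m) atTop (𝓝 0) := by
  have f0' : ∀ᵐ x ∂m, ∀ n, 0 ≤ f n x := ae_all_iff.2 f0
  have F0 : ∀ᵐ x ∂m, 0 ≤ F x := by
    filter_upwards [f0', ft] with x h1 h2
    exact ge_of_tendsto' h2 h1
  have key : ∀ ε > 0, ∃ A : Set X, MeasurableSet A ∧ IntegrableOn F A m ∧ (∫ x in A, F x ∂m ≤ ε) ∧
      (∀ n, ∫ x in A, f n x ∂m ≤ ε) ∧ IntegrableOn F Aᶜ m ∧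
      Tendsto (fun n => ∫ x in Aᶜ, |f n x - F x| ∂m) atTop (𝓝 0) := by
    intro ε hε
    obtain ⟨A, D, mA, iD, hA, hD⟩ := H ε hε
    have hD' : ∀ᵐ x ∂m, ∀ n, x ∉ A → f n x ≤ D x := ae_all_iff.2 hD
    have fat : ∫⁻ x in A, ENNReal.ofReal (F x) ∂m ≤ ENNReal.ofReal ε := by
      calc ∫⁻ x in A, ENNReal.ofReal (F x) ∂m
          = ∫⁻ x in A, liminf (fun n => ENNReal.ofReal (f n x)) atTop ∂m := by
            refine lintegral_congr_ae (ae_restrict_of_ae ?_)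
            filter_upwards [ft] with x hx
            exact ((ENNReal.continuous_ofReal.tendsto _).comp hx).liminf_eq.symm
        _ ≤ liminf (fun n => ∫⁻ x in A, ENNReal.ofReal (f n x) ∂m) atTop :=
            lintegral_liminf_le' fun n => (fi n).aemeasurable.restrict.ennreal_ofReal
        _ ≤ ENNReal.ofReal ε := by
            refine liminf_le_of_le (by isBoundedDefault) fun b hb => ?_
            obtain ⟨n, hn⟩ := hb.exists
            refine hn.trans ?_
            rw [← ofReal_integral_eq_lintegral_ofReal (fi n).integrableOn (ae_restrict_of_ae (f0 n))]
            exact ENNReal.ofReal_le_ofReal (hA n)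
    have iA : IntegrableOn F A m := by
      refine ⟨Fm.restrict, ?_⟩
      rw [hasFiniteIntegral_iff_ofReal (ae_restrict_of_ae F0)]
      exact fat.trans_lt ENNReal.ofReal_lt_top
    have FD : ∀ᵐ x ∂m, x ∉ A → F x ≤ D x := by
      filter_upwards [hD', ft] with x h1 h2 hx
      exact le_of_tendsto' h2 fun n => h1 n hx
    have iA' : IntegrableOn F Aᶜ m := by
      refine Integrable.mono' iD.integrableOn Fm.restrict ?_
      refine (ae_restrict_iff' mA.compl).2 ?_
      filter_upwards [FD, F0] with x h1 h2 hx
      rw [Real.norm_of_nonneg h2]; exact h1 hx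
    refine ⟨A, mA, iA, ?_, hA, iA', ?_⟩
    · rw [integral_eq_lintegral_of_nonneg_ae (ae_restrict_of_ae F0) Fm.restrict]
      exact ENNReal.toReal_le_of_le_ofReal hε.le fat
    · have := tendsto_integral_of_dominated_convergence (μ := m.restrict Aᶜ)
        (F := fun n x => |f n x - F x|) (f := fun _ => 0) D
        (fun n => ((fi n).aestronglyMeasurable.sub Fm).norm.restrict) iD.integrableOn (fun n => ?_) ?_
      · simpa using this
      · refine (ae_restrict_iff' mA.compl).2 ?_
        filter_upwards [FD, F0, hD', f0'] with x h1 h2 h3 h4 hx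
        have := h1 hx
        have := h3 n hx
        have := h4 n
        rw [Real.norm_eq_abs, abs_abs, abs_le]; constructor <;> linarith
      · refine ae_restrict_of_ae ?_
        filter_upwards [ft] with x hx
        have := (hx.sub_const (F x)).abs
        simpa using this
  have iF : Integrable F m := by
    obtain ⟨A, mA, iA, -, -, iA', -⟩ := key 1 one_pos
    rw [← integrableOn_univ, ← union_compl_self A]
    exact iA.union iA'
  refine ⟨iF, ?_⟩
  rw [Metric.tendsto_atTop]
  intro ε hε
  obtain ⟨A, mA, iA, hF, hA, iA', ht⟩ := key (ε/4) (by linarith)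
  obtain ⟨n0, hn0⟩ := eventually_atTop.1 (ht.eventually (gt_mem_nhds (show (0:ℝ) < ε/4 by linarith)))
  refine ⟨n0, fun n hn => ?_⟩
  have i : Integrable (fun x => |f n x - F x|) m := ((fi n).sub iF).abs
  rw [Real.dist_eq, sub_zero, abs_of_nonneg (integral_nonneg fun x => abs_nonneg _),
    ← integral_add_compl mA i]
  have h1 : ∫ x in A, |f n x - F x| ∂m ≤ (∫ x in A, f n x ∂m) + ∫ x in A, F x ∂m := by
    rw [← integral_add (fi n).integrableOn iA]
    refine integral_mono_ae i.integrableOn ((fi n).integrableOn.add iA) (ae_restrict_of_ae ?_)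
    filter_upwards [f0 n, F0] with x h1 h2
    rw [abs_le]; constructor <;> linarith
  have := hn0 n hn
  have := hA n
  linarith
end

section
open scoped ContDiff
variable {N : ℕ}

lemma cutoff_set {K U : Set (Euc N)} (hK : IsCompact K) (hU : IsOpen U) (hKU : K ⊆ U) :
    ∃ (δ : ℝ) (η : Euc N → ℝ), 0 < δ ∧ ContDiff ℝ ∞ η ∧ HasCompactSupport η ∧ tsupport η ⊆ U ∧
      (∀ x, 0 ≤ η x) ∧ (∀ x, η x ≤ 1) ∧ ∀ x ∈ Metric.cthickening δ K, η x = 1 := by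
  obtain ⟨δ, hδ, hs⟩ := hK.exists_cthickening_subset_open hU hKU
  have sub : Metric.cthickening (δ/2) K ⊆ Metric.thickening δ K :=
    Metric.cthickening_subset_thickening' hδ (by linarith) K
  obtain ⟨f, f1, f2, f3, f4⟩ := exists_contMDiff_support_eq_eq_one_iff (n := ⊤)
    (modelWithCornersSelf ℝ (Euc N)) (Metric.isOpen_thickening (δ := δ) (E := K))
    (Metric.isClosed_cthickening (δ := δ/2) (E := K)) sub
  have ts : tsupport f ⊆ Metric.cthickening δ K := by
    rw [tsupport, f3]; exact Metric.closure_thickening_subset_cthickening δ K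
  refine ⟨δ/2, f, by linarith, contMDiff_iff_contDiff.1 f1, ?_, ts.trans hs, fun x => (f2 ⟨x, rfl⟩).1,
    fun x => (f2 ⟨x, rfl⟩).2, fun x hx => (f4 x).1 hx⟩
  exact hK.cthickening.of_isClosed_subset (isClosed_tsupport f) ts

/-- cylinder over Ω -/
def cyl (Ω : Set (Euc N)) : Set (PP N) := {p : PP N | p.1 ∈ Ω}

lemma cyl_meas {Ω : Set (Euc N)} (ho : IsOpen Ω) : MeasurableSet (cyl Ω) :=
  (ho.preimage continuous_fst).measurableSet

lemma limit_exists {Ω : Set (Euc N)} {T : ℝ} {g : ℝ → ℝ} {lam κ : Measure (Euc N)} {u0 : PP N → ℝ}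
    {C : Set (Euc N)}
    (ho : IsOpen Ω) (hne : Ωᶜ.Nonempty) (hb : Bornology.IsBounded Ω) (hg : GoodG g) (hT : 0 < T)
    [IsFiniteMeasure κ]
    (hl : MemM1 Ω lam) (hle : κ ≤ lam) (hw : WeakSol Ω T g lam u0)
    (hC : IsCompact C) (hCΩ : C ⊆ Ω) (hκC : κ Cᶜ = 0) :
    ∃ (u : ℕ → PP N → ℝ) (w : PP N → ℝ), (∀ n, Sol T κ (u n) (fun p => bn Ω g n p (u n p))) ∧
      (∀ n, ∀ᵐ p, u n p ≤ VV T κ p) ∧ (∀ n, ∀ᵐ p, w p ≤ u n p) ∧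
      Measurable w ∧ (∀ p, 0 ≤ w p) ∧ Integrable w ∧
      (∀ p : PP N, ¬ (0 < p.2 ∧ p.2 < T) → w p = 0) ∧
      Tendsto (fun n => ∫ p, |u n p - w p|) atTop (𝓝 0) ∧
      Integrable ((cyl Ω).indicator (fun p => g (w p))) ∧
      Tendsto (fun n => ∫ p, |(cyl Ω).indicator (fun p => gn g n (u n p)) p -
        (cyl Ω).indicator (fun p => g (w p)) p|) atTop (𝓝 0) := by
  obtain ⟨u, hu, hmono, hV⟩ := approx hg ho hT κ
  have bdd : ∀ p, BddBelow (range fun n => u n p) := fun p => ⟨0, by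
    rintro _ ⟨n, rfl⟩; exact (hu n).nonneg p⟩
  set w : PP N → ℝ := fun p => ⨅ n, u n p with hwdef
  have wm : Measurable w := Measurable.iInf fun n => (hu n).meas
  have w0 : ∀ p, 0 ≤ w p := fun p => le_ciInf fun n => (hu n).nonneg p
  have wu : ∀ n p, w p ≤ u n p := fun n p => ciInf_le (bdd p) n
  have iw : Integrable w := (hu 0).int.mono' wm.aestronglyMeasurable
    (Eventually.of_forall fun p => by rw [Real.norm_of_nonneg (w0 p)]; exact wu 0 p)
  have wz : ∀ p : PP N, ¬ (0 < p.2 ∧ p.2 < T) → w p = 0 := fun p hp =>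
    le_antisymm ((wu 0 p).trans ((hu 0).zero p hp).le) (w0 p)
  have tw : ∀ᵐ p, Tendsto (fun n => u n p) atTop (𝓝 (w p)) := by
    filter_upwards [ae_all_iff.2 hmono] with p hp
    exact tendsto_atTop_ciInf (antitone_nat_of_succ_le hp) (bdd p)
  have iV := (VV_sol T κ).int
  refine ⟨u, w, hu, hV, fun n => Eventually.of_forall (wu n), wm, w0, iw, wz, ?_, ?_⟩
  · refine (l1conv (fun n => (hu n).int) (fun n => Eventually.of_forall (hu n).nonneg)
      wm.aestronglyMeasurable tw fun ε hε => ⟨∅, VV T κ, MeasurableSet.empty, iV, fun n => by simpa using hε.le,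
        fun n => ?_⟩).2
    filter_upwards [hV n] with p hp _ using hp
  -- nonlinear term
  have fi : ∀ n, Integrable ((cyl Ω).indicator (fun p => gn g n (u n p))) := fun n => by
    refine ((hu n).fint.indicator (cyl_meas ho)).congr (Eventually.of_forall fun p => ?_)
    by_cases hp : p ∈ cyl Ω
    · simp only [indicator_of_mem hp]
      have : p.1 ∈ Ω := hp
      simp [bn, this]
    · simp only [indicator_of_notMem hp]
  have f0 : ∀ n p, 0 ≤ (cyl Ω).indicator (fun p => gn g n (u n p)) p := fun n p =>
    indicator_nonneg (fun p _ => gn_nonneg hg _ _) p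
  refine l1conv fi (fun n => Eventually.of_forall (f0 n))
    ((hg.1.measurable.comp wm).indicator (cyl_meas ho)).aestronglyMeasurable ?_ fun ε hε => ?_
  · filter_upwards [tw] with p hp
    by_cases hq : p ∈ cyl Ω
    · simp only [indicator_of_mem hq]
      refine tendsto_of_tendsto_of_tendsto_of_le_of_le (gn_tendsto hg (w p))
        ((hg.1.tendsto _).comp hp) (fun n => gn_mono hg n (wu n p)) (fun n => gn_le hg n _)
    · simp only [indicator_of_notMem hq]
      exact tendsto_const_nhds
  obtain ⟨δ, η, hδ, ηs, ηc, ηΩ, η0, η1, ηe⟩ := cutoff_set hC ho hCΩ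
  obtain ⟨τ, τ0, τT, hτ⟩ := local_est (κ := κ) ho hne hg hT hl hle hw ηs ηc ηΩ η0 η1 hε
  set A : Set (PP N) := {p : PP N | p.1 ∈ Ω ∧ 0 < p.2 ∧ p.2 < τ} ∩ {p | p.1 ∈ Metric.cthickening δ C} with hA
  have mA0 : MeasurableSet {p : PP N | p.1 ∈ Ω ∧ 0 < p.2 ∧ p.2 < τ} := meas_QT ho τ
  have mA : MeasurableSet A := mA0.inter
    ((Metric.isClosed_cthickening).preimage continuous_fst).measurableSet
  set B : ℝ := max (1 + (N.factorial : ℝ) / (Real.pi * δ^2)^N) ((4 * Real.pi * τ) ^ (-(N:ℝ)/2)) with hB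
  have B0 : 0 ≤ B := le_max_of_le_left (by positivity)
  have fin : volume (QT Ω T) ≠ ⊤ := by
    have : Bornology.IsBounded (QT Ω T) := hb.prod (Metric.isBounded_Ioo 0 T)
    exact this.measure_lt_top.ne
  refine ⟨A, (QT Ω T).indicator fun _ => g (B * (κ univ).toReal), mA,
    (integrable_indicator_iff (meas_QT ho T)).2 (integrableOn_const fin), fun n => ?_, fun n => ?_⟩
  · refine le_trans ?_ (hτ n (u n) (hu n) (hV n))
    rw [← integral_indicator mA]
    have ii : Integrable (fun p : PP N => η p.1 * ({p : PP N | p.1 ∈ Ω ∧ 0 < p.2 ∧ p.2 < τ}.indicator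
        (fun p => gn g n (u n p)) p)) := by
      refine Integrable.bdd_mul (c := 1) (((fi n).indicator mA0).congr (Eventually.of_forall fun p => ?_))
        (ηs.continuous.comp continuous_fst).aestronglyMeasurable
        (Eventually.of_forall fun p => by rw [Real.norm_of_nonneg (η0 _)]; exact η1 _)
      by_cases hp : p ∈ {p : PP N | p.1 ∈ Ω ∧ 0 < p.2 ∧ p.2 < τ}
      · simp only [indicator_of_mem hp, indicator_of_mem (show p ∈ cyl Ω from hp.1)]
      · simp only [indicator_of_notMem hp]
    refine integral_mono ((fi n).indicator mA) ii fun p => ?_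
    by_cases hp : p ∈ A
    · simp only [indicator_of_mem hp, indicator_of_mem hp.1, indicator_of_mem (show p ∈ cyl Ω from hp.1.1),
        ηe _ hp.2, one_mul, le_refl]
    · rw [indicator_of_notMem hp]
      exact mul_nonneg (η0 _) (indicator_nonneg (fun p _ => gn_nonneg hg _ _) _)
  · filter_upwards [hV n] with p hp hpA
    by_cases hq : p ∈ QT Ω T
    · rw [indicator_of_mem hq, indicator_of_mem (show p ∈ cyl Ω from hq.1)]
      refine (gn_le hg n _).trans (hg.2.1 (hp.trans (VV_bound hκC B0 fun ht y hy => ?_)))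
      by_cases h1 : p.2 < τ
      · refine le_trans (gk_far hδ ?_ ht) (le_max_left _ _)
        by_contra hcon
        apply hpA
        refine ⟨⟨hq.1, ht, h1⟩, ?_⟩
        refine Metric.mem_cthickening_of_dist_le _ y _ _ hy ?_
        rw [dist_eq_norm]; linarith
      · exact (gk_late τ0 _ (not_lt.1 h1)).trans (le_max_right _ _)
    · rw [indicator_of_notMem hq]
      by_cases hc : p ∈ cyl Ω
      · rw [indicator_of_mem hc, (hu n).zero p fun h => hq ⟨hc, h⟩, gn_zero hg n le_rfl]
      · rw [indicator_of_notMem hc]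
end

section
open scoped ContDiff
variable {N : ℕ}

/-- time cutoff near `T` -/
def bt (T : ℝ) (m : ℕ) (t : ℝ) : ℝ := Real.smoothTransition (((m:ℝ)+1) * (T - t) - 1) * lc t

lemma bt_smooth (T : ℝ) (m : ℕ) : ContDiff ℝ ∞ (bt T m) := by
  unfold bt
  exact (Real.smoothTransition.contDiff.comp (by fun_prop)).mul lc_smooth

lemma bt_nonneg (T : ℝ) (m : ℕ) (t : ℝ) : 0 ≤ bt T m t :=
  mul_nonneg (Real.smoothTransition.nonneg _) (lc_nonneg _)
lemma bt_le (T : ℝ) (m : ℕ) (t : ℝ) : bt T m t ≤ 1 :=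
  mul_le_one₀ (Real.smoothTransition.le_one _) (lc_nonneg _) (lc_le _)

lemma bt_one {T : ℝ} {m : ℕ} {t : ℝ} (h0 : 0 ≤ t) (h : 2 ≤ ((m:ℝ)+1) * (T - t)) : bt T m t = 1 := by
  unfold bt
  rw [lc_one (by linarith), Real.smoothTransition.one_of_one_le (by linarith), one_mul]

lemma bt_zero (T : ℝ) (m : ℕ) (t : ℝ) (h : t ∉ Icc (-2) (T - 1 / ((m:ℝ)+1))) : bt T m t = 0 := by
  unfold bt
  by_cases h2 : t ≤ -2
  · rw [lc_zero h2, mul_zero]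
  · rw [Real.smoothTransition.zero_of_nonpos, zero_mul]
    have h3 : ¬ t ≤ T - 1 / ((m:ℝ)+1) := fun h3 => h ⟨by linarith, h3⟩
    have m0 : (0:ℝ) < (m:ℝ)+1 := by positivity
    have : T - t ≤ 1 / ((m:ℝ)+1) := by linarith
    rw [le_div_iff₀ m0] at this
    linarith

lemma st_deriv : ∃ D, ∀ s, |deriv Real.smoothTransition s| ≤ D ∧ (2 ≤ s + 1 + 0 → s ≠ 1 → deriv Real.smoothTransition s = 0) := by
  have c : Continuous (deriv Real.smoothTransition) :=
    (Real.smoothTransition.contDiff (n := 1)).continuous_deriv le_rfl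
  obtain ⟨D, hD⟩ := isCompact_Icc.exists_bound_of_continuousOn (s := Icc (0:ℝ) 1) c.continuousOn
  have hi : ∀ s, 1 < s → deriv Real.smoothTransition s = 0 := fun s hs => by
    have : Real.smoothTransition =ᶠ[𝓝 s] fun _ => 1 := by
      filter_upwards [lt_mem_nhds hs] with r hr
      exact Real.smoothTransition.one_of_one_le hr.le
    rw [this.deriv_eq]; simp
  have lo : ∀ s, s < 0 → deriv Real.smoothTransition s = 0 := fun s hs => by
    have : Real.smoothTransition =ᶠ[𝓝 s] fun _ => 0 := by
      filter_upwards [gt_mem_nhds hs] with r hr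
      exact Real.smoothTransition.zero_of_nonpos hr.le
    rw [this.deriv_eq]; simp
  have D0 : 0 ≤ D := (norm_nonneg _).trans (hD 0 ⟨le_rfl, zero_le_one⟩)
  refine ⟨D, fun s => ⟨?_, fun h1 h2 => hi s (lt_of_le_of_ne (by linarith) (Ne.symm h2))⟩⟩
  rcases lt_or_ge s 0 with h | h
  · rw [lo s h, abs_zero]; exact D0
  · rcases lt_or_ge 1 s with h' | h'
    · rw [hi s h', abs_zero]; exact D0
    · exact hD s ⟨h, h'⟩

lemma bt_deriv {T : ℝ} {m : ℕ} {t : ℝ} (ht : 0 < t) :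
    deriv (bt T m) t = -(((m:ℝ)+1)) * deriv Real.smoothTransition (((m:ℝ)+1) * (T - t) - 1) := by
  have e : bt T m =ᶠ[𝓝 t] fun t => Real.smoothTransition (((m:ℝ)+1) * (T - t) - 1) := by
    filter_upwards [lt_mem_nhds ht] with s hs
    unfold bt
    rw [lc_one (by linarith), mul_one]
  rw [e.deriv_eq]
  have h1 : HasDerivAt (fun t : ℝ => ((m:ℝ)+1) * (T - t) - 1) (((m:ℝ)+1) * (-1)) t :=
    (((hasDerivAt_id t).const_sub T).const_mul _).sub_const 1
  have h2 : HasDerivAt Real.smoothTransition (deriv Real.smoothTransition (((m:ℝ)+1) * (T - t) - 1))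
      (((m:ℝ)+1) * (T - t) - 1) :=
    ((Real.smoothTransition.contDiff (n := 1)).differentiable (by simp) _).hasDerivAt
  have := h2.comp t h1
  have h3 := this.deriv
  simp only [Function.comp_def] at h3
  rw [h3]; ring

/-- bound and eventual vanishing of the time cutoff derivative -/
lemma bt_deriv_bound (T : ℝ) : ∃ D, 0 ≤ D ∧ ∀ (m : ℕ) (t : ℝ), 0 < t → t < T →
    (T - t) * |deriv (bt T m) t| ≤ D ∧ (2 < ((m:ℝ)+1) * (T - t) → deriv (bt T m) t = 0) := by
  obtain ⟨D, hD⟩ := st_deriv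
  have D0 : 0 ≤ D := (abs_nonneg _).trans (hD 0).1
  refine ⟨2 * D, by linarith, fun m t h0 hT => ?_⟩
  have m0 : (0:ℝ) < (m:ℝ)+1 := by positivity
  have z : 2 < ((m:ℝ)+1) * (T - t) → deriv (bt T m) t = 0 := fun h => by
    rw [bt_deriv h0, (hD _).2 (by linarith) (by linarith), mul_zero]
  refine ⟨?_, z⟩
  rcases lt_or_ge 2 (((m:ℝ)+1) * (T - t)) with h | h
  · rw [z h, abs_zero, mul_zero]; linarith
  · rw [bt_deriv h0, abs_mul, abs_neg, abs_of_pos m0]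
    calc (T - t) * (((m:ℝ)+1) * |deriv Real.smoothTransition (((m:ℝ)+1) * (T - t) - 1)|)
        = (((m:ℝ)+1) * (T - t)) * |deriv Real.smoothTransition (((m:ℝ)+1) * (T - t) - 1)| := by ring
      _ ≤ 2 * D := mul_le_mul h (hD _).1 (abs_nonneg _) (by norm_num)

/-- boundedness of the total absorption against a test function -/
lemma pen_bound {T : ℝ} {κ : Measure (Euc N)} [IsFiniteMeasure κ] {φ : PP N → ℝ} (h : HT φ)
    (hc : HasCompactSupport φ) (hs : ∀ p ∈ tsupport φ, p.2 < T) :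
    ∃ M, 0 ≤ M ∧ ∀ u f, Sol T κ u f → (∀ᵐ p, u p ≤ VV T κ p) → ∫ p, φ p * f p ≤ M := by
  obtain ⟨C, hC⟩ := (h.heat_cs hc).exists_bound_of_continuous h.heat_cont
  have C0 : 0 ≤ C := (norm_nonneg _).trans (hC 0)
  refine ⟨|∫ x, φ (x, 0) ∂κ| + ∫ p, VV T κ p * C, ?_, fun u f hu hV => ?_⟩
  · have : 0 ≤ ∫ p, VV T κ p * C := integral_nonneg fun p => mul_nonneg ((VV_sol T κ).nonneg p) C0
    positivity
  · have e := hu.weak φ h hc hs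
    have b : ∫ p, u p * h.heat p ≤ ∫ p, VV T κ p * C := by
      refine integral_mono_ae (HT.int_mul h.heat_cont (h.heat_cs hc) hu.int) ((VV_sol T κ).int.mul_const C) ?_
      filter_upwards [hV] with p hp
      have := (le_abs_self _).trans (hC p)
      have := hu.nonneg p
      nlinarith
    have := le_abs_self (∫ x, φ (x, 0) ∂κ)
    linarith

/-- test function `χ(x) bt(t)` -/
lemma cb_supp {T : ℝ} {m : ℕ} {χ : Euc N → ℝ} :
    ∀ p ∈ tsupport (fun p : PP N => χ p.1 * bt T m p.2), p.2 < T := by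
  intro p hp
  have := (prod_tsupp isClosed_Icc (bt_zero T m) hp).2.2
  have m0 : (0:ℝ) < 1 / ((m:ℝ)+1) := by positivity
  linarith

lemma w_out {Ω : Set (Euc N)} {T : ℝ} {g : ℝ → ℝ} {κ : Measure (Euc N)} [IsFiniteMeasure κ]
    (ho : IsOpen Ω) (hg : GoodG g) {u : ℕ → PP N → ℝ} {w : PP N → ℝ}
    (hu : ∀ n, Sol T κ (u n) (fun p => bn Ω g n p (u n p)))
    (hV : ∀ n, ∀ᵐ p, u n p ≤ VV T κ p) (hwu : ∀ n, ∀ᵐ p, w p ≤ u n p)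
    (w0 : ∀ p, 0 ≤ w p) (iw : Integrable w)
    (wz : ∀ p : PP N, ¬ (0 < p.2 ∧ p.2 < T) → w p = 0)
    {χ : Euc N → ℝ} (hχ : ContDiff ℝ ∞ χ) (hχc : HasCompactSupport χ) (χ0 : ∀ x, 0 ≤ χ x) :
    ∀ᵐ p : PP N, p.1 ∉ Ω → χ p.1 = 1 → w p = 0 := by
  have key : ∀ m : ℕ, ∀ᵐ p : PP N, p.1 ∉ Ω → w p * (χ p.1 * bt T m p.2) = 0 := by
    intro m
    set φ : PP N → ℝ := fun p => χ p.1 * bt T m p.2 with hφ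
    have φ0 : ∀ p, 0 ≤ φ p := fun p => mul_nonneg (χ0 _) (bt_nonneg _ _ _)
    have h : HT φ := (HT.ofSpace hχ).mul (HT.ofTime (bt_smooth T m))
    have hc : HasCompactSupport φ := prod_cs isCompact_Icc (bt_zero T m) hχc
    obtain ⟨M, M0, hM⟩ := pen_bound (κ := κ) h hc (cb_supp (T := T) (m := m) (χ := χ))
    have iφ : Integrable (fun p => w p * φ p) := HT.int_mul h.c0 hc iw
    have mc := (cyl_meas ho).compl
    have b : ∀ n : ℕ, n * ∫ p, (cyl Ω)ᶜ.indicator (fun p => w p * φ p) p ≤ M := by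
      intro n
      refine le_trans ?_ (hM _ _ (hu n) (hV n))
      rw [← integral_const_mul]
      have i2 := HT.int_mul h.c0 hc (hu n).fint
      simp only [mul_comm _ (φ _)] at i2
      refine integral_mono_ae ((iφ.indicator mc).const_mul _) i2 ?_
      filter_upwards [hwu n] with p hp
      by_cases hq : p ∈ cyl Ω
      · rw [indicator_of_notMem (by simpa using hq), mul_zero]
        exact mul_nonneg (φ0 p) (bn_nonneg hg _ _ _ _)
      · rw [indicator_of_mem (by simpa using hq)]
        have hx : p.1 ∉ Ω := hq
        simp only [bn, hx, if_false]
        rw [max_eq_left ((hu n).nonneg p)]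
        have : w p * φ p ≤ u n p * φ p := mul_le_mul_of_nonneg_right hp (φ0 p)
        have : (n:ℝ) * (w p * φ p) ≤ n * (u n p * φ p) := mul_le_mul_of_nonneg_left this (Nat.cast_nonneg n)
        linarith
    have nn : ∀ p, 0 ≤ (cyl Ω)ᶜ.indicator (fun p => w p * φ p) p :=
      indicator_nonneg fun p _ => mul_nonneg (w0 p) (φ0 p)
    have z : ∫ p, (cyl Ω)ᶜ.indicator (fun p => w p * φ p) p = 0 := by
      refine le_antisymm ?_ (integral_nonneg nn)
      by_contra hcon
      push Not at hcon
      obtain ⟨n, hn⟩ := exists_nat_gt (M / ∫ p, (cyl Ω)ᶜ.indicator (fun p => w p * φ p) p)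
      rw [div_lt_iff₀ hcon] at hn
      exact absurd (b n) (not_le.2 hn)
    have := (integral_eq_zero_iff_of_nonneg nn (iφ.indicator mc)).1 z
    filter_upwards [this] with p hp hx
    rw [indicator_of_mem (show p ∈ (cyl Ω)ᶜ from hx)] at hp
    exact hp
  filter_upwards [ae_all_iff.2 key] with p hp hx hχ1
  by_cases ht : 0 < p.2 ∧ p.2 < T
  · obtain ⟨m, hm⟩ := exists_nat_gt (2 / (T - p.2))
    have t0 : 0 < T - p.2 := by linarith [ht.2]
    rw [div_lt_iff₀ t0] at hm
    have := hp m hx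
    rw [hχ1, bt_one ht.1.le (by nlinarith)] at this
    simpa using this
  · exact wz p ht
end

section
open scoped ContDiff
variable {N : ℕ}

lemma mul_time_heat {φ : PP N → ℝ} (h : HT φ) {θ : ℝ → ℝ} (hθ : ContDiff ℝ ∞ θ) (p : PP N) :
    (h.mul (HT.ofTime hθ)).heat p = h.heat p * θ p.2 + φ p * deriv θ p.2 := by
  show (h.dt p * θ p.2 + φ p * deriv θ p.2) + ∑ i, ((h.d2 i p * θ p.2 + h.d1 i p * 0) +
    (h.d1 i p * 0 + φ p * 0)) = (h.dt p + ∑ i, h.d2 i p) * θ p.2 + _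
  simp only [mul_zero, add_zero]
  rw [← Finset.sum_mul]; ring

lemma mul_space_heat {φ : PP N → ℝ} (h : HT φ) {χ : Euc N → ℝ} (hχ : ContDiff ℝ ∞ χ) {p : PP N}
    (h1 : χ =ᶠ[𝓝 p.1] fun _ => 1) : (h.mul (HT.ofSpace hχ)).heat p = h.heat p := by
  have e0 : χ p.1 = 1 := h1.self_of_nhds
  have e1 : ∀ᶠ y in 𝓝 p.1, fderiv ℝ χ y = 0 := by
    filter_upwards [h1.eventuallyEq_nhds] with y hy
    rw [hy.fderiv_eq]; simp
  have e2 : ∀ i : Fin N, fderiv ℝ (fun q => fderiv ℝ χ q (EuclideanSpace.single i 1)) p.1 = 0 := fun i => by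
    have : (fun q => fderiv ℝ χ q (EuclideanSpace.single i 1)) =ᶠ[𝓝 p.1] fun _ => 0 := by
      filter_upwards [e1] with y hy
      rw [hy]; simp
    rw [this.fderiv_eq]; simp
  show (h.dt p * χ p.1 + φ p * 0) + ∑ i, ((h.d2 i p * χ p.1 + h.d1 i p * fderiv ℝ χ p.1 (EuclideanSpace.single i 1)) +
    (h.d1 i p * fderiv ℝ χ p.1 (EuclideanSpace.single i 1) + φ p * fderiv ℝ (fun q => fderiv ℝ χ q
    (EuclideanSpace.single i 1)) p.1 (EuclideanSpace.single i 1))) = (h.dt p + ∑ i, h.d2 i p)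
  simp only [e2, e1.self_of_nhds, e0]
  simp

lemma lim_mul {f : ℕ → PP N → ℝ} {F b : PP N → ℝ} (fi : ∀ n, Integrable (f n)) (iF : Integrable F)
    (ht : Tendsto (fun n => ∫ p, |f n p - F p|) atTop (𝓝 0)) (cb : Continuous b)
    (hb : HasCompactSupport b) : Tendsto (fun n => ∫ p, f n p * b p) atTop (𝓝 (∫ p, F p * b p)) := by
  obtain ⟨C, hC⟩ := hb.exists_bound_of_continuous cb
  rw [tendsto_iff_norm_sub_tendsto_zero]
  have t := ht.mul_const C
  rw [zero_mul] at t
  refine squeeze_zero (fun _ => norm_nonneg _) (fun n => ?_) t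
  rw [← integral_sub (HT.int_mul cb hb (fi n)) (HT.int_mul cb hb iF), ← integral_mul_const]
  refine (norm_integral_le_integral_norm _).trans ?_
  have i0 : Integrable (fun p => |f n p - F p|) := ((fi n).sub iF).abs
  have i1 : Integrable (fun p => (f n p - F p) * b p) := HT.int_mul cb hb ((fi n).sub iF)
  refine integral_mono_of_nonneg (Eventually.of_forall fun p => norm_nonneg _) (i0.mul_const C)
    (Eventually.of_forall fun p => ?_)
  simp only
  rw [← sub_mul, norm_mul, Real.norm_eq_abs]
  exact mul_le_mul_of_nonneg_left (hC p) (abs_nonneg _)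

lemma tube_open {ζ : Euc N → ℝ → ℝ} (c : Continuous fun p : PP N => ζ p.1 p.2) (T ε : ℝ) :
    IsOpen {x : Euc N | ∀ t ∈ Icc (0:ℝ) T, |ζ x t| < ε} := by
  rw [isOpen_iff_mem_nhds]
  intro x hx
  refine isCompact_Icc.eventually_forall_of_forall_eventually (P := fun x t => |ζ x t| < ε) fun t ht => ?_
  exact (c.abs.continuousAt (x := (x, t))).eventually (gt_mem_nhds (hx t ht))

lemma stepA {Ω : Set (Euc N)} {T : ℝ} {g : ℝ → ℝ} {κ : Measure (Euc N)} [IsFiniteMeasure κ]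
    {C : Set (Euc N)} (ho : IsOpen Ω) (hb : Bornology.IsBounded Ω) (hg : GoodG g) 
    (hCΩ : C ⊆ Ω) (hκC : κ Cᶜ = 0)
    {u : ℕ → PP N → ℝ} {w : PP N → ℝ}
    (hu : ∀ n, Sol T κ (u n) (fun p => bn Ω g n p (u n p)))
    (hV : ∀ n, ∀ᵐ p, u n p ≤ VV T κ p) (hwu : ∀ n, ∀ᵐ p, w p ≤ u n p)
    (w0 : ∀ p, 0 ≤ w p) (iw : Integrable w)
    (wz : ∀ p : PP N, ¬ (0 < p.2 ∧ p.2 < T) → w p = 0)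
    (tw : Tendsto (fun n => ∫ p, |u n p - w p|) atTop (𝓝 0))
    (ig : Integrable ((cyl Ω).indicator (fun p => g (w p))))
    (tg : Tendsto (fun n => ∫ p, |(cyl Ω).indicator (fun p => gn g n (u n p)) p -
        (cyl Ω).indicator (fun p => g (w p)) p|) atTop (𝓝 0))
    {ζ : Euc N → ℝ → ℝ} (hζ : TestZero Ω T ζ) {m : ℕ} (hm : 2 ≤ ((m:ℝ)+1) * T) :
    -(∫ p in QT Ω T, w p * ((HT.ofC21 hζ.1).heat p * bt T m p.2 + ζ p.1 p.2 * deriv (bt T m) p.2)) +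
      (∫ p in QT Ω T, ζ p.1 p.2 * bt T m p.2 * g (w p)) = ∫ x, ζ x 0 ∂κ := by
  obtain ⟨R, hR⟩ := hb.closure.subset_ball (0 : Euc N)
  have hcc : IsCompact (closure Ω) := Metric.isCompact_of_isClosed_isBounded isClosed_closure hb.closure
  obtain ⟨_, X, _, Xs, Xc, _, X0, X1, Xe⟩ := cutoff_set (isCompact_closedBall (0 : Euc N) R) isOpen_univ (subset_univ _)
  have X1' : ∀ x ∈ Metric.ball (0:Euc N) R, X x = 1 := fun x hx =>
    Xe x (Metric.self_subset_cthickening _ (Metric.ball_subset_closedBall hx))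
  have wo := w_out ho hg hu hV hwu w0 iw wz Xs Xc X0
  obtain ⟨M, M0, hM⟩ := pen_bound (κ := κ) ((HT.ofSpace Xs).mul (HT.ofTime (bt_smooth T m)))
    (prod_cs isCompact_Icc (bt_zero T m) Xc) (cb_supp (T := T) (m := m) (χ := X))
  set LHS := -(∫ p in QT Ω T, w p * ((HT.ofC21 hζ.1).heat p * bt T m p.2 + ζ p.1 p.2 * deriv (bt T m) p.2)) +
      (∫ p in QT Ω T, ζ p.1 p.2 * bt T m p.2 * g (w p)) with hL
  suffices H : ∀ ε > 0, |LHS - ∫ x, ζ x 0 ∂κ| ≤ ε * M by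
    have : |LHS - ∫ x, ζ x 0 ∂κ| ≤ 0 := by
      refine le_of_forall_pos_le_add fun ε hε => ?_
      have h1 := H (ε / (M + 1)) (by positivity)
      have h2 : ε / (M+1) * M ≤ ε := by
        rw [div_mul_eq_mul_div, div_le_iff₀ (by positivity)]; nlinarith
      linarith
    have := abs_nonpos_iff.1 this
    linarith
  intro ε hε
  set O : Set (Euc N) := {x : Euc N | ∀ t ∈ Icc (0:ℝ) T, |ζ x t| < ε} with hO
  have oO : IsOpen O := tube_open hζ.1.1 T ε
  have sub : closure Ω ⊆ (Ω ∪ O) ∩ Metric.ball 0 R := by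
    refine subset_inter (fun x hx => ?_) hR
    by_cases h : x ∈ Ω
    · exact Or.inl h
    · refine Or.inr fun t ht => ?_
      have : x ∈ frontier Ω := ⟨hx, by rwa [ho.interior_eq]⟩
      rw [hζ.2.1 x this t ht, abs_zero]; exact hε
  obtain ⟨δ, χ, hδ, χs, χc, χsub, χ0, χ1, χe⟩ := cutoff_set hcc ((ho.union oO).inter Metric.isOpen_ball) sub
  have χn : ∀ x ∈ Ω, χ =ᶠ[𝓝 x] fun _ => 1 := fun x hx => by
    have : Metric.thickening δ (closure Ω) ∈ 𝓝 x :=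
      Metric.isOpen_thickening.mem_nhds (Metric.self_subset_thickening hδ _ (subset_closure hx))
    filter_upwards [this] with y hy
    exact χe y (Metric.thickening_subset_cthickening _ _ hy)
  have χi : ∀ x ∈ Ω, χ x = 1 := fun x hx => (χn x hx).self_of_nhds
  have ts : tsupport (fun p : PP N => ζ p.1 p.2 * bt T m p.2 * χ p.1) ⊆ tsupport χ ×ˢ Icc (-2) (T - 1 / ((m:ℝ)+1)) := by
    refine closure_minimal (fun p hp => ?_) ((isClosed_tsupport χ).prod isClosed_Icc)
    have h1 : χ p.1 ≠ 0 := right_ne_zero_of_mul hp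
    have h2 : bt T m p.2 ≠ 0 := right_ne_zero_of_mul (left_ne_zero_of_mul hp)
    exact ⟨subset_tsupport _ h1, by by_contra h; exact h2 (bt_zero T m _ h)⟩
  have cs : HasCompactSupport (fun p : PP N => ζ p.1 p.2 * bt T m p.2 * χ p.1) :=
    (χc.isCompact.prod isCompact_Icc).of_isClosed_subset (isClosed_tsupport _) ts
  have tT : ∀ p ∈ tsupport (fun p : PP N => ζ p.1 p.2 * bt T m p.2 * χ p.1), p.2 < T := fun p hp => by
    have := (ts hp).2.2
    have m0 : (0:ℝ) < 1 / ((m:ℝ)+1) := by positivity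
    linarith
  set φ : PP N → ℝ := fun p : PP N => ζ p.1 p.2 * bt T m p.2 * χ p.1 with hφ
  obtain ⟨k, hk⟩ : ∃ k : HT φ, ∀ p : PP N, (χ =ᶠ[𝓝 p.1] fun _ => 1) → k.heat p =
      (HT.ofC21 hζ.1).heat p * bt T m p.2 + ζ p.1 p.2 * deriv (bt T m) p.2 :=
    ⟨((HT.ofC21 hζ.1).mul (HT.ofTime (bt_smooth T m))).mul (HT.ofSpace χs), fun p h => by
      rw [mul_space_heat _ χs h, mul_time_heat]⟩
  have fi : ∀ n, Integrable ((cyl Ω).indicator (fun p => gn g n (u n p))) := fun n => by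
    refine ((hu n).fint.indicator (cyl_meas ho)).congr (Eventually.of_forall fun p => ?_)
    by_cases hp : p ∈ cyl Ω
    · simp only [indicator_of_mem hp]
      have : p.1 ∈ Ω := hp
      simp [bn, this]
    · simp only [indicator_of_notMem hp]
  have t1 := lim_mul (fun n => (hu n).int) iw tw k.heat_cont (k.heat_cs cs)
  have t2 := lim_mul fi ig tg k.c0 cs
  have t3 := ((t1.neg.add t2).sub_const (∫ x, φ (x,0) ∂κ)).abs
  -- bound for each n
  have bd : ∀ n, |-(∫ p, u n p * k.heat p) + (∫ p, (cyl Ω).indicator (fun p => gn g n (u n p)) p * φ p) -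
      ∫ x, φ (x,0) ∂κ| ≤ ε * M := by
    intro n
    rw [← (hu n).weak φ k cs tT]
    have i1 := HT.int_mul k.c0 cs (fi n)
    have i2 := HT.int_mul k.c0 cs (hu n).fint
    have e : -(∫ p, u n p * k.heat p) + (∫ p, (cyl Ω).indicator (fun p => gn g n (u n p)) p * φ p) -
      (-(∫ p, u n p * k.heat p) + ∫ p, φ p * bn Ω g n p (u n p)) =
      ∫ p, ((cyl Ω).indicator (fun p => gn g n (u n p)) p * φ p - bn Ω g n p (u n p) * φ p) := by
      rw [integral_sub i1 i2]
      simp only [mul_comm (φ _)]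
      ring
    rw [e]
    refine le_trans ?_ (mul_le_mul_of_nonneg_left (hM _ _ (hu n) (hV n)) hε.le)
    rw [← integral_const_mul]
    rw [← Real.norm_eq_abs]
    refine (norm_integral_le_integral_norm _).trans ?_
    have i3 := HT.int_mul ((HT.ofSpace Xs).mul (HT.ofTime (bt_smooth T m))).c0
      (prod_cs isCompact_Icc (bt_zero T m) Xc) (hu n).fint
    simp only [mul_comm (bn _ _ _ _ _)] at i3
    refine integral_mono_of_nonneg (Eventually.of_forall fun p => norm_nonneg _) (i3.const_mul ε)
      (Eventually.of_forall fun p => ?_)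
    have b0 := bn_nonneg hg Ω n p (u n p)
    have r0 : 0 ≤ ε * (X p.1 * bt T m p.2 * bn Ω g n p (u n p)) :=
      mul_nonneg hε.le (mul_nonneg (mul_nonneg (X0 _) (bt_nonneg _ _ _)) b0)
    simp only
    by_cases hp : p ∈ cyl Ω
    · have : p.1 ∈ Ω := hp
      rw [indicator_of_mem hp]
      simp only [bn, this, if_true, sub_self, norm_zero] at r0 ⊢
      exact r0
    · rw [indicator_of_notMem hp, zero_mul, zero_sub, norm_neg, norm_mul, Real.norm_of_nonneg b0]
      by_cases ht : 0 < p.2 ∧ p.2 < T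
      · by_cases hχ : χ p.1 = 0
        · simp only [hφ, hχ, mul_zero, norm_zero]; exact r0
        · have h1 := χsub (subset_tsupport _ hχ)
          have h2 : p.1 ∈ O := h1.1.resolve_left hp
          have h3 : |ζ p.1 p.2| < ε := h2 _ ⟨ht.1.le, ht.2.le⟩
          have h4 : ‖φ p‖ ≤ ε * bt T m p.2 := by
            simp only [hφ, norm_mul, Real.norm_eq_abs, abs_of_nonneg (bt_nonneg T m p.2), abs_of_nonneg (χ0 p.1)]
            have : |ζ p.1 p.2| * bt T m p.2 ≤ ε * bt T m p.2 :=
              mul_le_mul_of_nonneg_right h3.le (bt_nonneg _ _ _)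
            have h5 := mul_le_mul_of_nonneg_left (χ1 p.1) (mul_nonneg (abs_nonneg (ζ p.1 p.2)) (bt_nonneg T m p.2))
            linarith
          rw [X1' _ h1.2, one_mul]
          have := mul_le_mul_of_nonneg_left h4 b0
          linarith
      · rw [(hu n).zero p ht, bn_zero hg] at *
        simp
  have lim := le_of_tendsto' t3 bd
  have e1 : ∫ p, w p * k.heat p = ∫ p in QT Ω T, w p * ((HT.ofC21 hζ.1).heat p * bt T m p.2 + ζ p.1 p.2 * deriv (bt T m) p.2) := by
    rw [← integral_indicator (meas_QT ho T)]
    refine integral_congr_ae ?_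
    filter_upwards [wo] with p hp
    by_cases hq : p ∈ QT Ω T
    · rw [indicator_of_mem hq, hk p (χn _ hq.1)]
    · rw [indicator_of_notMem hq]
      by_cases ht : 0 < p.2 ∧ p.2 < T
      · have hx : p.1 ∉ Ω := fun h => hq ⟨h, ht⟩
        by_cases hX : p.1 ∈ Metric.ball (0 : Euc N) R
        · rw [hp hx (X1' _ hX), zero_mul]
        · rw [k.heat_zero (fun h => hX (χsub (ts h).1).2), mul_zero]
      · rw [wz p ht, zero_mul]
  have e2 : ∫ p, (cyl Ω).indicator (fun p => g (w p)) p * φ p = ∫ p in QT Ω T, ζ p.1 p.2 * bt T m p.2 * g (w p) := by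
    rw [← integral_indicator (meas_QT ho T)]
    refine integral_congr_ae (Eventually.of_forall fun p => ?_)
    simp only
    by_cases hq : p ∈ QT Ω T
    · rw [indicator_of_mem hq, indicator_of_mem (show p ∈ cyl Ω from hq.1)]
      simp only [hφ, χi _ hq.1]; ring
    · rw [indicator_of_notMem hq]
      by_cases hp : p ∈ cyl Ω
      · rw [indicator_of_mem hp, wz p fun h => hq ⟨hp, h⟩, hg.2.2 0 le_rfl, zero_mul]
      · rw [indicator_of_notMem hp, zero_mul]
  have e3 : ∫ x, φ (x,0) ∂κ = ∫ x, ζ x 0 ∂κ := by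
    have : ∀ᵐ y ∂κ, y ∈ C := by rw [ae_iff]; exact hκC
    refine integral_congr_ae ?_
    filter_upwards [this] with x hx
    simp only [hφ, χi _ (hCΩ hx), bt_one (T := T) (m := m) le_rfl (by simpa using hm), mul_one]
  rw [e1, e2, e3] at lim
  exact lim
end

section
open scoped ContDiff
variable {N : ℕ}

lemma main_good {Ω : Set (Euc N)} {T : ℝ} {g : ℝ → ℝ} {lam κ : Measure (Euc N)}
    {C : Set (Euc N)}
    (ho : IsOpen Ω) (hne : Ωᶜ.Nonempty) (hb : Bornology.IsBounded Ω) (hg : GoodG g) (hT : 0 < T)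
    [IsFiniteMeasure κ]
    (hl : MemM1 Ω lam) (hle : κ ≤ lam) (hw : GoodMeasure Ω T g lam)
    (hC : IsCompact C) (hCΩ : C ⊆ Ω) (hκC : κ Cᶜ = 0) : GoodMeasure Ω T g κ := by
  obtain ⟨u0, hu0⟩ := hw
  obtain ⟨u, w, hu, hV, hwu, wm, w0, iw, wz, tw, ig, tg⟩ :=
    limit_exists ho hne hb hg hT hl hle hu0 hC hCΩ hκC
  have hcc : IsCompact (closure Ω) := Metric.isCompact_of_isClosed_isBounded isClosed_closure hb.closure
  have mQ := meas_QT ho T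
  have iw' : IntegrableOn w (QT Ω T) := iw.integrableOn
  have ig' : IntegrableOn (fun p => g (w p)) (QT Ω T) :=
    ((integrable_indicator_iff (cyl_meas ho)).1 ig).mono_set fun p hp => hp.1
  have cK : IsCompact (closure Ω ×ˢ Icc (0:ℝ) T) := hcc.prod isCompact_Icc
  have inK : ∀ p ∈ QT Ω T, p ∈ closure Ω ×ˢ Icc (0:ℝ) T := fun p hp =>
    ⟨subset_closure hp.1, hp.2.1.le, hp.2.2.le⟩
  refine ⟨w, iw', ?_, fun ζ hζ => ?_⟩
  · obtain ⟨A, hA⟩ := hcc.exists_bound_of_continuousOn (rho_cont Ω).continuousOn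
    refine Integrable.mul_bdd (c := A) ig' ((rho_cont Ω).comp continuous_fst).aestronglyMeasurable ?_
    rw [ae_restrict_iff' mQ]
    exact Eventually.of_forall fun p hp => hA _ (subset_closure hp.1)
  · obtain ⟨A, hA⟩ := cK.exists_bound_of_continuousOn (HT.ofC21 hζ.1).heat_cont.continuousOn
    obtain ⟨B, hB⟩ := cK.exists_bound_of_continuousOn hζ.1.1.continuousOn
    obtain ⟨L, hL⟩ := cK.exists_bound_of_continuousOn hζ.1.2.2.1.continuousOn
    obtain ⟨D, D0, hD⟩ := bt_deriv_bound T
    have zl : ∀ p ∈ QT Ω T, |ζ p.1 p.2| ≤ L * (T - p.2) := fun p hp => by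
      have h := (convex_Icc (0:ℝ) T).norm_image_sub_le_of_norm_deriv_le (f := ζ p.1) (C := L)
        (fun t _ => hζ.1.2.1 p.1 t) (fun t ht => hL (p.1, t) ⟨subset_closure hp.1, ht⟩)
        (x := T) (y := p.2) ⟨hT.le, le_rfl⟩ ⟨hp.2.1.le, hp.2.2.le⟩
      rw [hζ.2.2 _ (subset_closure hp.1), sub_zero, Real.norm_eq_abs, Real.norm_eq_abs, abs_sub_comm,
        abs_of_pos (sub_pos.2 hp.2.2)] at h
      exact h
    have zd : ∀ (m : ℕ), ∀ p ∈ QT Ω T, |ζ p.1 p.2 * deriv (bt T m) p.2| ≤ |L| * D := fun m p hp => by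
      have h1 := (hD m p.2 hp.2.1 hp.2.2).1
      rw [abs_mul]
      calc |ζ p.1 p.2| * |deriv (bt T m) p.2| ≤ L * (T - p.2) * |deriv (bt T m) p.2| :=
            mul_le_mul_of_nonneg_right (zl p hp) (abs_nonneg _)
        _ ≤ |L| * ((T - p.2) * |deriv (bt T m) p.2|) := by
            rw [mul_assoc]
            exact mul_le_mul_of_nonneg_right (le_abs_self L)
              (mul_nonneg (sub_pos.2 hp.2.2).le (abs_nonneg _))
        _ ≤ _ := mul_le_mul_of_nonneg_left h1 (abs_nonneg _)
    have mt : Tendsto (fun m : ℕ => (m:ℝ) + 1) atTop atTop :=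
      tendsto_atTop_add_const_right _ _ tendsto_natCast_atTop_atTop
    have ev : ∀ s : ℝ, 0 < s → ∀ᶠ m : ℕ in atTop, 2 < ((m:ℝ)+1) * s := fun s hs =>
      (mt.atTop_mul_const hs).eventually_gt_atTop 2
    have cbt : ∀ m, Continuous fun p : PP N => bt T m p.2 := fun m =>
      (bt_smooth T m).continuous.comp continuous_snd
    have cbd : ∀ m, Continuous fun p : PP N => deriv (bt T m) p.2 := fun m =>
      ((bt_smooth T m).continuous_deriv (by simp)).comp continuous_snd
    have t1 : Tendsto (fun m : ℕ => ∫ p in QT Ω T, w p * ((HT.ofC21 hζ.1).heat p * bt T m p.2 + ζ p.1 p.2 * deriv (bt T m) p.2))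
        atTop (𝓝 (∫ p in QT Ω T, w p * (HT.ofC21 hζ.1).heat p)) := by
      refine tendsto_integral_of_dominated_convergence (fun p => w p * (A + |L| * D)) (fun m => ?_)
        (iw'.mul_const _) (fun m => ?_) ?_
      · exact (wm.aestronglyMeasurable).mul ((((HT.ofC21 hζ.1).heat_cont.mul (cbt m)).add
          (hζ.1.1.mul (cbd m))).aestronglyMeasurable)
      · rw [ae_restrict_iff' mQ]
        refine Eventually.of_forall fun p hp => ?_
        rw [norm_mul, Real.norm_of_nonneg (w0 p)]
        refine mul_le_mul_of_nonneg_left ((norm_add_le _ _).trans (add_le_add ?_ (zd m p hp))) (w0 p)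
        rw [norm_mul, Real.norm_of_nonneg (bt_nonneg _ _ _)]
        have h1 := hA p (inK p hp)
        have h2 := mul_le_mul_of_nonneg_left (bt_le T m p.2) (norm_nonneg ((HT.ofC21 hζ.1).heat p))
        linarith
      · rw [ae_restrict_iff' mQ]
        refine Eventually.of_forall fun p hp => tendsto_const_nhds.congr' ?_
        filter_upwards [ev _ (sub_pos.2 hp.2.2)] with m hm
        rw [(hD m p.2 hp.2.1 hp.2.2).2 hm, bt_one hp.2.1.le hm.le]; ring
    have t2 : Tendsto (fun m : ℕ => ∫ p in QT Ω T, ζ p.1 p.2 * bt T m p.2 * g (w p))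
        atTop (𝓝 (∫ p in QT Ω T, ζ p.1 p.2 * g (w p))) := by
      refine tendsto_integral_of_dominated_convergence (fun p => B * |g (w p)|) (fun m => ?_)
        (ig'.abs.const_mul _) (fun m => ?_) ?_
      · exact (hζ.1.1.mul (cbt m)).aestronglyMeasurable.mul (hg.1.measurable.comp wm).aestronglyMeasurable
      · rw [ae_restrict_iff' mQ]
        refine Eventually.of_forall fun p hp => ?_
        rw [norm_mul, norm_mul, Real.norm_of_nonneg (bt_nonneg _ _ _), Real.norm_eq_abs (g _)]
        refine mul_le_mul_of_nonneg_right ?_ (abs_nonneg _)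
        have h1 := hB p (inK p hp)
        have h2 := mul_le_mul_of_nonneg_left (bt_le T m p.2) (norm_nonneg (ζ p.1 p.2))
        linarith
      · rw [ae_restrict_iff' mQ]
        refine Eventually.of_forall fun p hp => tendsto_const_nhds.congr' ?_
        filter_upwards [ev _ (sub_pos.2 hp.2.2)] with m hm
        rw [bt_one hp.2.1.le hm.le]; ring
    have key : -(∫ p in QT Ω T, w p * (HT.ofC21 hζ.1).heat p) + (∫ p in QT Ω T, ζ p.1 p.2 * g (w p)) =
        ∫ x, ζ x 0 ∂κ := by
      refine tendsto_nhds_unique (t1.neg.add t2) (tendsto_const_nhds.congr' ?_)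
      filter_upwards [ev T hT] with m hm
      exact (stepA ho hb hg hCΩ hκC hu hV hwu w0 iw wz tw ig tg hζ hm.le).symm
    rw [← key]
    have j1 : IntegrableOn (fun p => w p * (HT.ofC21 hζ.1).heat p) (QT Ω T) := by
      refine Integrable.mul_bdd (c := A) iw' (HT.ofC21 hζ.1).heat_cont.aestronglyMeasurable ?_
      rw [ae_restrict_iff' mQ]
      exact Eventually.of_forall fun p hp => hA _ (inK p hp)
    have j2 : IntegrableOn (fun p => ζ p.1 p.2 * g (w p)) (QT Ω T) := by
      refine Integrable.bdd_mul (c := B) ig' hζ.1.1.aestronglyMeasurable ?_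
      rw [ae_restrict_iff' mQ]
      exact Eventually.of_forall fun p hp => hB _ (inK p hp)
    rw [← integral_neg]
    have j1' : IntegrableOn (fun p => -(w p * (HT.ofC21 hζ.1).heat p)) (QT Ω T) := j1.neg
    refine Eq.trans ?_ (integral_add j1' j2)
    refine integral_congr_ae (Eventually.of_forall fun p => ?_)
    simp only [HT.ofC21_heat]
    ring
end

section
open scoped ContDiff
lemma compl_ne {N : ℕ} (hN : 1 ≤ N) {Ω : Set (Euc N)} (hb : Bornology.IsBounded Ω) : Ωᶜ.Nonempty := by
  haveI : Nonempty (Fin N) := ⟨⟨0, hN⟩⟩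
  rw [nonempty_compl]
  rintro rfl
  exact NormedSpace.unbounded_univ ℝ (Euc N) hb

theorem stmt_x {N : ℕ} (hN : 1 ≤ N) (Ω : Set (Euc N)) (hΩo : IsOpen Ω) 
    (hΩb : Bornology.IsBounded Ω) (T : ℝ) (hT : 0 < T) (g : ℝ → ℝ) (hg : GoodG g)
    (μ μstar ν : Measure (Euc N)) 
    (E : Set (Euc N)) (hE : MeasurableSet E) (hEΩ : E ⊆ Ω)
    (hred : IsReducedMeasure Ω T g μ μstar)
    (hredE : IsReducedMeasure Ω T g (μ.restrict E) ν) : ν = μstar.restrict E := by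
  have hne := compl_ne hN hΩb
  obtain ⟨m1, le1, g1, max1⟩ := hred
  obtain ⟨m2, le2, g2, max2⟩ := hredE
  refine le_antisymm ?_ ?_
  · have h := max1 ν m2 g2 (le2.trans Measure.restrict_le_self)
    have h0 : ν Eᶜ = 0 := by
      have := le2 Eᶜ
      rw [Measure.restrict_apply hE.compl, compl_inter_self, measure_empty] at this
      exact le_antisymm this bot_le
    rw [← Measure.restrict_eq_self_of_ae_mem (s := E) (μ := ν) (by rw [ae_iff]; exact h0)]
    exact Measure.restrict_mono le_rfl h
  · set C : ℕ → Set (Euc N) := fun m => {x | 1 / ((m:ℝ)+1) ≤ rho Ω x} with hCdef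
    have cl : ∀ m, IsClosed (C m) := fun m => isClosed_le continuous_const (rho_cont Ω)
    have sub : ∀ m, C m ⊆ Ω := fun m x hx => (rho_pos_iff hΩo hne x).1
      (lt_of_lt_of_le (by positivity) hx)
    have cc : ∀ m, IsCompact (C m) := fun m =>
      Metric.isCompact_of_isClosed_isBounded (cl m) (hΩb.subset (sub m))
    have mono : Monotone C := fun a b hab x hx => by
      have hx' : 1 / ((a:ℝ)+1) ≤ rho Ω x := hx
      show 1 / ((b:ℝ)+1) ≤ rho Ω x
      refine le_trans ?_ hx'
      exact one_div_le_one_div_of_le (by positivity) (by exact_mod_cast Nat.succ_le_succ hab)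
    have km : ∀ m, μstar.restrict (E ∩ C m) ≤ ν := fun m => by
      have mle : μstar.restrict (E ∩ C m) ≤ μstar := Measure.restrict_le_self
      haveI : IsFiniteMeasure (μstar.restrict (E ∩ C m)) := ⟨by
        rw [Measure.restrict_apply_univ]
        exact (measure_mono inter_subset_right).trans_lt (m1.2.1 _ (sub m) (cc m))⟩
      refine max2 _ ⟨?_, fun K h1 h2 => (mle K).trans_lt (m1.2.1 K h1 h2), ?_⟩ ?_ ?_
      · exact le_antisymm ((mle _).trans m1.1.le) bot_le
      · exact (lintegral_mono' mle le_rfl).trans_lt m1.2.2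
      · refine main_good hΩo hne hΩb hg hT m1 mle g1 (cc m) (sub m) ?_
        rw [Measure.restrict_apply (cl m).measurableSet.compl, inter_comm E, ← inter_assoc, compl_inter_self,
          empty_inter, measure_empty]
      · exact Measure.restrict_mono inter_subset_left le1
    refine Measure.le_iff.2 fun A hA => ?_
    have e : A ∩ E = ⋃ m, A ∩ (E ∩ C m) := by
      rw [← inter_iUnion, ← inter_iUnion]
      congr 1
      refine (inter_eq_left.2 fun x hx => ?_).symm
      have h0 := (rho_pos_iff hΩo hne x).2 (hEΩ hx)
      obtain ⟨n, hn⟩ := exists_nat_one_div_lt h0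
      exact mem_iUnion.2 ⟨n, hn.le⟩
    rw [Measure.restrict_apply hA, e, Monotone.measure_iUnion]
    · refine iSup_le fun m => ?_
      rw [← Measure.restrict_apply hA]
      exact km m A
    · exact fun a b hab => inter_subset_inter_right _ (inter_subset_inter_right _ (mono hab))
end

/-- **Corollary 2.19 (2).** The reduced measure of the restriction `μ⌞E` is the
restriction of the reduced measure: `(μ⌞E)* = μ*⌞E`. -/
theorem stmt_14 {N : ℕ} (hN : 1 ≤ N) (Ω : Set (Euc N)) (hΩo : IsOpen Ω)
    (hΩc : IsConnected Ω) (hΩb : Bornology.IsBounded Ω) (T : ℝ) (hT : 0 < T)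
    (g : ℝ → ℝ) (hg : GoodG g) (μ μstar ν : Measure (Euc N)) (hμ : MemM1 Ω μ)
    (E : Set (Euc N)) (hE : MeasurableSet E) (hEΩ : E ⊆ Ω)
    (hred : IsReducedMeasure Ω T g μ μstar)
    (hredE : IsReducedMeasure Ω T g (μ.restrict E) ν) :
    ν = μstar.restrict E := by
  exact stmt_x hN Ω hΩo hΩb T hT g hg μ μstar ν E hE hEΩ hred hredE
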